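/- arXiv:2302.12430 — 2 statements merged into one kernel-verified Lean document; each statement's English description precedes it below -/
import Mathlib

section
/- Balanced colored Tverberg theorem: Let r = p^ν be a prime power, and let d ≥ 1, k ≥ 0, 0 < s ≤ r be integers with r(k−1) + s = (r−1)d. Set m = (2r−1)(k+1) and N = m − 1, and let c : Fin m → Fin (k+1) be a coloring in which every color class has exactly 2r−1 elements. Then for every continuous map f : stdSimplex ℝ (Fin m) → ℝ^d there exist pairwise disjoint finsets Δ_1, …, Δ_r of Fin m, each rainbow with respect to c, such that ⋂_{i=1}^r f(Face(Δ_i)) ≠ ∅, with |Δ_i| ≤ k+1 for i = 1, …, s and |Δ_j| ≤ k for j = s+1, …, r. -/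
/-! The theorem is a coincidence statement for maps on a chessboard complex with rows indexed by
the field `F` with `r = p ^ ν` elements and columns by the vertices. A face of the complex is a set
of pairs (row, vertex): a family of pairwise disjoint rainbow sets `Δ i`, `i ∈ F`. Calling a row
full when it uses all `k + 1` colors, only the families with at most `s` full rows are admitted.
The additive group of `F` permutes the rows freely, and the desired sets are a face carrying a
point whose `r` rows, suitably rescaled, all have the same image under `f`.

*The complex is highly acyclic.* The condition on full rows says that the set of pairs (row, color)
in use is independent in a matroid of rank `ρ = r k + s` (`indep_full`, `full_rank`). For any such
matroid constraint, if each color `j` has at least `2 n - 1` columns, where `n` is the number of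
rows whose pair with `j` is not a loop, then the reduced homology vanishes up to dimension `ρ - 2`
(`acy_brd`). This is proved by removing squares of the board one at a time (`acy_vertex`): the link
of a square is a board for the contracted matroid. Here `n ≤ r`, and every color class has
`2 r - 1` elements.

*An equivariant obstruction.* Write `T = ∑ wᵢ gᵢ` for an element of the augmentation ideal of the
group ring of `(F, +)` over `F`; then `T ^ p = 0`. In an acyclic complex there are chains
`c₀, c₁, …` with `∂ c_{n+1} = T ^ e(n) c_n`, where from `n = 1` on the exponents alternate between
`p - 1` and `1` (`exists_ladder`). Suppose that they could be mapped equivariantly to the complex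
of the sets `A ⊆ F × Y`, with `|Y| = d + 1`, that contain no fibre `F × {y}`. No nonempty such set
is fixed by the group. So each orbit carries a nonzero functional `χ : F → ZMod p` and a function
`θ` with `θ (g A) = θ A + χ g`; multiplication by `θ`, suitably normalized, gives an operator `h`
on cochains with `T h - h T = 1` (`weyl_rel`), provided that `∑ wᵢ χ(gᵢ) ≠ 0` for all `χ ≠ 0`,
which is arranged in `exists_weights`. The Weyl relation in characteristic `p` makes
`ker T = im T ^ (p - 1)` and `ker T ^ (p - 1) = im T` (`weyl_ker`, `weyl_ker_pow`), so that one can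
solve for cochains dual to the ladder, dimension by dimension, whose pairing with the ladder is
`1`. But all alternating cochains on `ρ` vertices vanish, as sets without full fibre have at most
`(r - 1) (d + 1) = ρ - 1` elements (`obstruction`).

*Coincidences.* If the equivariant functions `ψ (·, l)`, `l ∈ Y`, had no common coincidence of all
rows, then labelling the vertices of a fine barycentric subdivision by a coordinate `l` with
definite spread and a row maximizing it would define such a map (`coincidence`). Applied to the
sums of the rows and to the coordinates of `f`, the coincidence gives the theorem with sets indexed
by `F` (`tverberg_field`); it remains to number the elements of `F` so that the full rows come
first. -/

/-- `K` is an abstract simplicial complex on `Fin m`. -/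
def IsSimplicialComplex {m : ℕ} (K : Set (Finset (Fin m))) : Prop :=
  ∀ A ∈ K, ∀ B ⊆ A, B ∈ K

/-- `A` is rainbow w.r.t. the coloring `c`: `c` is injective on `A`. -/
def IsRainbow {m k : ℕ} (c : Fin m → Fin (k + 1)) (A : Finset (Fin m)) : Prop :=
  Set.InjOn c ↑A

/-- `K` is `(m,k)`-rainbow balanced w.r.t. `c`. -/
def IsRainbowBalanced {m k : ℕ} (c : Fin m → Fin (k + 1)) (K : Set (Finset (Fin m))) : Prop :=
  (∀ A : Finset (Fin m), IsRainbow c A → A.card ≤ k → A ∈ K) ∧ ∀ A ∈ K, IsRainbow c A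

/-- `K` is `(m,k)`-balanced. -/
def IsBalanced {m : ℕ} (k : ℕ) (K : Set (Finset (Fin m))) : Prop :=
  (∀ A : Finset (Fin m), A.card ≤ k → A ∈ K) ∧ ∀ A ∈ K, A.card ≤ k + 1

/-- The family `K` is collectively `(r,s)`-unavoidable. -/
def CollectivelyUnavoidable {m : ℕ} (r s : ℕ) (K : Fin r → Set (Finset (Fin m))) : Prop :=
  ∀ A : Fin r → Finset (Fin m), (∀ i j, i ≠ j → Disjoint (A i) (A j)) →
    ∃ I : Finset (Fin r), I.card = s ∧ ∀ i ∈ I, A i ∈ K i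

/-- The family `K` is collectively `(r,s)`-rainbow unavoidable w.r.t. `c`. -/
def CollectivelyRainbowUnavoidable {m k : ℕ} (c : Fin m → Fin (k + 1)) (r s : ℕ)
    (K : Fin r → Set (Finset (Fin m))) : Prop :=
  ∀ A : Fin r → Finset (Fin m), (∀ i j, i ≠ j → Disjoint (A i) (A j)) →
    (∀ i, IsRainbow c (A i)) →
    ∃ I : Finset (Fin r), I.card = s ∧ ∀ i ∈ I, A i ∈ K i

/-- The face of the standard simplex spanned by the vertex set `A`. -/
def simplexFace {m : ℕ} (A : Finset (Fin m)) : Set (stdSimplex ℝ (Fin m)) :=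
  {x | Function.support (x : Fin m → ℝ) ⊆ ↑A}

/-! ### Ordered chains -/

namespace BCT

set_option linter.unusedSectionVars false

noncomputable section

open Finsupp

/-- Augmented ordered chains with coefficients in `K` on the vertex type `V`: formal combinations
of lists of vertices. A list of length `n` is an ordered, possibly degenerate, simplex of dimension
`n - 1`; the empty list is the augmentation. -/
abbrev Ch (K V : Type*) [Field K] := List V →₀ K

section chains

variable {K V W : Type*} [Field K]

/-- The cone operator: prepend the vertex `a`. -/
def cone (a : V) : Ch K V →ₗ[K] Ch K V := Finsupp.lmapDomain K K (List.cons a)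

/-- The boundary of a single ordered simplex, by recursion `∂(a * l) = l - a * ∂l`. -/
def bdL : List V → Ch K V
  | [] => 0
  | a :: l => single l 1 - cone a (bdL l)

/-- The (augmented) boundary operator. -/
def bd : Ch K V →ₗ[K] Ch K V := Finsupp.linearCombination K bdL

/-- The chain map induced by a map of vertices. -/
def mp (f : V → W) : Ch K V →ₗ[K] Ch K W := Finsupp.lmapDomain K K (List.map f)

@[simp] lemma cone_single (a : V) (l : List V) (c : K) :
    cone a (single l c) = single (a :: l) c := by
  simp [cone]

@[simp] lemma mp_single (f : V → W) (l : List V) (c : K) :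
    mp f (single l c) = single (l.map f) c := by
  simp [mp]

@[simp] lemma bd_single (l : List V) : bd (single l (1 : K)) = bdL l := by
  simp [bd]

lemma bd_cone (a : V) (z : Ch K V) : bd (cone a z) = z - cone a (bd z) := by
  have : bd ∘ₗ cone a = LinearMap.id - cone a ∘ₗ (bd : Ch K V →ₗ[K] Ch K V) := by
    ext l : 1
    ext1
    simp [bdL]
  exact LinearMap.congr_fun this z

lemma bd_bdL (l : List V) : bd (bdL l : Ch K V) = 0 := by
  induction l with
  | nil => simp [bdL]
  | cons a l ih => simp [bdL, bd_cone, ih]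

lemma bd_bd (z : Ch K V) : bd (bd z) = 0 := by
  have : bd ∘ₗ bd = (0 : Ch K V →ₗ[K] Ch K V) := by
    ext l : 1
    ext1
    simp [bd_bdL]
  exact LinearMap.congr_fun this z

lemma mp_cone (f : V → W) (a : V) (z : Ch K V) : mp f (cone a z) = cone (f a) (mp f z) := by
  have : mp f ∘ₗ cone a = cone (f a) ∘ₗ (mp f : Ch K V →ₗ[K] Ch K W) := by
    ext l : 1
    ext1
    simp
  exact LinearMap.congr_fun this z

lemma mp_bdL (f : V → W) (l : List V) : mp f (bdL l : Ch K V) = bdL (l.map f) := by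
  induction l with
  | nil => simp [bdL]
  | cons a l ih => simp [bdL, mp_cone, ih]

lemma mp_bd (f : V → W) (z : Ch K V) : mp f (bd z) = bd (mp f z) := by
  have : mp f ∘ₗ bd = bd ∘ₗ (mp f : Ch K V →ₗ[K] Ch K W) := by
    ext l : 1
    ext1
    simp [mp_bdL]
  exact LinearMap.congr_fun this z

lemma mp_mp {U : Type*} (g : W → U) (f : V → W) (z : Ch K V) :
    mp g (mp f z) = mp (g ∘ f) z := by
  have : mp g ∘ₗ mp f = (mp (g ∘ f) : Ch K V →ₗ[K] Ch K U) := by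
    ext l : 1
    ext1
    simp
  exact LinearMap.congr_fun this z

/-- Chains supported on a set of lists. -/
abbrev Sp (K : Type*) {V : Type*} [Field K] (S : Set (List V)) : Submodule K (Ch K V) :=
  Finsupp.supported K K S

lemma sp_map {M : Type*} [AddCommGroup M] [Module K M] {S : Set (List V)} {N : Submodule K M}
    (φ : Ch K V →ₗ[K] M) (h : ∀ l ∈ S, φ (single l 1) ∈ N) {z : Ch K V} (hz : z ∈ Sp K S) :
    φ z ∈ N := by
  rw [Sp, Finsupp.supported_eq_span_single] at hz
  have : Submodule.span K ((fun i => single i (1 : K)) '' S) ≤ N.comap φ := by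
    rw [Submodule.span_le]
    rintro _ ⟨l, hl, rfl⟩
    exact h l hl
  exact this hz

lemma sp_eq {M : Type*} [AddCommGroup M] [Module K M] {S : Set (List V)}
    (φ ψ : Ch K V →ₗ[K] M) (h : ∀ l ∈ S, φ (single l 1) = ψ (single l 1)) {z : Ch K V}
    (hz : z ∈ Sp K S) : φ z = ψ z := by
  have := sp_map (N := ⊥) (φ - ψ) (fun l hl => by simp [h l hl]) hz
  simpa [sub_eq_zero] using this

lemma single_mem_sp {S : Set (List V)} {l : List V} (hl : l ∈ S) (c : K) :
    single l c ∈ Sp K S :=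
  Finsupp.single_mem_supported K c hl

/-- The boundary of `l` involves only lists obtained by deleting one entry of `l`. -/
lemma bdL_mem (l : List V) :
    (bdL l : Ch K V) ∈ Sp K {l' | l'.Sublist l ∧ l'.length + 1 = l.length} := by
  induction l with
  | nil => simp [bdL]
  | cons a l ih =>
    refine Submodule.sub_mem _ (single_mem_sp ?_ _) ?_
    · exact ⟨List.sublist_cons_self a l, rfl⟩
    refine sp_map (cone a) ?_ ih
    intro l' hl'
    rw [cone_single]
    refine single_mem_sp ?_ _
    exact ⟨hl'.1.cons_cons a, by simp [← hl'.2]⟩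

lemma bd_mem {S S' : Set (List V)}
    (h : ∀ l ∈ S, ∀ l', l'.Sublist l → l'.length + 1 = l.length → l' ∈ S')
    {z : Ch K V} (hz : z ∈ Sp K S) : bd z ∈ Sp K S' := by
  refine sp_map bd (fun l hl => ?_) hz
  rw [bd_single]
  exact Finsupp.supported_mono (fun l' hl' => h l hl l' hl'.1 hl'.2) (bdL_mem l)

lemma cone_mem {S S' : Set (List V)} {a : V} (h : ∀ l ∈ S, a :: l ∈ S')
    {z : Ch K V} (hz : z ∈ Sp K S) : cone a z ∈ Sp K S' := by
  refine sp_map (cone a) (fun l hl => ?_) hz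
  rw [cone_single]
  exact single_mem_sp (h l hl) _

lemma mp_mem {S : Set (List V)} {S' : Set (List W)} {f : V → W} (h : ∀ l ∈ S, l.map f ∈ S')
    {z : Ch K V} (hz : z ∈ Sp K S) : mp f z ∈ Sp K S' := by
  refine sp_map (mp f) (fun l hl => ?_) hz
  rw [mp_single]
  exact single_mem_sp (h l hl) _

/-! ### Acyclicity by adding vertices -/

/-- The ordered simplices with `n` entries of the family `X` of finite sets. -/
def lists [DecidableEq V] (X : Finset V → Prop) (n : ℕ) : Set (List V) :=
  {l | X l.toFinset ∧ l.length = n}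

/-- `X` has vanishing reduced homology over `K` in all dimensions `≤ ρ - 2`. -/
def Acy (K : Type*) [Field K] [DecidableEq V] (ρ : ℕ) (X : Finset V → Prop) : Prop :=
  ∀ n < ρ, ∀ z ∈ Sp K (lists X n), bd z = 0 → ∃ w ∈ Sp K (lists X (n + 1)), bd w = z

variable [DecidableEq V]

lemma Acy.congr {ρ : ℕ} {X Y : Finset V → Prop} (h : ∀ A, X A ↔ Y A) (hX : Acy K ρ X) :
    Acy K ρ Y := by
  obtain rfl : X = Y := funext fun A => propext (h A)
  exact hX

lemma acy_cone (ρ : ℕ) {X : Finset V → Prop} (w : V) (h : ∀ A, X A → X (insert w A)) :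
    Acy K ρ X := by
  intro n _ z hz hbz
  refine ⟨cone w z, cone_mem ?_ hz, by simp [bd_cone, hbz]⟩
  refine fun l hl => ⟨?_, ?_⟩
  · rw [List.toFinset_cons]; exact h _ hl.1
  · simp [hl.2]

lemma acy_of_forall_not (ρ : ℕ) {X : Finset V → Prop} (h : ∀ A, ¬ X A) : Acy K ρ X := by
  intro n _ z hz _
  refine ⟨0, Submodule.zero_mem _, ?_⟩
  have : lists X n = ∅ := by
    ext l; simp [lists, h]
  rw [this] at hz
  simpa [eq_comm] using hz

/-- Mayer–Vietoris for a vertex `w`: if the deletion of `w` is acyclic in a range and the link of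
`w` is acyclic in the range shifted by one, then the whole complex is acyclic in that range. -/
lemma acy_vertex {ρ : ℕ} {X : Finset V → Prop} (hX : ∀ A B, A ⊆ B → X B → X A) (w : V)
    (hdel : Acy K ρ fun A => X A ∧ w ∉ A)
    (hlink : Acy K (ρ - 1) fun A => w ∉ A ∧ X (insert w A)) : Acy K ρ X := by
  classical
  intro n hn z hz hbz
  set z₁ : Ch K V := z.filter (fun l => w ∈ l) with hz₁
  set z₂ : Ch K V := z.filter (fun l => ¬ w ∈ l) with hz₂
  have hsum : z₁ + z₂ = z := Finsupp.filter_add_filter_not _ _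
  have hz' : ∀ l, z l ≠ 0 → l ∈ lists X n := fun l hl => hz (by simpa using hl)
  have m₁ : z₁ ∈ Sp K {l | w ∈ l ∧ l ∈ lists X n} := by
    intro l hl
    simp only [Finset.mem_coe, hz₁, Finsupp.support_filter, Finset.mem_filter,
      Finsupp.mem_support_iff] at hl
    exact ⟨hl.2, hz' l hl.1⟩
  have m₂ : z₂ ∈ Sp K {l | ¬ w ∈ l ∧ l ∈ lists X n} := by
    intro l hl
    simp only [Finset.mem_coe, hz₂, Finsupp.support_filter, Finset.mem_filter,
      Finsupp.mem_support_iff] at hl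
    exact ⟨hl.2, hz' l hl.1⟩
  have hy : bd z₁ = - bd z₂ := by
    rw [eq_neg_iff_add_eq_zero, ← map_add, hsum, hbz]
  -- the common boundary of the two pieces lives in the link
  have my₁ : bd z₁ ∈ Sp K {l | X (insert w l.toFinset) ∧ l.length + 1 = n} := by
    refine bd_mem ?_ m₁
    refine fun l hl l' hs hlen => ⟨hX _ _ ?_ hl.2.1, by rw [hlen]; exact hl.2.2⟩
    intro x hx
    rcases Finset.mem_insert.1 hx with rfl | hx
    · exact List.mem_toFinset.2 hl.1
    · exact List.mem_toFinset.2 (hs.subset (List.mem_toFinset.1 hx))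
  have my₂ : bd z₁ ∈ Sp K {l | ¬ w ∈ l} := by
    rw [hy]
    exact Submodule.neg_mem _ (bd_mem (fun l hl l' hs _ h => hl.1 (hs.subset h)) m₂)
  obtain ⟨a, ma, ha⟩ : ∃ a ∈ Sp K (lists (fun A => w ∉ A ∧ X (insert w A)) n),
      bd a = bd z₁ := by
    rcases n with _ | n
    · refine ⟨0, Submodule.zero_mem _, ?_⟩
      have : z₁ = 0 := by
        have he : {l : List V | w ∈ l ∧ l ∈ lists X 0} = ∅ := by
          ext l
          simp only [Set.mem_ofPred_eq, lists, Set.mem_empty_iff_false, iff_false, not_and]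
          intro h1 h2 h3
          simp [List.length_eq_zero_iff.1 h3] at h1
        rw [he] at m₁
        simpa using m₁
      simp [this]
    · refine hlink n (by omega) _ (fun l hl => ?_) (bd_bd _)
      have h1 := my₁ hl
      have h2 := my₂ hl
      simp only [Set.mem_ofPred_eq] at h1 h2
      exact ⟨⟨by simpa using h2, h1.1⟩, by omega⟩
  have mb : z₁ - a ∈ Sp K {l | X (insert w l.toFinset) ∧ l.length = n} := by
    refine Submodule.sub_mem _ (Finsupp.supported_mono ?_ m₁) (Finsupp.supported_mono ?_ ma)
    · rintro l ⟨h1, h2, h3⟩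
      refine ⟨?_, h3⟩
      rwa [Finset.insert_eq_of_mem (List.mem_toFinset.2 h1)]
    · rintro l ⟨⟨_, h2⟩, h3⟩
      exact ⟨h2, h3⟩
  obtain ⟨b, mb', hb⟩ := hdel n hn (z₂ + a) (by
    refine Submodule.add_mem _ (Finsupp.supported_mono ?_ m₂) (Finsupp.supported_mono ?_ ma)
    · rintro l ⟨h1, h2, h3⟩
      exact ⟨⟨h2, by simpa using h1⟩, h3⟩
    · rintro l ⟨⟨h1, h2⟩, h3⟩
      exact ⟨⟨hX _ _ (Finset.subset_insert _ _) h2, h1⟩, h3⟩)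
    (by rw [map_add, ha, hy, add_neg_cancel])
  refine ⟨cone w (z₁ - a) + b, Submodule.add_mem _ ?_ (Finsupp.supported_mono ?_ mb'), ?_⟩
  · refine cone_mem ?_ mb
    refine fun l hl => ⟨?_, by simp [hl.2]⟩
    rw [List.toFinset_cons]; exact hl.1
  · rintro l ⟨⟨h1, _⟩, h3⟩
    exact ⟨h1, h3⟩
  · rw [map_add, bd_cone, map_sub, ha, sub_self, map_zero, sub_zero, hb, ← hsum]
    abel

end chains

/-! ### Colored chessboards constrained by a matroid -/

section board

/-- The independence axioms of a matroid, for a family of finite sets. -/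
structure Indep {Q : Type*} [DecidableEq Q] (D : Finset Q → Prop) : Prop where
  empty : D ∅
  mono : ∀ A B, A ⊆ B → D B → D A
  exch : ∀ I J, D I → D J → I.card < J.card → ∃ e ∈ J, e ∉ I ∧ D (insert e I)

/-- Contraction of the element `e`. -/
def con {Q : Type*} [DecidableEq Q] (D : Finset Q → Prop) (e : Q) (I : Finset Q) : Prop :=
  e ∉ I ∧ D (insert e I)

/-- Deletion of the element `e`. -/
def del {Q : Type*} (D : Finset Q → Prop) (e : Q) (I : Finset Q) : Prop :=
  e ∉ I ∧ D I

variable {Q : Type*} [DecidableEq Q] {D : Finset Q → Prop}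

lemma Indep.augment (hD : Indep D) {J : Finset Q} (hJ : D J) :
    ∀ (n : ℕ) (I : Finset Q), D I → I.card + n = J.card →
      ∃ I', I ⊆ I' ∧ D I' ∧ I'.card = J.card := by
  intro n
  induction n with
  | zero => exact fun I hI h => ⟨I, subset_rfl, hI, by omega⟩
  | succ n ih =>
    intro I hI h
    obtain ⟨e, _, heI, he⟩ := hD.exch I J hI hJ (by omega)
    obtain ⟨I', h1, h2, h3⟩ := ih (insert e I) he (by
      rw [Finset.card_insert_of_notMem heI]; omega)
    exact ⟨I', (Finset.subset_insert _ _).trans h1, h2, h3⟩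

lemma Indep.con (hD : Indep D) {e : Q} (he : D {e}) : Indep (con D e) where
  empty := ⟨by simp, by simpa using he⟩
  mono A B h hB := ⟨fun h' => hB.1 (h h'), hD.mono _ _ (Finset.insert_subset_insert e h) hB.2⟩
  exch I J hI hJ h := by
    obtain ⟨x, hx, hxI, hx'⟩ := hD.exch _ _ hI.2 hJ.2 (by
      rw [Finset.card_insert_of_notMem hI.1, Finset.card_insert_of_notMem hJ.1]; omega)
    rw [Finset.mem_insert, not_or] at hxI
    refine ⟨x, (Finset.mem_insert.1 hx).resolve_left hxI.1, hxI.2, ?_, ?_⟩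
    · simp [Ne.symm hxI.1, hI.1]
    · rwa [Finset.insert_comm]

lemma Indep.del (hD : Indep D) (e : Q) : Indep (del D e) where
  empty := ⟨by simp, hD.empty⟩
  mono A B h hB := ⟨fun h' => hB.1 (h h'), hD.mono _ _ h hB.2⟩
  exch I J hI hJ h := by
    obtain ⟨x, hx, hxI, hx'⟩ := hD.exch _ _ hI.2 hJ.2 h
    refine ⟨x, hx, hxI, ?_, hx'⟩
    have : e ≠ x := fun h => hJ.1 (h ▸ hx)
    simp [this, hI.1]

lemma Indep.con_rank (hD : Indep D) {e : Q} (he : D {e}) {ρ : ℕ} (hρ : ∃ I, D I ∧ I.card = ρ) :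
    ∃ I, BCT.con D e I ∧ I.card = ρ - 1 := by
  obtain ⟨J, hJ, rfl⟩ := hρ
  rcases Nat.eq_zero_or_pos J.card with h0 | h0
  · exact ⟨∅, (hD.con he).empty, by simp [h0]⟩
  obtain ⟨I, h1, h2, h3⟩ := hD.augment hJ (J.card - 1) {e} he (by simp; omega)
  have hm : e ∈ I := h1 (by simp)
  refine ⟨I.erase e, ⟨by simp, by rwa [Finset.insert_erase hm]⟩, ?_⟩
  rw [Finset.card_erase_of_mem hm, h3]

/-- Deleting an element that is not a coloop does not lower the rank. -/
lemma Indep.del_rank (hD : Indep D) {e : Q} (he : ∃ I, D I ∧ ¬ D (insert e I)) {ρ : ℕ}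
    (hρ : ∃ I, D I ∧ I.card = ρ) : ∃ I, BCT.del D e I ∧ I.card = ρ := by
  obtain ⟨J, hJ, rfl⟩ := hρ
  obtain ⟨I₀, hI₀, hn⟩ := he
  have he₀ : e ∉ I₀ := fun h => hn (by rwa [Finset.insert_eq_of_mem h])
  rcases le_total J.card I₀.card with hle | hle
  · obtain ⟨I, hI, hc⟩ := Finset.exists_subset_card_eq hle
    exact ⟨I, ⟨fun h => he₀ (hI h), hD.mono _ _ hI hI₀⟩, hc⟩
  obtain ⟨I, h1, h2, h3⟩ := hD.augment hJ (J.card - I₀.card) I₀ hI₀ (by omega)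
  refine ⟨I, ⟨fun h => hn (hD.mono _ _ (Finset.insert_subset h h1) h2), h2⟩, h3⟩

/-- The complex of partial placements of non-attacking rooks on the allowed squares `B` of the
board `R × C`. Columns are colored by `c`; two rooks in the same row must have columns of different
colors, two rooks never share a column, and the set of pairs (row, color) in use satisfies `D`. -/
def Brd {R C J : Type*} [DecidableEq R] [DecidableEq J] (c : C → J)
    (D : Finset (R × J) → Prop) (B : R × C → Prop) (A : Finset (R × C)) : Prop :=
  (∀ x ∈ A, B x) ∧ D (A.image fun x => (x.1, c x.2)) ∧
    (∀ x ∈ A, ∀ y ∈ A, x.1 = y.1 → c x.2 = c y.2 → x = y) ∧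
    (∀ x ∈ A, ∀ y ∈ A, x.2 = y.2 → x = y)

variable {R C J : Type*} [DecidableEq R] [DecidableEq C] [DecidableEq J] [Fintype R]
  {c : C → J} {K : Type*} [Field K]

lemma Brd.mono {D : Finset (R × J) → Prop} (hD : Indep D) {B : R × C → Prop}
    (A A' : Finset (R × C)) (h : A ⊆ A') (hA : Brd c D B A') : Brd c D B A :=
  ⟨fun x hx => hA.1 x (h hx), hD.mono _ _ (Finset.image_subset_image h) hA.2.1,
    fun x hx y hy => hA.2.2.1 x (h hx) y (h hy), fun x hx y hy => hA.2.2.2 x (h hx) y (h hy)⟩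

/-- The link of a square contracts its (row, color) pair and removes its column. -/
lemma brd_link {D : Finset (R × J) → Prop} {B B' : R × C → Prop} {i : R} {v : C}
    (hw : B (i, v)) (hB : ∀ x : R × C, x.2 ≠ v → ¬ (x.1 = i ∧ c x.2 = c v) → (B x ↔ B' x))
    (hB' : ∀ x, B' x → x.2 ≠ v) (A : Finset (R × C)) :
    Brd c (con D (i, c v)) B' A ↔ ((i, v) ∉ A ∧ Brd c D B (insert (i, v) A)) := by
  constructor
  · rintro ⟨h1, ⟨h2, h2'⟩, h3, h4⟩
    have hrow : ∀ x ∈ A, ¬ (x.1 = i ∧ c x.2 = c v) := by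
      rintro x hx ⟨rfl, h⟩
      exact h2 (Finset.mem_image.2 ⟨x, hx, by rw [h]⟩)
    have hcol : ∀ x ∈ A, x.2 ≠ v := fun x hx => hB' x (h1 x hx)
    refine ⟨fun h => hcol _ h rfl, ?_, ?_, ?_, ?_⟩
    · intro x hx
      rcases Finset.mem_insert.1 hx with rfl | hx
      · exact hw
      · exact (hB x (hcol x hx) (hrow x hx)).2 (h1 x hx)
    · rwa [Finset.image_insert]
    · intro x hx y hy hxy hc
      rcases Finset.mem_insert.1 hx with rfl | hx <;> rcases Finset.mem_insert.1 hy with rfl | hy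
      · rfl
      · exact (hrow y hy ⟨hxy.symm, hc.symm⟩).elim
      · exact (hrow x hx ⟨hxy, hc⟩).elim
      · exact h3 x hx y hy hxy hc
    · intro x hx y hy hxy
      rcases Finset.mem_insert.1 hx with rfl | hx <;> rcases Finset.mem_insert.1 hy with rfl | hy
      · rfl
      · exact (hcol y hy hxy.symm).elim
      · exact (hcol x hx hxy).elim
      · exact h4 x hx y hy hxy
  · rintro ⟨h0, h1, h2, h3, h4⟩
    have hrow : ∀ x ∈ A, ¬ (x.1 = i ∧ c x.2 = c v) := by
      rintro x hx ⟨h, h'⟩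
      have := h3 x (Finset.mem_insert_of_mem hx) _ (Finset.mem_insert_self _ _) h h'
      exact h0 (this ▸ hx)
    have hcol : ∀ x ∈ A, x.2 ≠ v := by
      intro x hx h
      have := h4 x (Finset.mem_insert_of_mem hx) _ (Finset.mem_insert_self _ _) h
      exact h0 (this ▸ hx)
    refine ⟨fun x hx => (hB x (hcol x hx) (hrow x hx)).1 (h1 x (Finset.mem_insert_of_mem hx)),
      ⟨?_, ?_⟩, fun x hx y hy => h3 x (Finset.mem_insert_of_mem hx) y (Finset.mem_insert_of_mem hy),
      fun x hx y hy => h4 x (Finset.mem_insert_of_mem hx) y (Finset.mem_insert_of_mem hy)⟩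
    · intro h
      obtain ⟨x, hx, he⟩ := Finset.mem_image.1 h
      exact hrow x hx (by simpa using he)
    · rwa [Finset.image_insert] at h2

/-- Removing a square from the board is the deletion of a vertex. -/
lemma brd_del {D : Finset (R × J) → Prop} {B B' : R × C → Prop} {w : R × C}
    (h : ∀ x, B' x ↔ (B x ∧ x ≠ w)) (A : Finset (R × C)) :
    Brd c D B' A ↔ (Brd c D B A ∧ w ∉ A) := by
  constructor
  · rintro ⟨h1, h2⟩
    exact ⟨⟨fun x hx => ((h x).1 (h1 x hx)).1, h2⟩, fun hw => ((h w).1 (h1 w hw)).2 rfl⟩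
  · rintro ⟨⟨h1, h2⟩, h3⟩
    exact ⟨fun x hx => (h x).2 ⟨h1 x hx, fun hw => h3 (hw ▸ hx)⟩, h2⟩

/-- The induction step for boards: the square `(i, v)` is a vertex with deletion `B'`, and its link
is the board `B''` for the contraction (or is void when `(i, c v)` is a loop). -/
lemma brd_step {D : Finset (R × J) → Prop} (hD : Indep D) {ρ : ℕ} {B B' B'' : R × C → Prop} {i : R}
    {v : C} (hw : B (i, v)) (h' : ∀ x, B' x ↔ (B x ∧ x ≠ (i, v)))
    (hB : ∀ x : R × C, x.2 ≠ v → ¬ (x.1 = i ∧ c x.2 = c v) → (B x ↔ B'' x))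
    (hB'' : ∀ x, B'' x → x.2 ≠ v) (hdel : Acy K ρ (Brd c D B'))
    (hlink : D {(i, c v)} → Acy K (ρ - 1) (Brd c (con D (i, c v)) B'')) :
    Acy K ρ (Brd c D B) := by
  refine acy_vertex (Brd.mono hD) (i, v) (hdel.congr (brd_del h')) ?_
  by_cases he : D {(i, c v)}
  · exact (hlink he).congr (brd_link hw hB hB'')
  · refine acy_of_forall_not _ ?_
    rintro A ⟨_, _, h2, _⟩
    exact he (hD.mono _ _ (by simp) h2)

/-- The number of rows whose pair with the color `j` is not a loop. -/
def nl (D : Finset (R × J) → Prop) (j : J) : ℕ := {i : R | D {(i, j)}}.ncard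

lemma nl_mono {D D' : Finset (R × J) → Prop} (h : ∀ e, D' {e} → D {e}) (j : J) :
    nl D' j ≤ nl D j :=
  Set.ncard_le_ncard (fun _ hi => h _ hi) (Set.toFinite _)

lemma nl_lt {D D' : Finset (R × J) → Prop} (h : ∀ e, D' {e} → D {e}) {i : R} {j : J}
    (h1 : D {(i, j)}) (h2 : ¬ D' {(i, j)}) : nl D' j < nl D j :=
  Set.ncard_lt_ncard ⟨fun _ hi => h _ hi, fun hs => h2 (hs h1)⟩ (Set.toFinite _)

lemma con_sub {D : Finset Q → Prop} (hD : Indep D) (e x : Q) (h : con D e {x}) : D {x} :=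
  hD.mono _ _ (by simp) h.2

/-- The supply of columns stays sufficient when at most two columns of the color `j` are removed
while some pair of color `j` becomes a loop. -/
lemma cond_erase {D D' : Finset (R × J) → Prop} (hs : ∀ e, D' {e} → D {e}) {U U' : Finset C}
    {j : J} (hlt : nl D' j < nl D j)
    (hU : ∀ v ∈ U, c v ≠ j → v ∈ U')
    (hj : (U.filter fun v => c v = j).card ≤ (U'.filter fun v => c v = j).card + 2)
    (hcond : ∀ j, 2 * nl D j ≤ (U.filter fun v => c v = j).card + 1) :
    ∀ j, 2 * nl D' j ≤ (U'.filter fun v => c v = j).card + 1 := by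
  intro j'
  by_cases h : j' = j
  · subst h
    have := hcond j'
    omega
  · have h1 := hcond j'
    have h2 := nl_mono hs j'
    have h3 : (U.filter fun v => c v = j').card ≤ (U'.filter fun v => c v = j').card := by
      refine Finset.card_le_card fun v hv => ?_
      rw [Finset.mem_filter] at hv ⊢
      exact ⟨hU v hv.1 (hv.2 ▸ h), hv.2⟩
    omega

/-- A full board on which every color has enough columns (about twice as many as rows that use it)
is acyclic below the rank of the matroid. A non-coloop is deleted square by square. For a coloop
one column is first reserved for its row; after the other squares of that row in that color are
removed, the remaining square is a cone point. Every link met on the way is a full board for a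
contraction. -/
lemma acy_brd [Fintype J] : ∀ (N : ℕ) (D : Finset (R × J) → Prop) (U : Finset C) (ρ : ℕ),
    Indep D → (∃ I, D I ∧ I.card = ρ) → ∑ j, nl D j = N →
    (∀ j, 2 * nl D j ≤ (U.filter fun v => c v = j).card + 1) →
    Acy K ρ (Brd c D fun x => x.2 ∈ U) := by
  intro N
  induction N using Nat.strong_induction_on with
  | _ N ih =>
  intro D U ρ hD hρ hN hcond
  by_cases hne : ∃ e, D {e}
  swap
  · obtain ⟨I, hI, rfl⟩ := hρ
    have : I = ∅ := Finset.eq_empty_of_forall_notMem fun e he =>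
      hne ⟨e, hD.mono _ _ (by simpa using he) hI⟩
    subst this
    intro n hn
    simp at hn
  obtain ⟨⟨i₀, j⟩, he⟩ := hne
  have hsum : ∀ {D' : Finset (R × J) → Prop} {i : R}, (∀ e, D' {e} → D {e}) → D {(i, j)} →
      ¬ D' {(i, j)} → ∑ j, nl D' j < N := by
    intro D' i h h1 h2
    rw [← hN]
    exact Finset.sum_lt_sum (fun j _ => nl_mono h j) ⟨j, Finset.mem_univ _, nl_lt h h1 h2⟩
  -- acyclicity of the contractions, with one or two columns removed
  have hcon : ∀ (i : R) (U' : Finset C), D {(i, j)} → (∀ v ∈ U, c v ≠ j → v ∈ U') →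
      (U.filter fun v => c v = j).card ≤ (U'.filter fun v => c v = j).card + 2 →
      Acy K (ρ - 1) (Brd c (con D (i, j)) fun x => x.2 ∈ U') := by
    intro i U' hi h1 h2
    have hno : ¬ con D (i, j) {(i, j)} := fun h => h.1 (by simp)
    exact ih _ (hsum (con_sub hD _) hi hno) _ U' _ (hD.con hi) (hD.con_rank hi hρ) rfl
      (cond_erase (con_sub hD _) (nl_lt (con_sub hD _) hi hno) h1 h2 hcond)
  have hcard1 : ∀ v, (U.filter fun v => c v = j).card ≤
      ((U.erase v).filter fun v => c v = j).card + 2 := by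
    intro v
    rw [Finset.filter_erase]
    have := Finset.pred_card_le_card_erase (s := U.filter fun v => c v = j) (a := v)
    omega
  have hcard2 : ∀ v v', (U.filter fun v => c v = j).card ≤
      (((U.erase v).erase v').filter fun v => c v = j).card + 2 := by
    intro v v'
    rw [Finset.filter_erase, Finset.filter_erase]
    have := Finset.pred_card_le_card_erase (s := U.filter fun v => c v = j) (a := v)
    have := Finset.pred_card_le_card_erase (s := (U.filter fun v => c v = j).erase v) (a := v')
    omega
  -- the pair `(i₀, j)` is not a coloop: allow its squares one after the other
  by_cases hco : ∃ I, D I ∧ ¬ D (insert (i₀, j) I)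
  · have key : ∀ S : Finset C, (∀ v ∈ S, v ∈ U ∧ c v = j) →
        Acy K ρ (Brd c D fun x => x.2 ∈ U ∧ (x.1 = i₀ ∧ c x.2 = j → x.2 ∈ S)) := by
      intro S
      induction S using Finset.induction_on with
      | empty =>
        intro _
        have hno : ¬ del D (i₀, j) {(i₀, j)} := fun h => h.1 (by simp)
        have hs : ∀ e, del D (i₀, j) {e} → D {e} := fun e h => h.2
        refine (ih _ (hsum hs he hno) _ U ρ (hD.del _) (hD.del_rank hco hρ) rfl
          (fun j => (Nat.mul_le_mul_left _ (nl_mono hs j)).trans (hcond j))).congr ?_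
        intro A
        constructor
        · rintro ⟨h1, h2, h3⟩
          refine ⟨fun x hx => ⟨h1 x hx, fun h => (h2.1 ?_).elim⟩, h2.2, h3⟩
          exact Finset.mem_image.2 ⟨x, hx, by rw [h.1, h.2]⟩
        · rintro ⟨h1, h2, h3⟩
          refine ⟨fun x hx => (h1 x hx).1, ⟨fun h => ?_, h2⟩, h3⟩
          obtain ⟨x, hx, hxe⟩ := Finset.mem_image.1 h
          exact absurd ((h1 x hx).2 (by simpa using hxe)) (by simp)
      | insert v S hv ihS =>
        intro hS
        obtain ⟨hvU, rfl⟩ := hS v (by simp)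
        refine brd_step (i := i₀) (v := v) (B'' := fun x => x.2 ∈ U.erase v) hD ⟨hvU, by simp⟩ ?_
          ?_ ?_ (ihS fun v hv => hS v (by simp [hv]))
          (fun h => hcon i₀ _ h (fun u hu hc => Finset.mem_erase.2 ⟨fun h => hc (h ▸ rfl), hu⟩)
            (hcard1 v))
        · rintro ⟨i, u⟩
          simp only [Finset.mem_insert, ne_eq, Prod.mk.injEq]
          constructor
          · rintro ⟨h1, h2⟩
            refine ⟨⟨h1, fun h => Or.inr (h2 h)⟩, ?_⟩
            rintro ⟨rfl, rfl⟩
            exact hv (h2 ⟨rfl, rfl⟩)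
          · rintro ⟨⟨h1, h2⟩, h3⟩
            exact ⟨h1, fun h => (h2 h).resolve_left fun h' => h3 ⟨h.1, h'⟩⟩
        · rintro x hx hx'
          simp [hx, hx']
        · rintro x hx
          exact (Finset.mem_erase.1 hx).1
    refine (key (U.filter fun v => c v = j) (by simp)).congr fun A => ?_
    unfold Brd
    refine and_congr_left' (forall₂_congr fun x _ => ?_)
    simp only [Finset.mem_filter]
    tauto
  -- the pair `(i₀, j)` is a coloop: reserve the column `v₀` of color `j` for the row `i₀`
  · push Not at hco
    obtain ⟨v₀, hv₀⟩ : (U.filter fun v => c v = j).Nonempty := by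
      rw [← Finset.card_pos]
      have h1 := hcond j
      have h2 : 0 < nl D j := (Set.ncard_pos (Set.toFinite _)).2 ⟨i₀, he⟩
      omega
    obtain ⟨hv₀U, rfl⟩ := Finset.mem_filter.1 hv₀
    -- only the squares `v₀` and `S` of color `j` in row `i₀`; without `S`,
    -- `(i₀, v₀)` is a cone point
    have key1 : ∀ S : Finset C, (∀ v ∈ S, v ∈ U ∧ c v = c v₀ ∧ v ≠ v₀) →
        Acy K ρ (Brd c D fun x => x.2 ∈ U ∧ (x.2 = v₀ → x.1 = i₀) ∧
          (x.1 = i₀ ∧ c x.2 = c v₀ → x.2 = v₀ ∨ x.2 ∈ S)) := by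
      intro S
      induction S using Finset.induction_on with
      | empty =>
        intro _
        refine acy_cone ρ (i₀, v₀) ?_
        rintro A ⟨h1, h2, h3, h4⟩
        have hrow : ∀ x ∈ A, x.1 = i₀ → c x.2 = c v₀ → x = (i₀, v₀) := by
          intro x hx h h'
          have := (h1 x hx).2.2 ⟨h, h'⟩
          simp only [Finset.notMem_empty, or_false] at this
          exact Prod.ext h this
        have hcol : ∀ x ∈ A, x.2 = v₀ → x = (i₀, v₀) := fun x hx h =>
          Prod.ext ((h1 x hx).2.1 h) h
        refine ⟨?_, ?_, ?_, ?_⟩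
        · intro x hx
          rcases Finset.mem_insert.1 hx with rfl | hx
          · exact ⟨hv₀U, by simp⟩
          · exact h1 x hx
        · rw [Finset.image_insert]
          exact hco _ h2
        · intro x hx y hy hxy hc
          rcases Finset.mem_insert.1 hx with rfl | hx <;>
            rcases Finset.mem_insert.1 hy with rfl | hy
          · rfl
          · exact (hrow y hy hxy.symm hc.symm).symm
          · exact hrow x hx hxy hc
          · exact h3 x hx y hy hxy hc
        · intro x hx y hy hxy
          rcases Finset.mem_insert.1 hx with rfl | hx <;>
            rcases Finset.mem_insert.1 hy with rfl | hy
          · rfl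
          · exact (hcol y hy hxy.symm).symm
          · exact hcol x hx hxy
          · exact h4 x hx y hy hxy
      | insert v S hv ihS =>
        intro hS
        obtain ⟨hvU, hvc, hvv⟩ := hS v (by simp)
        refine brd_step (i := i₀) (v := v) (B'' := fun x => x.2 ∈ (U.erase v₀).erase v) hD
          ⟨hvU, by simp [hvv]⟩ ?_ ?_ ?_ (ihS fun v hv => hS v (by simp [hv])) ?_
        · rintro ⟨i, u⟩
          simp only [Finset.mem_insert, ne_eq, Prod.mk.injEq]
          constructor
          · rintro ⟨h1, h2, h3⟩
            refine ⟨⟨h1, h2, fun h => (h3 h).imp_right Or.inr⟩, ?_⟩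
            rintro ⟨rfl, rfl⟩
            exact (h3 ⟨rfl, hvc⟩).elim hvv hv
          · rintro ⟨⟨h1, h2, h3⟩, h4⟩
            refine ⟨h1, h2, fun h => (h3 h).imp_right fun h' => h'.resolve_left fun h'' =>
              h4 ⟨h.1, h''⟩⟩
        · rintro x hx hx'
          simp only [Finset.mem_erase, ne_eq, hx, not_false_eq_true, true_and]
          rw [hvc] at hx'
          constructor
          · rintro ⟨h1, h2, _⟩
            exact ⟨fun h => hx' ⟨h2 h, h ▸ rfl⟩, h1⟩
          · rintro ⟨h1, h2⟩
            exact ⟨h2, fun h => (h1 h).elim, fun h => (hx' h).elim⟩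
        · rintro x hx
          exact (Finset.mem_erase.1 hx).1
        · rw [hvc]
          refine fun h => hcon i₀ _ h (fun u hu hc => ?_) (hcard2 v₀ v)
          refine Finset.mem_erase.2 ⟨fun h => hc (h ▸ hvc), Finset.mem_erase.2 ⟨?_, hu⟩⟩
          exact fun h => hc (h ▸ rfl)
    -- then open the column `v₀` to the rows in `P`
    have key2 : ∀ P : Finset R, i₀ ∉ P →
        Acy K ρ (Brd c D fun x => x.2 ∈ U ∧ (x.2 = v₀ → x.1 = i₀ ∨ x.1 ∈ P)) := by
      intro P
      induction P using Finset.induction_on with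
      | empty =>
        intro _
        refine (key1 (U.filter fun v => c v = c v₀ ∧ v ≠ v₀) (by simp)).congr fun A => ?_
        unfold Brd
        refine and_congr_left' (forall₂_congr fun x _ => ?_)
        simp only [Finset.mem_filter, Finset.notMem_empty, or_false]
        tauto
      | insert i P hi ihP =>
        intro hP
        rw [Finset.mem_insert, not_or] at hP
        refine brd_step (i := i) (v := v₀) (B'' := fun x => x.2 ∈ U.erase v₀) hD
          ⟨hv₀U, by simp⟩ ?_ ?_ ?_ (ihP hP.2)
          (fun h => hcon i _ h (fun u hu hc => Finset.mem_erase.2 ⟨fun h => hc (h ▸ rfl), hu⟩)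
            (hcard1 v₀))
        · rintro ⟨i', u⟩
          simp only [Finset.mem_insert, ne_eq, Prod.mk.injEq]
          constructor
          · rintro ⟨h1, h2⟩
            refine ⟨⟨h1, fun h => (h2 h).imp_right Or.inr⟩, ?_⟩
            rintro ⟨rfl, rfl⟩
            exact (h2 rfl).elim (fun h => hP.1 h.symm) hi
          · rintro ⟨⟨h1, h2⟩, h4⟩
            exact ⟨h1, fun h => (h2 h).imp_right fun h' => h'.resolve_left fun h'' => h4 ⟨h'', h⟩⟩
        · rintro x hx hx'
          simp [hx]
        · rintro x hx
          exact (Finset.mem_erase.1 hx).1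
    refine (key2 (Finset.univ.erase i₀) (by simp)).congr fun A => ?_
    unfold Brd
    refine and_congr_left' (forall₂_congr fun x _ => ?_)
    simp only [Finset.mem_erase, Finset.mem_univ, and_true]
    tauto

end board

/-! ### A Weyl relation forces exactness -/

section weyl

variable {K M : Type*} [Field K] [AddCommGroup M] [Module K M]

/-- On a vector killed by `T`, the operator `T` acts on powers of `h` as differentiation. -/
lemma weyl_pow_right (T h : Module.End K M) (S : Submodule K M) (hh : ∀ x ∈ S, h x ∈ S)
    (comm : ∀ x ∈ S, T (h x) = h (T x) + x) {x : M} (hx : x ∈ S) (hTx : T x = 0) (n : ℕ) :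
    (h ^ n) x ∈ S ∧ T ((h ^ (n + 1)) x) = ((n : K) + 1) • (h ^ n) x := by
  induction n with
  | zero => exact ⟨hx, by simp [comm x hx, hTx]⟩
  | succ n ih =>
    have hm : (h ^ (n + 1)) x ∈ S := by
      rw [pow_succ', Module.End.mul_apply]; exact hh _ ih.1
    refine ⟨hm, ?_⟩
    rw [pow_succ', Module.End.mul_apply, comm _ hm, ih.2, map_smul, pow_succ' h n,
      Module.End.mul_apply]
    push_cast
    module

lemma weyl_fact (T h : Module.End K M) (S : Submodule K M) (hh : ∀ x ∈ S, h x ∈ S)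
    (comm : ∀ x ∈ S, T (h x) = h (T x) + x) {x : M} (hx : x ∈ S) (hTx : T x = 0) (n : ℕ) :
    (T ^ n) ((h ^ n) x) = (n.factorial : K) • x := by
  induction n with
  | zero => simp
  | succ n ih =>
    rw [pow_succ T n, Module.End.mul_apply, (weyl_pow_right T h S hh comm hx hTx n).2, map_smul,
      ih, smul_smul, Nat.factorial_succ]
    push_cast
    rfl

lemma weyl_pow_left (T h : Module.End K M) (S : Submodule K M) (hT : ∀ x ∈ S, T x ∈ S)
    (comm : ∀ x ∈ S, T (h x) = h (T x) + x) {x : M} (hx : x ∈ S) (n : ℕ) :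
    (T ^ n) x ∈ S ∧
      (T ^ (n + 1)) (h x) = h ((T ^ (n + 1)) x) + ((n : K) + 1) • (T ^ n) x := by
  induction n with
  | zero => exact ⟨hx, by simp [comm x hx]⟩
  | succ n ih =>
    have hm : (T ^ (n + 1)) x ∈ S := by
      rw [pow_succ', Module.End.mul_apply]; exact hT _ ih.1
    refine ⟨hm, ?_⟩
    rw [pow_succ' T (n + 1), Module.End.mul_apply, ih.2, map_add, comm _ hm, map_smul,
      Module.End.mul_apply, pow_succ' T n, Module.End.mul_apply]
    push_cast
    module

variable {p : ℕ} [hp : Fact p.Prime] [CharP K p]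

/-- If `[T, h] = 1` in characteristic `p`, then `ker T` is contained in the image of `T ^ (p - 1)`,
since `T ^ (p - 1) h ^ (p - 1) = (p - 1)!` on `ker T`. -/
lemma weyl_ker (T h : Module.End K M) (S : Submodule K M) (hh : ∀ x ∈ S, h x ∈ S)
    (comm : ∀ x ∈ S, T (h x) = h (T x) + x) {x : M} (hx : x ∈ S) (hTx : T x = 0) :
    ∃ y ∈ S, (T ^ (p - 1)) y = x := by
  have hne : (((p - 1).factorial : ℕ) : K) ≠ 0 := by
    rw [Ne, CharP.cast_eq_zero_iff K p, hp.out.dvd_factorial]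
    have := hp.out.pos
    omega
  refine ⟨(((p - 1).factorial : ℕ) : K)⁻¹ • (h ^ (p - 1)) x,
    S.smul_mem _ (weyl_pow_right T h S hh comm hx hTx _).1, ?_⟩
  rw [map_smul, weyl_fact T h S hh comm hx hTx, smul_smul, inv_mul_cancel₀ hne, one_smul]

/-- If `[T, h] = 1` in characteristic `p`, then `ker (T ^ j)` is contained in the image of `T` for
`j < p`, by induction on `j`. -/
lemma weyl_ker_pow (T h : Module.End K M) (S : Submodule K M) (hT : ∀ x ∈ S, T x ∈ S)
    (hh : ∀ x ∈ S, h x ∈ S) (comm : ∀ x ∈ S, T (h x) = h (T x) + x) (j : ℕ) (hj : j < p) :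
    ∀ x ∈ S, (T ^ j) x = 0 → ∃ y ∈ S, T y = x := by
  induction j with
  | zero => exact fun x _ h0 => ⟨0, S.zero_mem, by simpa using h0.symm⟩
  | succ j ih =>
    intro x hx h0
    have hne : ((j : K) + 1) ≠ 0 := by
      have : (((j + 1 : ℕ)) : K) ≠ 0 := by
        rw [Ne, CharP.cast_eq_zero_iff K p]
        exact fun hd => absurd (Nat.le_of_dvd (by omega) hd) (by omega)
      simpa using this
    obtain ⟨y, hy, hyx⟩ := ih (by omega) (x - ((j : K) + 1)⁻¹ • T (h x))
      (S.sub_mem hx (S.smul_mem _ (hT _ (hh _ hx)))) (by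
        have h1 := (weyl_pow_left T h S hT comm hx j).2
        rw [h0, map_zero, zero_add, pow_succ, Module.End.mul_apply] at h1
        rw [map_sub, map_smul, h1, smul_smul, inv_mul_cancel₀ hne, one_smul, sub_self])
    refine ⟨y + ((j : K) + 1)⁻¹ • h x, S.add_mem hy (S.smul_mem _ (hh _ hx)), ?_⟩
    rw [map_add, map_smul, hyx, sub_add_cancel]

end weyl

/-! ### Group ring operators of an elementary abelian group -/

section ops

variable {p : ℕ} [hp : Fact p.Prime] {F : Type*} [Field F] [Algebra (ZMod p) F]
  {ι : Type*} [Fintype ι]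

/-- Frobenius for the group ring of an elementary abelian `p`-group acting on a module: the `p`-th
power of `∑ wᵢ gᵢ` is the scalar `(∑ wᵢ)ᵖ`. -/
lemma groupRing_pow {M : Type*} [AddCommGroup M] [Module F M]
    (R : Multiplicative F →* Module.End F M) (w g : ι → F) :
    (∑ i, w i • R (Multiplicative.ofAdd (g i))) ^ p = (∑ i, w i) ^ p • (1 : Module.End F M) := by
  have : CharP F p := charP_of_injective_algebraMap (algebraMap (ZMod p) F).injective p
  have : CharP (MonoidAlgebra F (Multiplicative F)) p :=
    charP_of_injective_algebraMap (algebraMap F (MonoidAlgebra F (Multiplicative F))).injective p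
  let τ : MonoidAlgebra F (Multiplicative F) :=
    ∑ i, MonoidAlgebra.single (Multiplicative.ofAdd (g i)) (w i)
  have h1 : MonoidAlgebra.lift F (Module.End F M) (Multiplicative F) R τ =
      ∑ i, w i • R (Multiplicative.ofAdd (g i)) := by
    simp [τ, MonoidAlgebra.lift_single]
  have h2 : τ ^ p = algebraMap F _ ((∑ i, w i) ^ p) := by
    have h3 : ∀ x : F, p • x = 0 := fun x => by simp
    simp only [τ, sum_pow_char, MonoidAlgebra.single_pow, ← ofAdd_nsmul, h3, ofAdd_zero]
    rw [map_sum]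
    simp [MonoidAlgebra.coe_algebraMap]
  rw [← h1, ← map_pow, h2, AlgHom.commutes, Algebra.algebraMap_eq_smul_one]

/-- Orbit representatives: every `x` is translated from `rep x` by `γ x`. -/
lemma exists_rep {Ω : Type*} (act : F → Ω → Ω) (h0 : ∀ x, act 0 x = x)
    (hadd : ∀ a b x, act (a + b) x = act a (act b x)) :
    ∃ (rep : Ω → Ω) (γ : Ω → F), (∀ x, act (γ x) (rep x) = x) ∧
      ∀ g x, rep (act g x) = rep x := by
  let st : Setoid Ω :=
    { r := fun x y => ∃ g, act g x = y
      iseqv :=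
        ⟨fun x => ⟨0, h0 x⟩,
          fun {x y} ⟨g, hg⟩ => ⟨-g, by rw [← hg, ← hadd, neg_add_cancel, h0]⟩,
          fun {x y z} ⟨g, hg⟩ ⟨g', hg'⟩ => ⟨g' + g, by rw [hadd, hg, hg']⟩⟩ }
  have hrep : ∀ x, ∃ g, act g (Quotient.mk st x).out = x := fun x =>
    Quotient.mk_out (s := st) x
  choose γ hγ using hrep
  refine ⟨fun x => (Quotient.mk st x).out, γ, hγ, fun g x => ?_⟩
  have : Quotient.mk st (act g x) = Quotient.mk st x := Quotient.sound (st.symm ⟨g, rfl⟩)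
  simp only [this]

/-- A function `θ` with values in `ZMod p`, additive along the orbits of an action of the elementary
abelian group `F`, and not constant on nontrivial orbits: on each orbit choose a functional `χ`
vanishing on the stabilizer; then `θ (g • x₀) = χ g` is well defined. -/
lemma exists_theta {Ω : Type*} (act : F → Ω → Ω) (h0 : ∀ x, act 0 x = x)
    (hadd : ∀ a b x, act (a + b) x = act a (act b x)) :
    ∃ (θ : Ω → ZMod p) (χ : Ω → F →ₗ[ZMod p] ZMod p),
      (∀ g x, θ (act g x) = θ x + χ x g) ∧ (∀ g x, χ (act g x) = χ x) ∧
      ∀ g x, act g x ≠ x → χ x ≠ 0 := by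
  obtain ⟨rep, γ, hγ, hrepact⟩ := exists_rep act h0 hadd
  have hinv : ∀ g x y, act g x = act g y → x = y := fun g x y h => by
    have := congrArg (act (-g)) h
    rwa [← hadd, ← hadd, neg_add_cancel, h0, h0] at this
  have hstab : ∀ x, ∃ χ : F →ₗ[ZMod p] ZMod p,
      (∀ g, act g x = x → χ g = 0) ∧ ∀ g, act g x ≠ x → χ ≠ 0 := by
    intro x
    let H : AddSubgroup F :=
      { carrier := {g | act g x = x}
        zero_mem' := h0 x
        add_mem' := fun {a b} (ha : act a x = x) (hb : act b x = x) => by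
          change act (a + b) x = x
          rw [hadd, hb, ha]
        neg_mem' := fun {a} (ha : act a x = x) => by
          change act (-a) x = x
          apply hinv a
          rw [← hadd, add_neg_cancel, h0, ha] }
    let Hs : Submodule (ZMod p) F := AddSubgroup.toZModSubmodule p H
    by_cases hH : Hs = ⊤
    · refine ⟨0, fun _ _ => rfl, fun g hg => ?_⟩
      have : g ∈ Hs := hH ▸ Submodule.mem_top
      exact absurd this hg
    · obtain ⟨χ, hχ, hle⟩ := Submodule.exists_le_ker_of_lt_top Hs (lt_top_iff_ne_top.2 hH)
      exact ⟨χ, fun g hg => hle (show g ∈ Hs from hg), fun _ _ => hχ⟩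
  choose χ hχ hχ' using hstab
  refine ⟨fun x => χ (rep x) (γ x), fun x => χ (rep x), fun g x => ?_, fun g x => ?_,
    fun g x hg => ?_⟩
  · simp only [hrepact]
    have h1 := hγ (act g x)
    rw [hrepact] at h1
    have h2 : act (γ (act g x) - (γ x + g)) (rep x) = rep x := by
      apply hinv (γ x + g)
      rw [← hadd, add_sub_cancel, h1, add_comm, hadd, hγ]
    have h3 := hχ _ _ h2
    rw [map_sub, map_add, sub_eq_zero] at h3
    exact h3
  · simp only [hrepact]
  · refine hχ' _ g fun h => hg ?_
    conv_lhs => rw [← hγ x]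
    rw [← hadd, add_comm, hadd, h, hγ]

/-- The action of `F` on functions on an `F`-set. -/
def fnRep {Ω : Type*} (act : F → Ω → Ω) (h0 : ∀ x, act 0 x = x)
    (hadd : ∀ a b x, act (a + b) x = act a (act b x)) :
    Multiplicative F →* Module.End F (Ω → F) where
  toFun g := LinearMap.funLeft F F (act g.toAdd)
  map_one' := by ext f x; simp [LinearMap.funLeft_apply, h0]
  map_mul' a b := by
    refine LinearMap.ext fun f => funext fun x => ?_
    simp [LinearMap.funLeft_apply, Module.End.mul_apply, mul_comm a b, hadd]

/-- The twisted operator `u f (x) = ∑ wᵢ χₓ(gᵢ) f (gᵢ x)`. -/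
def uop {Ω : Type*} (act : F → Ω → Ω) (w g : ι → F) (χ : Ω → F →ₗ[ZMod p] ZMod p) :
    Module.End F (Ω → F) :=
  ∑ i, w i • (LinearMap.mulLeft F (fun x => algebraMap (ZMod p) F (χ x (g i)))) *
    LinearMap.funLeft F F (act (g i))

lemma uop_apply {Ω : Type*} (act : F → Ω → Ω) (w g : ι → F) (χ : Ω → F →ₗ[ZMod p] ZMod p)
    (f : Ω → F) (x : Ω) : uop act w g χ f x =
      ∑ i, (w i * algebraMap (ZMod p) F (χ x (g i))) * f (act (g i) x) := by
  simp [uop, LinearMap.funLeft_apply, mul_assoc]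

/-- The sum `∑ wᵢ χ(gᵢ)`. -/
def omg (w g : ι → F) (χ : F →ₗ[ZMod p] ZMod p) : F :=
  ∑ i, w i * algebraMap (ZMod p) F (χ (g i))

/-- The operator `T f (x) = ∑ wᵢ f (gᵢ x)`. -/
def tOp {Ω : Type*} (act : F → Ω → Ω) (w g : ι → F) : Module.End F (Ω → F) :=
  ∑ i, w i • LinearMap.funLeft F F (act (g i))

lemma tOp_apply {Ω : Type*} (act : F → Ω → Ω) (w g : ι → F) (f : Ω → F) (x : Ω) :
    tOp act w g f x = ∑ i, w i * f (act (g i) x) := by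
  simp [tOp, LinearMap.funLeft_apply]

/-- The operator `f ↦ ω⁻ᵖ uᵖ⁻¹ (θ f)`, a conjugate variable to `T`. -/
def hop {Ω : Type*} (act : F → Ω → Ω) (w g : ι → F) (θ : Ω → ZMod p)
    (χ : Ω → F →ₗ[ZMod p] ZMod p) : Module.End F (Ω → F) :=
  LinearMap.mulLeft F (fun x => (omg w g (χ x) ^ p)⁻¹) * uop act w g χ ^ (p - 1) *
    LinearMap.mulLeft F (fun x => algebraMap (ZMod p) F (θ x))

/-- The `p`-th power of `u` is the multiplication by `ωᵖ`. -/
lemma uop_pow {Ω : Type*} (act : F → Ω → Ω) (h0 : ∀ x, act 0 x = x)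
    (hadd : ∀ a b x, act (a + b) x = act a (act b x)) (w g : ι → F)
    (χ : Ω → F →ₗ[ZMod p] ZMod p) (hχ : ∀ g x, χ (act g x) = χ x) (f : Ω → F) (x : Ω) :
    (uop act w g χ ^ p) f x = omg w g (χ x) ^ p * f x := by
  -- along the orbit of `x` the operator `u` becomes a group ring operator
  let φ : (Ω → F) →ₗ[F] (F → F) := LinearMap.funLeft F F fun a => act a x
  let R := fnRep (F := F) (Ω := F) (fun a b => a + b) zero_add add_assoc
  let u' : Module.End F (F → F) :=
    ∑ i, (w i * algebraMap (ZMod p) F (χ x (g i))) • R (Multiplicative.ofAdd (g i))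
  have h1 : ∀ f, φ (uop act w g χ f) = u' (φ f) := by
    intro f
    funext a
    simp [φ, u', R, fnRep, LinearMap.funLeft_apply, uop_apply, hχ, hadd]
  have h2 : ∀ n f, φ ((uop act w g χ ^ n) f) = (u' ^ n) (φ f) := by
    intro n
    induction n with
    | zero => simp
    | succ n ih => intro f; rw [pow_succ, pow_succ, Module.End.mul_apply, ih, h1]; rfl
  have h3 := congrFun (h2 p f) 0
  rw [groupRing_pow (p := p)] at h3
  simpa [φ, LinearMap.funLeft_apply, h0, omg] using h3

lemma uop_comm {Ω : Type*} (act : F → Ω → Ω)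
    (hadd : ∀ a b x, act (a + b) x = act a (act b x)) (w g : ι → F)
    (χ : Ω → F →ₗ[ZMod p] ZMod p) (hχ : ∀ g x, χ (act g x) = χ x) :
    Commute (tOp act w g) (uop act w g χ) := by
  refine LinearMap.ext fun f => funext fun x => ?_
  simp only [Module.End.mul_apply, tOp_apply, uop_apply, hχ, Finset.mul_sum]
  rw [Finset.sum_comm]
  refine Finset.sum_congr rfl fun i _ => Finset.sum_congr rfl fun j _ => ?_
  rw [← hadd, ← hadd, add_comm]
  ring

/-- The Weyl relation `T h = h T + 1`, on functions supported where `ω ≠ 0`. -/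
lemma weyl_rel {Ω : Type*} (act : F → Ω → Ω) (h0 : ∀ x, act 0 x = x)
    (hadd : ∀ a b x, act (a + b) x = act a (act b x)) (w g : ι → F) (θ : Ω → ZMod p)
    (χ : Ω → F →ₗ[ZMod p] ZMod p) (hθ : ∀ g x, θ (act g x) = θ x + χ x g)
    (hχ : ∀ g x, χ (act g x) = χ x) (f : Ω → F) (hf : ∀ x, omg w g (χ x) = 0 → f x = 0) :
    tOp act w g (hop act w g θ χ f) = hop act w g θ χ (tOp act w g f) + f := by
  set T := tOp act w g
  set u := uop act w g χ
  let Mθ : Module.End F (Ω → F) := LinearMap.mulLeft F fun x => algebraMap (ZMod p) F (θ x)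
  have h1 : T (Mθ f) = Mθ (T f) + u f := by
    funext x
    simp only [T, u, Mθ, tOp_apply, uop_apply, LinearMap.mulLeft_apply, Pi.mul_apply,
      Pi.add_apply, hθ, map_add, Finset.mul_sum, ← Finset.sum_add_distrib]
    refine Finset.sum_congr rfl fun i _ => ?_
    ring
  have h2 : ∀ (q : Ω → F), T ((fun x => (omg w g (χ x) ^ p)⁻¹) * q) =
      (fun x => (omg w g (χ x) ^ p)⁻¹) * T q := by
    intro q
    funext x
    simp only [T, tOp_apply, Pi.mul_apply, hχ, Finset.mul_sum]
    refine Finset.sum_congr rfl fun i _ => ?_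
    ring
  have h3 : ∀ q, T ((u ^ (p - 1)) q) = (u ^ (p - 1)) (T q) := fun q =>
    LinearMap.congr_fun ((uop_comm act hadd w g χ hχ).pow_right (p - 1)).eq q
  have hdef : ∀ q, hop act w g θ χ q =
    (fun x => (omg w g (χ x) ^ p)⁻¹) * (u ^ (p - 1)) (Mθ q) := fun q => rfl
  rw [hdef, h2, h3, h1, map_add, mul_add, hdef]
  congr 1
  have h4 : (u ^ (p - 1)) (u f) = (u ^ p) f := by
    rw [← Module.End.mul_apply, ← pow_succ, Nat.sub_add_cancel hp.out.one_le]
  rw [h4]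
  funext x
  simp only [u, Pi.mul_apply, uop_pow act h0 hadd w g χ hχ]
  by_cases hx : omg w g (χ x) = 0
  · simp [hf x hx]
  · rw [← mul_assoc, inv_mul_cancel₀ (pow_ne_zero _ hx), one_mul]

end ops

/-! ### The equivariant obstruction -/

section obstruction

variable {p : ℕ} [hp : Fact p.Prime] {F : Type*} [Field F] [Algebra (ZMod p) F] [DecidableEq F]
  {ι : Type*} [Fintype ι] {Y : Type*} [DecidableEq Y]

/-- Translation of the first coordinate. -/
def sh (g : F) (x : F × Y) : F × Y := (g + x.1, x.2)

lemma sh_zero : (sh 0 : F × Y → F × Y) = id := by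
  funext x; simp [sh]

lemma sh_add (a b : F) : (sh (a + b) : F × Y → F × Y) = sh a ∘ sh b := by
  funext x; simp [sh, add_assoc]

lemma sh_inj (a : F) : Function.Injective (sh a : F × Y → F × Y) := by
  intro x y h
  simp only [sh, Prod.mk.injEq, add_right_inj] at h
  exact Prod.ext h.1 h.2

lemma mem_image_sh (g : F) (A : Finset (F × Y)) (i : F) (y : Y) :
    (i, y) ∈ A.image (sh g) ↔ (i - g, y) ∈ A := by
  simp only [Finset.mem_image, sh, Prod.mk.injEq, Prod.exists]
  constructor
  · rintro ⟨a, b, h, rfl, rfl⟩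
    simpa using h
  · exact fun h => ⟨_, _, h, by simp, rfl⟩

/-- No fibre `F × {y}` is contained in `A`. -/
def NF (A : Finset (F × Y)) : Prop := ∀ y, ∃ i, (i, y) ∉ A

lemma NF.image_sh {A : Finset (F × Y)} (h : NF A) (g : F) : NF (A.image (sh g)) := by
  intro y
  obtain ⟨i, hi⟩ := h y
  exact ⟨i + g, by rwa [mem_image_sh, add_sub_cancel_right]⟩

lemma nf_image_sh (A : Finset (F × Y)) (g : F) : NF (A.image (sh g)) ↔ NF A := by
  refine ⟨fun h => ?_, fun h => h.image_sh g⟩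
  have := h.image_sh (-g)
  rwa [Finset.image_image, ← sh_add, neg_add_cancel, sh_zero, Finset.image_id] at this

lemma NF.mono {A B : Finset (F × Y)} (h : NF B) (hAB : A ⊆ B) : NF A := fun y =>
  (h y).imp fun _ hi hA => hi (hAB hA)

lemma NF.card_le [Fintype F] [Fintype Y] {A : Finset (F × Y)} (h : NF A) :
    A.card + Fintype.card Y ≤ Fintype.card F * Fintype.card Y := by
  choose i hi using h
  have h1 : Disjoint A (Finset.univ.image fun y => (i y, y)) := by
    rw [Finset.disjoint_right]
    simp only [Finset.mem_image, Finset.mem_univ, true_and]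
    rintro _ ⟨y, rfl⟩
    exact hi y
  have h2 : (Finset.univ.image fun y => (i y, y)).card = Fintype.card Y :=
    Finset.card_image_of_injective _ fun a b hab => (Prod.ext_iff.1 hab).2
  have h3 := Finset.card_le_univ (A ∪ Finset.univ.image fun y => (i y, y))
  rwa [Finset.card_union_of_disjoint h1, h2, Fintype.card_prod] at h3

/-- The operator `∑ wᵢ gᵢ` on chains. -/
def tCh (w g : ι → F) : Module.End F (Ch F (F × Y)) := ∑ i, w i • mp (sh (g i))

/-- The action of `F` on ordered chains. -/
def chRep : Multiplicative F →* Module.End F (Ch F (F × Y)) where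
  toFun g := mp (sh g.toAdd)
  map_one' := by
    refine LinearMap.ext fun z => ?_
    simp [sh_zero, mp, Finsupp.lmapDomain]
  map_mul' a b := by
    refine LinearMap.ext fun z => ?_
    simp [Module.End.mul_apply, mp_mp, sh_add]

include hp in
variable (p) in
lemma tCh_pow (w g : ι → F) (hw : ∑ i, w i = 0) :
    (tCh w g : Module.End F (Ch F (F × Y))) ^ p = 0 := by
  have := groupRing_pow (p := p) (chRep (F := F) (Y := Y)) w g
  rw [hw, zero_pow hp.out.ne_zero, zero_smul] at this
  exact this

/-- The pairing of a function on lists with a chain. -/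
def pair (f : List (F × Y) → F) : Ch F (F × Y) →ₗ[F] F := Finsupp.linearCombination F f

@[simp] lemma pair_single (f : List (F × Y) → F) (l : List (F × Y)) (a : F) :
    pair f (single l a) = a * f l := by
  simp [pair]

lemma pair_cone (f : List (F × Y) → F) (a : F × Y) (z : Ch F (F × Y)) :
    pair f (cone a z) = pair (fun l => f (a :: l)) z := by
  have : pair f ∘ₗ cone a = pair fun l => f (a :: l) := by
    ext l : 1
    ext1
    simp
  exact LinearMap.congr_fun this z

lemma pair_neg (f : List (F × Y) → F) (z : Ch F (F × Y)) : pair (-f) z = - pair f z := by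
  have : pair (-f) = - pair f := by
    ext l : 1
    ext1
    simp
  exact LinearMap.congr_fun this z

/-- Translation of lists. -/
def lact (g : F) (l : List (F × Y)) : List (F × Y) := l.map (sh g)

lemma lact_zero (l : List (F × Y)) : lact 0 l = l := by simp [lact, sh_zero]

lemma lact_add (a b : F) (l : List (F × Y)) : lact (a + b) l = lact a (lact b l) := by
  simp [lact, sh_add]

lemma toFinset_map' {α β : Type*} [DecidableEq α] [DecidableEq β] (f : α → β) (l : List α) :
    (l.map f).toFinset = l.toFinset.image f := by
  ext x; simp

lemma pair_tOp (w g : ι → F) (f : List (F × Y) → F) (z : Ch F (F × Y)) :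
    pair (tOp lact w g f) z = pair f (tCh w g z) := by
  have : pair (tOp lact w g f) = pair f ∘ₗ tCh w g := by
    ext l : 1
    ext1
    simp [tOp_apply, tCh, lact]
  exact LinearMap.congr_fun this z

lemma pair_tOp_pow (w g : ι → F) (n : ℕ) (f : List (F × Y) → F) (z : Ch F (F × Y)) :
    pair ((tOp lact w g ^ n) f) z = pair f ((tCh w g ^ n) z) := by
  induction n generalizing f z with
  | zero => simp
  | succ n ih =>
    rw [pow_succ, pow_succ', Module.End.mul_apply, ih, Module.End.mul_apply, pair_tOp]

/-- The lists on which cochains live: nonempty lists of pairs without a full fibre. -/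
def Good (l : List (F × Y)) : Prop := l ≠ [] ∧ NF l.toFinset

lemma good_lact (g : F) (l : List (F × Y)) : Good (lact g l) ↔ Good l := by
  simp [Good, lact, toFinset_map', nf_image_sh]

/-- Functions on lists changing sign under adjacent transpositions and vanishing on adjacent
repetitions. -/
structure Alt (f : List (F × Y) → F) : Prop where
  swap : ∀ l₁ a b l₂, f (l₁ ++ a :: b :: l₂) = - f (l₁ ++ b :: a :: l₂)
  rep : ∀ l₁ a l₂, f (l₁ ++ a :: a :: l₂) = 0

lemma Alt.cons {f : List (F × Y) → F} (h : Alt f) (x : F × Y) : Alt fun l => f (x :: l) :=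
  ⟨fun l₁ => h.swap (x :: l₁), fun l₁ => h.rep (x :: l₁)⟩

/-- The coboundary of an alternating function is alternating. -/
lemma Alt.bdL {f : List (F × Y) → F} (h : Alt f) : Alt fun l => pair f (bdL l) := by
  constructor
  · intro l₁ a b l₂
    induction l₁ generalizing f with
    | nil =>
      have : (fun l => f (a :: b :: l)) = - fun l => f (b :: a :: l) := by
        funext l; simpa using h.swap [] a b l
      simp only [List.nil_append, BCT.bdL, map_sub, cone_single, pair_single, pair_cone, this,
        pair_neg]
      ring
    | cons x l₁ ih =>
      have := ih (h.cons x)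
      simp only [List.cons_append, BCT.bdL, map_sub, pair_single, pair_cone, this]
      rw [h.swap l₁ a b l₂]
      ring
  · intro l₁ a l₂
    induction l₁ generalizing f with
    | nil =>
      have : (fun l => f (a :: a :: l)) = 0 := by
        funext l; simpa using h.rep [] a l
      simp only [List.nil_append, BCT.bdL, map_sub, cone_single, pair_single, pair_cone, this]
      simp [pair]
    | cons x l₁ ih =>
      have := ih (h.cons x)
      simp only [List.cons_append, BCT.bdL, map_sub, pair_single, pair_cone, this]
      simp [h.rep]

lemma Alt.perm {l l' : List (F × Y)} (hl : l.Perm l') :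
    ∀ {f : List (F × Y) → F}, Alt f → (f l = 0 ↔ f l' = 0) := by
  induction hl with
  | nil => exact fun _ => Iff.rfl
  | cons x _ ih => exact fun h => ih (h.cons x)
  | swap x y l =>
    intro f h
    have := h.swap [] x y l
    simp only [List.nil_append] at this
    rw [this, neg_eq_zero]
  | trans _ _ ih1 ih2 => exact fun h => (ih1 h).trans (ih2 h)

lemma Alt.eq_zero {f : List (F × Y) → F} (h : Alt f) {l : List (F × Y)} (hl : ¬ l.Nodup) :
    f l = 0 := by
  rw [List.nodup_iff_sublist] at hl
  push Not at hl
  obtain ⟨a, ha⟩ := hl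
  obtain ⟨l', hl'⟩ := ha.exists_perm_append
  exact (h.perm hl').2 (by simpa using h.rep [] a l')

variable (F Y) in
/-- Alternating functions supported on good lists. -/
def altS : Submodule F (List (F × Y) → F) where
  carrier := {f | Alt f ∧ ∀ l, ¬ Good l → f l = 0}
  zero_mem' := ⟨⟨by simp, by simp⟩, by simp⟩
  add_mem' := fun {a b} ha hb => ⟨⟨fun l₁ x y l₂ => by
    simp only [Pi.add_apply]; rw [ha.1.swap, hb.1.swap]; ring, fun l₁ x l₂ => by
    simp [ha.1.rep, hb.1.rep]⟩, fun l hl => by simp [ha.2 l hl, hb.2 l hl]⟩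
  smul_mem' := fun c a ha => ⟨⟨fun l₁ x y l₂ => by
    simp only [Pi.smul_apply]; rw [ha.1.swap, smul_neg], fun l₁ x l₂ => by
    simp [ha.1.rep]⟩, fun l hl => by simp [ha.2 l hl]⟩

lemma altS_mul {f : List (F × Y) → F} (hf : f ∈ altS F Y) (κ : Finset (F × Y) → F) :
    LinearMap.mulLeft F (fun l : List (F × Y) => κ l.toFinset) f ∈ altS F Y := by
  refine ⟨⟨fun l₁ a b l₂ => ?_, fun l₁ a l₂ => ?_⟩, fun l hl => ?_⟩
  · have : (l₁ ++ a :: b :: l₂).toFinset = (l₁ ++ b :: a :: l₂).toFinset := by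
      ext x; simp; tauto
    simp only [LinearMap.mulLeft_apply, Pi.mul_apply, this, hf.1.swap l₁ a b l₂, mul_neg]
  · simp only [LinearMap.mulLeft_apply, Pi.mul_apply, hf.1.rep, mul_zero]
  · simp only [LinearMap.mulLeft_apply, Pi.mul_apply, hf.2 l hl, mul_zero]

lemma altS_lact {f : List (F × Y) → F} (hf : f ∈ altS F Y) (g : F) :
    LinearMap.funLeft F F (lact g) f ∈ altS F Y := by
  refine ⟨⟨fun l₁ a b l₂ => ?_, fun l₁ a l₂ => ?_⟩, fun l hl => ?_⟩
  · simp only [LinearMap.funLeft_apply, lact, List.map_append, List.map_cons]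
    exact hf.1.swap _ _ _ _
  · simp only [LinearMap.funLeft_apply, lact, List.map_append, List.map_cons]
    exact hf.1.rep _ _ _
  · exact hf.2 _ (by rwa [good_lact])

lemma altS_tOp (w g : ι → F) {f : List (F × Y) → F} (hf : f ∈ altS F Y) :
    tOp lact w g f ∈ altS F Y := by
  simp only [tOp, LinearMap.sum_apply, LinearMap.smul_apply]
  exact Submodule.sum_mem _ fun i _ => Submodule.smul_mem _ _ (altS_lact hf _)

lemma altS_uop (w g : ι → F) (χ : Finset (F × Y) → F →ₗ[ZMod p] ZMod p)
    {f : List (F × Y) → F} (hf : f ∈ altS F Y) :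
    uop lact w g (fun l => χ l.toFinset) f ∈ altS F Y := by
  simp only [uop, LinearMap.sum_apply, Module.End.mul_apply, LinearMap.smul_apply, smul_mul_assoc]
  exact Submodule.sum_mem _ fun i _ => Submodule.smul_mem _ _ (altS_mul (altS_lact hf _)
    fun A => algebraMap (ZMod p) F (χ A (g i)))

lemma altS_hop (w g : ι → F) (θ : Finset (F × Y) → ZMod p)
    (χ : Finset (F × Y) → F →ₗ[ZMod p] ZMod p) {f : List (F × Y) → F} (hf : f ∈ altS F Y) :
    hop lact w g (fun l => θ l.toFinset) (fun l => χ l.toFinset) f ∈ altS F Y := by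
  have h1 : ∀ n, ∀ q ∈ altS F Y,
      (uop lact w g (fun l : List (F × Y) => χ l.toFinset) ^ n) q ∈ altS F Y := by
    intro n
    induction n with
    | zero => simp
    | succ n ih =>
      intro q hq
      rw [pow_succ, Module.End.mul_apply]
      exact ih _ (altS_uop w g χ hq)
  exact altS_mul (h1 _ _ (altS_mul hf fun A => algebraMap (ZMod p) F (θ A)))
    fun A => (omg w g (χ A) ^ p)⁻¹

open Classical in
/-- The coboundary operator, on functions supported on good lists. -/
def dlt (f : List (F × Y) → F) (l : List (F × Y)) : F :=
  if Good l then pair f (bdL l) else 0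

lemma dlt_mem {f : List (F × Y) → F} (hf : f ∈ altS F Y) : dlt f ∈ altS F Y := by
  refine ⟨⟨fun l₁ a b l₂ => ?_, fun l₁ a l₂ => ?_⟩, fun l hl => by simp [dlt, hl]⟩
  · have h1 : (l₁ ++ a :: b :: l₂).toFinset = (l₁ ++ b :: a :: l₂).toFinset := by
      ext x; simp; tauto
    have h2 : Good (l₁ ++ a :: b :: l₂) ↔ Good (l₁ ++ b :: a :: l₂) := by
      simp [Good, h1]
    simp only [dlt, hf.1.bdL.swap l₁ a b l₂]
    by_cases h3 : Good (l₁ ++ b :: a :: l₂)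
    · simp [h3, h2.2 h3]
    · simp [h3, mt h2.1 h3]
  · have := hf.1.bdL.rep l₁ a l₂
    simp only [dlt, this, ite_self]

lemma tOp_dlt (w g : ι → F) (f : List (F × Y) → F) :
    tOp lact w g (dlt f) = dlt (tOp lact w g f) := by
  funext l
  by_cases hl : Good l
  · simp only [tOp_apply, dlt, good_lact, hl, if_true, pair_tOp]
    simp [tCh, mp_bdL, lact]
  · simp [tOp_apply, dlt, good_lact, hl]

lemma tOp_pow_dlt (w g : ι → F) (n : ℕ) (f : List (F × Y) → F) :
    (tOp lact w g ^ n) (dlt f) = dlt ((tOp lact w g ^ n) f) := by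
  induction n generalizing f with
  | zero => simp
  | succ n ih => rw [pow_succ, Module.End.mul_apply, tOp_dlt, ih, Module.End.mul_apply]

lemma pair_dlt (f : List (F × Y) → F) {z : Ch F (F × Y)} (hz : z ∈ Sp F {l | Good l}) :
    pair (dlt f) z = pair f (bd z) := by
  refine sp_eq (pair (dlt f)) (pair f ∘ₗ bd) (fun l hl => ?_) hz
  have : Good l := hl
  simp [dlt, this]

lemma Good.sublist {l l' : List (F × Y)} (h : Good l) (hs : l'.Sublist l) (hne : l' ≠ []) :
    Good l' :=
  ⟨hne, h.2.mono fun _ hx => by simpa using hs.subset (by simpa using hx)⟩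

lemma dlt_dlt (f : List (F × Y) → F) : dlt (dlt f) = 0 := by
  funext l
  by_cases hl : Good l
  · simp only [dlt, hl, if_true, Pi.zero_apply]
    match l, hl with
    | [], hl => exact absurd rfl hl.1
    | [a], _ => simp [bdL, dlt, Good]
    | a :: b :: l, hl =>
      rw [pair_dlt f, bd_bdL, map_zero]
      refine Finsupp.supported_mono (fun l' hl' => ?_) (bdL_mem (K := F) (a :: b :: l))
      refine hl.sublist hl'.1 fun h => ?_
      simp [h] at hl'
  · simp [dlt, hl]

variable (p) in
/-- The alternating exponents `0, p-1, 1, p-1, 1, …`. -/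
def ex (n : ℕ) : ℕ := if n = 0 then 0 else if Odd n then p - 1 else 1

/-- The obstruction: there is no equivariant ladder of chains of length `ρ` in the complex of sets
containing no full fibre `F × {y}`, because this complex has dimension less than `ρ - 1` and the
translations act on it without fixed nonempty simplices. -/
theorem obstruction [Fintype F] [Fintype Y] (ρ : ℕ) (hρ : 1 ≤ ρ)
    (hcard : Fintype.card F * Fintype.card Y < ρ + Fintype.card Y) (w g : ι → F)
    (hw : ∑ i, w i = 0) (hω : ∀ χ : F →ₗ[ZMod p] ZMod p, χ ≠ 0 → omg w g χ ≠ 0)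
    (e : ℕ → Ch F (F × Y)) (he : ∀ n ≤ ρ, e n ∈ Sp F (lists NF n)) (h0 : e 0 = single [] 1)
    (hb : ∀ n < ρ, bd (e (n + 1)) = (tCh w g ^ ex p n) (e n)) : False := by
  have : CharP F p := charP_of_injective_algebraMap (algebraMap (ZMod p) F).injective p
  have hp2 := hp.out.two_le
  obtain ⟨θ, χ, hθ, hχ, hχ0⟩ := exists_theta (p := p) (F := F) (Ω := Finset (F × Y))
    (fun a A => A.image (sh a)) (fun A => by simp [sh_zero])
    (fun a b A => by simp [sh_add, Finset.image_image])
  set T := tOp (lact (F := F) (Y := Y)) w g with hT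
  set h := hop (lact (F := F) (Y := Y)) w g (fun l => θ l.toFinset) (fun l => χ l.toFinset)
  have hTS : ∀ x ∈ altS F Y, T x ∈ altS F Y := fun x hx => altS_tOp w g hx
  have hhS : ∀ x ∈ altS F Y, h x ∈ altS F Y := fun x hx => altS_hop w g θ χ hx
  -- a good set is moved by some translation
  have hmove : ∀ l : List (F × Y), Good l → χ l.toFinset ≠ 0 := by
    rintro l ⟨hne, hl⟩
    obtain ⟨⟨i, y⟩, hx⟩ := List.exists_mem_of_ne_nil l hne
    obtain ⟨j, hj⟩ := hl y
    refine hχ0 (j - i) _ fun hfix => hj ?_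
    rw [← hfix, mem_image_sh]
    simpa using hx
  have comm : ∀ x ∈ altS F Y, T (h x) = h (T x) + x := by
    intro x hx
    refine weyl_rel (p := p) lact lact_zero lact_add w g _ _ (fun a l => ?_) (fun a l => ?_) x
      fun l hl => ?_
    · simp only [lact, toFinset_map', hθ]
    · simp only [lact, toFinset_map', hχ]
    · by_contra hxl
      exact hω _ (hmove l (not_imp_comm.1 (hx.2 l) hxl)) hl
  classical
  let ε : List (F × Y) → F := fun l => if l.length = 1 ∧ Good l then 1 else 0
  have hεS : ε ∈ altS F Y := by
    refine ⟨⟨fun l₁ a b l₂ => ?_, fun l₁ a l₂ => ?_⟩, fun l hl => by simp [ε, hl]⟩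
    · have : l₁.length + (l₂.length + 1 + 1) ≠ 1 := by omega
      simp [ε, this]
    · have : l₁.length + (l₂.length + 1 + 1) ≠ 1 := by omega
      simp [ε, this]
  have hTε : T ε = 0 := by
    funext l
    simp only [hT, tOp_apply, ε, lact, List.length_map]
    have h2 : ∀ a : F, Good (List.map (sh a) l) ↔ Good l := fun a => good_lact a l
    simp only [h2, ← Finset.sum_mul, hw]
    simp
  have hδε : dlt ε = 0 := by
    funext l
    by_cases hl : Good l
    · simp only [dlt, hl, if_true, Pi.zero_apply]
      match l, hl with
      | [], hl => exact absurd rfl hl.1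
      | [a], _ => simp [bdL, ε]
      | [a, b], hl =>
        have h1 : Good [a] := hl.sublist (by simp) (by simp)
        have h2 : Good [b] := hl.sublist (by simp) (by simp)
        simp [bdL, ε, h1, h2]
      | a :: b :: c :: l, hl =>
        refine sp_eq (pair ε) 0 (fun l' hl' => ?_) (bdL_mem (K := F) (a :: b :: c :: l))
        have := hl'.2
        simp only [List.length_cons] at this
        have h3 : l'.length ≠ 1 := by omega
        simp [ε, h3]
    · simp [dlt, hl]
  have heG : ∀ n, 1 ≤ n → n ≤ ρ → e n ∈ Sp F {l | Good l} := fun n h1 hn =>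
    Finsupp.supported_mono (fun l (hl : l ∈ lists NF n) => (⟨fun h => by
      have := hl.2
      simp only [h, List.length_nil] at this
      omega, hl.1⟩ : Good l)) (he n hn)
  -- solve for cochains dual to the ladder, from dimension `0` upwards
  have key : ∀ n, 1 ≤ n → n ≤ ρ → ∃ β ∈ altS F Y,
      pair β ((tCh w g ^ ex p n) (e n)) = 1 ∧ dlt ((T ^ ex p n) β) = 0 := by
    intro n hn
    induction n, hn using Nat.le_induction with
    | base =>
      intro _
      obtain ⟨β, hβ, hβε⟩ := weyl_ker (p := p) T h (altS F Y) hhS comm hεS hTε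
      refine ⟨β, hβ, ?_, by simpa [ex, hβε] using hδε⟩
      have h1 : (pair ε) (e 1) = 1 := by
        have h2 := hb 0 (by omega)
        have h3 : pair (fun _ => 1) (bd (e 1)) = (1 : F) := by simp [h2, h0, ex]
        rw [← h3]
        refine sp_eq (pair ε) (pair (fun _ => 1) ∘ₗ bd) (fun l hl => ?_) (he 1 hρ)
        obtain ⟨hl1, hl2⟩ := hl
        obtain ⟨a, rfl⟩ := List.length_eq_one_iff.1 hl2
        have : Good [a] := ⟨by simp, hl1⟩
        simp [ε, bdL, this]
      have h2 : ex p 1 = p - 1 := by simp [ex]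
      rw [h2, ← pair_tOp_pow, ← hT, hβε, h1]
    | succ n hn ih =>
      intro hn'
      obtain ⟨β, hβ, hβ1, hβ2⟩ := ih (by omega)
      have hβ3 : (T ^ ex p n) (dlt β) = 0 := by rw [hT, tOp_pow_dlt, hβ2]
      have hex : ∃ γ ∈ altS F Y, (T ^ ex p (n + 1)) γ = dlt β := by
        by_cases ho : Odd n
        · have h1 : ex p n = p - 1 := by simp [ex, ho, show n ≠ 0 by omega]
          have h2 : ex p (n + 1) = 1 := by
            simp [ex, Nat.not_odd_iff_even.2 ho.add_one]
          rw [h1] at hβ3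
          rw [h2, pow_one]
          exact weyl_ker_pow (p := p) T h (altS F Y) hTS hhS comm (p - 1) (by omega) _
            (dlt_mem hβ) hβ3
        · have h1 : ex p n = 1 := by simp [ex, ho, show n ≠ 0 by omega]
          have h2 : ex p (n + 1) = p - 1 := by
            simp [ex, (Nat.not_odd_iff_even.1 ho).add_one]
          rw [h1, pow_one] at hβ3
          rw [h2]
          exact weyl_ker (p := p) T h (altS F Y) hhS comm (dlt_mem hβ) hβ3
      obtain ⟨γ, hγ, hγβ⟩ := hex
      refine ⟨γ, hγ, ?_, by rw [hγβ, dlt_dlt]⟩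
      rw [← pair_tOp_pow, ← hT, hγβ, pair_dlt β (heG _ (by omega) hn'), hb n (by omega), hβ1]
  obtain ⟨β, hβ, hβ1, -⟩ := key ρ hρ le_rfl
  -- in top degree all good lists have repetitions
  rw [← pair_tOp_pow] at hβ1
  have hmem : ∀ n, (T ^ n) β ∈ altS F Y := by
    intro n
    induction n with
    | zero => exact hβ
    | succ n ih => rw [pow_succ', Module.End.mul_apply]; exact hTS _ ih
  have : pair ((T ^ ex p ρ) β) (e ρ) = 0 := by
    refine sp_eq _ 0 (fun l hl => ?_) (he ρ le_rfl)
    have hnd : ¬ l.Nodup := fun hnd => by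
      have h1 := hl.1.card_le
      rw [List.toFinset_card_of_nodup hnd, hl.2] at h1
      omega
    simp [(hmem _).1.eq_zero hnd]
  rw [← hT, this] at hβ1
  exact zero_ne_one hβ1

end obstruction

/-! ### Equivariant ladders of chains in an acyclic complex -/

section ladder

variable {p : ℕ} [hp : Fact p.Prime] {F : Type*} [Field F] [Algebra (ZMod p) F] [DecidableEq F]
  {ι : Type*} [Fintype ι] {V : Type*} [DecidableEq V]

variable (p F) in
/-- There is an element of the augmentation ideal of the group ring of `F` on which every nonzero
functional `F → ZMod p` is nonzero: `∑ bᵢ (bᵢ - 0)` for a basis `b`. -/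
lemma exists_weights [Fintype F] : ∃ (n : ℕ) (w g : Option (Fin n) → F), ∑ i, w i = 0 ∧
    ∀ χ : F →ₗ[ZMod p] ZMod p, χ ≠ 0 → omg w g χ ≠ 0 := by
  have : Module.Finite (ZMod p) F := Module.Finite.of_finite
  let b := Module.finBasis (ZMod p) F
  refine ⟨_, fun o => o.elim (-∑ i, b i) b, fun o => o.elim 0 b, by simp [Fintype.sum_option],
    fun χ hχ h => hχ (b.ext fun i => ?_)⟩
  have h1 : ∑ i, χ (b i) • b i = 0 := by
    simpa [omg, Fintype.sum_option, Algebra.smul_def, mul_comm] using h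
  exact Fintype.linearIndependent_iff.1 b.linearIndependent _ h1 i

lemma bd_tCh_pow (w g : ι → F) (n : ℕ) (z : Ch F (F × V)) :
    bd ((tCh w g ^ n) z) = (tCh w g ^ n) (bd z) := by
  induction n generalizing z with
  | zero => simp
  | succ n ih =>
    rw [pow_succ, Module.End.mul_apply, ih, Module.End.mul_apply]
    simp [tCh, mp_bd]

lemma tCh_pow_mem {S : Set (List (F × V))} (hS : ∀ l ∈ S, ∀ g : F, l.map (sh g) ∈ S)
    (w g : ι → F) (n : ℕ) {z : Ch F (F × V)} (hz : z ∈ Sp F S) : (tCh w g ^ n) z ∈ Sp F S := by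
  induction n generalizing z with
  | zero => simpa using hz
  | succ n ih =>
    rw [pow_succ, Module.End.mul_apply]
    refine ih ?_
    simp only [tCh, LinearMap.sum_apply, LinearMap.smul_apply]
    exact Submodule.sum_mem _ fun i _ => Submodule.smul_mem _ _ (mp_mem (fun l hl => hS l hl _) hz)

/-- Consecutive exponents add up to `p`, and `T ^ p = 0`. -/
lemma ex_add (hp2 : 2 ≤ p) (n : ℕ) (hn : n ≠ 0) : ex p (n + 1) + ex p n = p := by
  by_cases ho : Odd n
  · have : ¬ Odd (n + 1) := Nat.not_odd_iff_even.2 ho.add_one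
    simp [ex, ho, hn, this]; omega
  · simp [ex, ho, hn, (Nat.not_odd_iff_even.1 ho).add_one]; omega

variable (p) in
/-- In an acyclic complex with an action of `F`, a chain `c (n + 1)` whose boundary is
`T ^ ex p n (c n)` can be chosen successively, since the boundary of `T ^ ex p n (c n)` is
`T ^ p (c (n - 1)) = 0`. -/
lemma exists_ladder (ρ : ℕ) {X : Finset (F × V) → Prop}
    (hX : ∀ (g : F) A, X A → X (A.image (sh g)))
    (h0 : X ∅) (hA : Acy F ρ X) (w g : ι → F) (hw : ∑ i, w i = 0) :
    ∃ c : ℕ → Ch F (F × V), (∀ n ≤ ρ, c n ∈ Sp F (lists X n)) ∧ c 0 = single [] 1 ∧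
      ∀ n < ρ, bd (c (n + 1)) = (tCh w g ^ ex p n) (c n) := by
  have hinv : ∀ n, ∀ l ∈ lists X n, ∀ g : F, l.map (sh g) ∈ lists X n := fun n l hl g =>
    ⟨by rw [toFinset_map']; exact hX g _ hl.1, by rw [List.length_map]; exact hl.2⟩
  have key : ∀ N ≤ ρ, ∃ c : ℕ → Ch F (F × V), (∀ n ≤ N, c n ∈ Sp F (lists X n)) ∧
      c 0 = single [] 1 ∧ (∀ n < N, bd (c (n + 1)) = (tCh w g ^ ex p n) (c n)) ∧
      bd ((tCh w g ^ ex p N) (c N)) = 0 := by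
    intro N
    induction N with
    | zero =>
      refine fun _ => ⟨fun _ => single [] 1,
        fun n hn => single_mem_sp (show _ ∈ lists X n from ⟨?_, ?_⟩) _, rfl,
        fun n hn => absurd hn (by omega), ?_⟩
      · simpa using h0
      · simp; omega
      · simp [ex, bdL]
    | succ N ih =>
      intro hN
      obtain ⟨c, hc, hc0, hcb, hcz⟩ := ih (by omega)
      obtain ⟨z, hz, hbz⟩ := hA N (by omega) _
        (tCh_pow_mem (hinv N) w g (ex p N) (hc N le_rfl)) hcz
      refine ⟨Function.update c (N + 1) z, fun n hn => ?_, ?_, fun n hn => ?_, ?_⟩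
      · rcases eq_or_ne n (N + 1) with rfl | h
        · simpa using hz
        · rw [Function.update_of_ne h]
          exact hc n (by omega)
      · rw [Function.update_of_ne (by omega)]
        exact hc0
      · rw [Function.update_of_ne (a := n) (by omega)]
        rcases eq_or_ne n N with rfl | h
        · simpa using hbz
        · rw [Function.update_of_ne (by omega)]
          exact hcb n (by omega)
      · rw [Function.update_self, bd_tCh_pow, hbz]
        rcases eq_or_ne N 0 with rfl | h
        · have h1 : ex p (0 + 1) = (p - 2) + 1 := by
            have := hp.out.two_le
            simp [ex]; omega
          have h2 : tCh w g (single [] 1 : Ch F (F × V)) = 0 := by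
            have h3 := map_sum (Finsupp.singleAddHom ([] : List (F × V))) w Finset.univ
            rw [hw, map_zero] at h3
            simpa [tCh] using h3.symm
          rw [h1, pow_succ, Module.End.mul_apply, hc0]
          simp [ex, h2]
        · rw [← Module.End.mul_apply, ← pow_add, ex_add hp.out.two_le N h, tCh_pow p w g hw]
          rfl
  obtain ⟨c, hc, hc0, hcb, -⟩ := key ρ le_rfl
  exact ⟨c, hc, hc0, hcb⟩

end ladder

/-! ### Iterated barycentric subdivision of ordered chains -/

section subdivision

variable {K : Type*} [Field K] {E : Type*} [NormedAddCommGroup E] [NormedSpace ℝ E]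

/-- The barycenter of a list of points. -/
def bary (l : List E) : E := (l.length : ℝ)⁻¹ • l.sum

/-- Barycentric subdivision of lists of length `n`: cone the subdivided boundary from the
barycenter. -/
def Sd : ℕ → Module.End K (Ch K E)
  | 0 => LinearMap.id
  | n + 1 => Finsupp.linearCombination K fun l => cone (bary l) (Sd n (bdL l))

lemma Sd_succ_single (n : ℕ) (l : List E) :
    Sd (n + 1) (single l (1 : K)) = cone (bary l) (Sd n (bdL l)) := by
  simp [Sd]

lemma bdL_mem_length (n : ℕ) (l : List E) (hl : l.length = n + 1) :
    (bdL l : Ch K E) ∈ Sp K {l | l.length = n} :=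
  Finsupp.supported_mono (fun _ h => by
    have := h.2
    simp only [Set.mem_ofPred_eq]
    omega) (bdL_mem l)

/-- Subdivision is a chain map. -/
lemma bd_Sd (n : ℕ) : ∀ {z : Ch K E}, z ∈ Sp K {l | l.length = n + 1} →
    bd (Sd (n + 1) z) = Sd n (bd z) := by
  induction n with
  | zero =>
    intro z hz
    refine sp_eq (bd ∘ₗ Sd 1) (Sd 0 ∘ₗ bd) (fun l hl => ?_) hz
    obtain ⟨a, rfl⟩ := List.length_eq_one_iff.1 hl
    simp [Sd, bdL]
  | succ n ih =>
    intro z hz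
    refine sp_eq (bd ∘ₗ Sd (n + 2)) (Sd (n + 1) ∘ₗ bd) (fun l hl => ?_) hz
    rw [LinearMap.comp_apply, LinearMap.comp_apply, Sd_succ_single, bd_cone,
      ih (bdL_mem_length (n + 1) l hl), bd_bdL, bd_single]
    simp

lemma bary_map {E' : Type*} [NormedAddCommGroup E'] [NormedSpace ℝ E'] (φ : E →ₗ[ℝ] E')
    (l : List E) : φ (bary l) = bary (l.map φ) := by
  simp [bary, map_list_sum]

lemma mp_Sd {E' : Type*} [NormedAddCommGroup E'] [NormedSpace ℝ E'] (φ : E →ₗ[ℝ] E') (n : ℕ)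
    (z : Ch K E) : mp φ (Sd n z) = Sd n (mp φ z) := by
  induction n generalizing z with
  | zero => rfl
  | succ n ih =>
    have : mp φ ∘ₗ Sd (n + 1) = Sd (n + 1) ∘ₗ (mp φ : Ch K E →ₗ[K] Ch K E') := by
      ext l : 1
      ext1
      simp only [LinearMap.comp_apply, Finsupp.lsingle_apply, mp_single, Sd_succ_single, mp_cone,
        bary_map, ih, mp_bdL]
    exact LinearMap.congr_fun this z

/-- Lists of `n` points of `C` with pairwise distances at most `D`. -/
def fine (n : ℕ) (C : Set E) (D : ℝ) : Set (List E) :=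
  {l | l.length = n ∧ (∀ x ∈ l, x ∈ C) ∧ ∀ x ∈ l, ∀ y ∈ l, dist x y ≤ D}

lemma bary_mem {C : Set E} (hC : Convex ℝ C) {l : List E} (hl : l ≠ []) (h : ∀ x ∈ l, x ∈ C) :
    bary l ∈ C := by
  have hn : (l.length : ℝ) ≠ 0 := by simpa using hl
  have h1 := hC.sum_mem (t := Finset.univ) (w := fun _ : Fin l.length => (l.length : ℝ)⁻¹)
    (z := fun i => l[(i : ℕ)]) (fun i _ => by positivity) (by simp [hn]) (fun i _ => h _ (by simp))
  rwa [← Finset.smul_sum, Fin.sum_univ_getElem] at h1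

lemma norm_sum_sub {x : E} {D : ℝ} : ∀ l : List E, (∀ y ∈ l, dist y x ≤ D) →
    ‖l.sum - (l.length : ℝ) • x‖ ≤ l.length * D := by
  intro l
  induction l with
  | nil => simp
  | cons a l ih =>
    intro h
    have h1 : (a :: l).sum - ((a :: l).length : ℝ) • x =
        (a - x) + (l.sum - (l.length : ℝ) • x) := by
      simp only [List.sum_cons, List.length_cons]
      push_cast
      module
    rw [h1]
    refine (norm_add_le _ _).trans ?_
    have h2 := h a (by simp)
    rw [dist_eq_norm] at h2
    have h3 := ih fun y hy => h y (by simp [hy])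
    simp only [List.length_cons]
    push_cast
    linarith

lemma dist_bary {N : ℕ} {l : List E} {D : ℝ} (hD : 0 ≤ D) (hl : l.length ≤ N + 1)
    (h : ∀ x ∈ l, ∀ y ∈ l, dist x y ≤ D) {x : E} (hx : x ∈ l) :
    dist x (bary l) ≤ N / (N + 1) * D := by
  classical
  have hp := List.perm_cons_erase hx
  set l' := l.erase x
  have hlen : l.length = l'.length + 1 := by simpa using hp.length_eq
  have hsum : l.sum = x + l'.sum := by simpa using hp.sum_eq
  have h1 := norm_sum_sub (x := x) (D := D) l' fun y hy => h y (List.mem_of_mem_erase hy) x hx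
  have hpos : (0 : ℝ) < (l'.length : ℝ) + 1 := by positivity
  have h2 : bary l - x = ((l'.length : ℝ) + 1)⁻¹ • (l'.sum - (l'.length : ℝ) • x) := by
    rw [eq_inv_smul_iff₀ hpos.ne', smul_sub, bary, hlen, hsum]
    push_cast
    rw [smul_inv_smul₀ hpos.ne']
    module
  rw [dist_comm, dist_eq_norm, h2, norm_smul, norm_inv, Real.norm_of_nonneg hpos.le]
  calc ((l'.length : ℝ) + 1)⁻¹ * ‖l'.sum - (l'.length : ℝ) • x‖
      ≤ ((l'.length : ℝ) + 1)⁻¹ * (l'.length * D) := by gcongr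
    _ = l'.length / (l'.length + 1) * D := by ring
    _ ≤ N / (N + 1) * D := by
      refine mul_le_mul_of_nonneg_right ?_ hD
      have : (l'.length : ℝ) ≤ N := by exact_mod_cast (by omega : l'.length ≤ N)
      rw [div_le_div_iff₀ hpos (by positivity)]
      linarith

/-- Subdivision shrinks the diameter of simplices with at most `N + 1` vertices by the factor
`N / (N + 1)`. -/
lemma Sd_mem {N : ℕ} {D : ℝ} (hD : 0 ≤ D) (n : ℕ) (hn : n ≤ N + 1) :
    ∀ {C : Set E}, Convex ℝ C → ∀ {z : Ch K E}, z ∈ Sp K (fine n C D) →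
      Sd n z ∈ Sp K (fine n C (N / (N + 1) * D)) := by
  induction n with
  | zero =>
    intro C hC z hz
    refine Finsupp.supported_mono (fun l hl => ?_) hz
    obtain rfl := List.length_eq_zero_iff.1 hl.1
    exact ⟨rfl, by simp, by simp⟩
  | succ n ih =>
    intro C hC z hz
    refine sp_map (Sd (n + 1)) (fun l hl => ?_) hz
    obtain ⟨hlen, hlC, hlD⟩ := hl
    have hb : bary l ∈ C := bary_mem hC (by rintro rfl; simp at hlen) hlC
    have hκ : 0 ≤ (N : ℝ) / (N + 1) * D := by positivity
    rw [Sd_succ_single]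
    have h1 := ih (by omega) (hC.inter (convex_closedBall (bary l) (N / (N + 1) * D)))
      (z := (bdL l : Ch K E)) (Finsupp.supported_mono (fun l' hl' => ?_) (bdL_mem l))
    · refine cone_mem (fun l' hl' => ?_) h1
      obtain ⟨h2, h3, h4⟩ := hl'
      refine ⟨by simp [h2], ?_, ?_⟩
      · simp only [List.mem_cons, forall_eq_or_imp]
        exact ⟨hb, fun x hx => (h3 x hx).1⟩
      · simp only [List.mem_cons, forall_eq_or_imp, dist_self]
        exact ⟨⟨hκ, fun x hx => by rw [dist_comm]; exact (h3 x hx).2⟩,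
          fun x hx => ⟨(h3 x hx).2, h4 x hx⟩⟩
    · have h5 := hl'.2
      refine ⟨by omega, fun x hx => ⟨hlC x (hl'.1.subset hx), ?_⟩, fun x hx y hy =>
        hlD x (hl'.1.subset hx) y (hl'.1.subset hy)⟩
      exact dist_bary hD (by omega) hlD (hl'.1.subset hx)

lemma Sd_pow_mem {N : ℕ} {D : ℝ} (hD : 0 ≤ D) (n : ℕ) (hn : n ≤ N + 1) (j : ℕ)
    {C : Set E} (hC : Convex ℝ C) {z : Ch K E} (hz : z ∈ Sp K (fine n C D)) :
      (Sd n ^ j) z ∈ Sp K (fine n C ((N / (N + 1)) ^ j * D)) := by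
  induction j with
  | zero => simpa using hz
  | succ j ih =>
    rw [pow_succ' (Sd n), Module.End.mul_apply, pow_succ' (_ / _ : ℝ), mul_assoc]
    exact Sd_mem (by positivity) n hn hC ih

lemma Sd_mem_length (n : ℕ) : ∀ {z : Ch K E}, z ∈ Sp K {l : List E | l.length = n} →
    Sd n z ∈ Sp K {l : List E | l.length = n} := by
  induction n with
  | zero => exact fun hz => hz
  | succ n ih =>
    intro z hz
    refine sp_map (Sd (n + 1)) (fun l hl => ?_) hz
    rw [Sd_succ_single]
    refine cone_mem (fun l' hl' => ?_) (ih (bdL_mem_length n l hl))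
    simpa using hl'

lemma bd_Sd_pow (n j : ℕ) {z : Ch K E} (hz : z ∈ Sp K {l : List E | l.length = n + 1}) :
    bd ((Sd (n + 1) ^ j) z) = (Sd n ^ j) (bd z) := by
  have h : (Sd (n + 1) ^ j) z ∈ Sp K {l : List E | l.length = n + 1} ∧
      bd ((Sd (n + 1) ^ j) z) = (Sd n ^ j) (bd z) := by
    induction j with
    | zero => exact ⟨hz, rfl⟩
    | succ j ih =>
      rw [pow_succ', pow_succ', Module.End.mul_apply, Module.End.mul_apply, bd_Sd n ih.1, ih.2]
      exact ⟨Sd_mem_length _ ih.1, rfl⟩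
  exact h.2

lemma mp_Sd_pow {E' : Type*} [NormedAddCommGroup E'] [NormedSpace ℝ E'] (φ : E →ₗ[ℝ] E')
    (n j : ℕ) (z : Ch K E) : mp φ ((Sd n ^ j) z) = (Sd n ^ j) (mp φ z) := by
  induction j with
  | zero => rfl
  | succ j ih => rw [pow_succ', pow_succ', Module.End.mul_apply, Module.End.mul_apply, mp_Sd, ih]

end subdivision

/-! ### From acyclicity to coincidences -/

section coincidence

variable {p : ℕ} [hp : Fact p.Prime] {F : Type*} [Field F] [Algebra (ZMod p) F] [DecidableEq F]
  {V : Type*} [DecidableEq V] {Y : Type*} [DecidableEq Y]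

/-- An equivariant choice function for an equivariant relation on a free invariant set. -/
lemma exists_label [Nonempty (F × Y)] {Ω : Type*} (act : F → Ω → Ω) (h0 : ∀ x, act 0 x = x)
    (hadd : ∀ a b x, act (a + b) x = act a (act b x)) (P : Set Ω)
    (hP : ∀ g x, x ∈ P → act g x ∈ P) (hfree : ∀ g, ∀ x ∈ P, act g x = x → g = 0)
    (R : Ω → F × Y → Prop) (hR : ∀ g x y, R x y → R (act g x) (sh g y))
    (hex : ∀ x ∈ P, ∃ y, R x y) :
    ∃ lam : Ω → F × Y, ∀ x ∈ P, R x (lam x) ∧ ∀ g, lam (act g x) = sh g (lam x) := by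
  obtain ⟨rep, γ, hγ, hrep⟩ := exists_rep act h0 hadd
  have hrepP : ∀ x ∈ P, rep x ∈ P := fun x hx => by
    have := hP (-γ x) x hx
    nth_rewrite 2 [← hγ x] at this
    rwa [← hadd, neg_add_cancel, h0] at this
  obtain ⟨y₀⟩ := ‹Nonempty (F × Y)›
  classical
  let l0 : Ω → F × Y := fun x => if h : ∃ y, R x y then h.choose else y₀
  have hl0 : ∀ x ∈ P, R x (l0 x) := fun x hx => by
    simp only [l0, dif_pos (hex x hx)]
    exact (hex x hx).choose_spec
  refine ⟨fun x => sh (γ x) (l0 (rep x)), fun x hx => ⟨?_, fun g => ?_⟩⟩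
  · have := hR (γ x) _ _ (hl0 _ (hrepP x hx))
    rwa [hγ] at this
  · have h1 : γ (act g x) = g + γ x := by
      have h2 : act (γ (act g x) - (g + γ x)) (act g x) = act g x := by
        have h3 := hγ (act g x)
        rw [hrep] at h3
        have h4 : act g x = act (g + γ x) (rep x) := by rw [hadd, hγ]
        calc act (γ (act g x) - (g + γ x)) (act g x)
            = act (γ (act g x) - (g + γ x)) (act (g + γ x) (rep x)) := congrArg _ h4
          _ = act g x := by rw [← hadd, sub_add_cancel, h3]
      exact sub_eq_zero.1 (hfree _ _ (hP g x hx) h2)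
    simp only [hrep, h1, sh_add, Function.comp]

variable [Fintype F] [Fintype V] [Fintype Y]

/-- The translation action on coordinates. -/
def actE (g : F) : (F × V → ℝ) →ₗ[ℝ] (F × V → ℝ) := LinearMap.funLeft ℝ ℝ (sh (-g))

lemma actE_apply (g : F) (y : F × V → ℝ) (i : F) (v : V) : actE g y (i, v) = y (i - g, v) := by
  simp [actE, LinearMap.funLeft_apply, sh, sub_eq_neg_add]

lemma actE_single (g : F) (x : F × V) :
    actE g (Pi.single x (1 : ℝ)) = Pi.single (sh g x) 1 := by
  funext ⟨i, v⟩
  rw [actE_apply]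
  have : ((i - g, v) = x) ↔ ((i, v) = sh g x) := by
    rcases x with ⟨a, b⟩
    simp [sh, sub_eq_iff_eq_add']
  simp only [Pi.single_apply, this]

/-- The closed geometric simplex with vertex set `A`. -/
def geo (A : Finset (F × V)) : Set (F × V → ℝ) :=
  {y | (∀ x, 0 ≤ y x) ∧ ∑ x, y x = 1 ∧ ∀ x, x ∉ A → y x = 0}

lemma geo_convex (A : Finset (F × V)) : Convex ℝ (geo A) := by
  intro x hx y hy a b ha hb hab
  refine ⟨fun z => ?_, ?_, fun z hz => ?_⟩
  · have := hx.1 z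
    have := hy.1 z
    simp only [Pi.add_apply, Pi.smul_apply, smul_eq_mul]
    positivity
  · simp only [Pi.add_apply, Pi.smul_apply, smul_eq_mul, Finset.sum_add_distrib,
      ← Finset.mul_sum, hx.2.1, hy.2.1]
    linarith
  · simp [hx.2.2 z hz, hy.2.2 z hz]

lemma geo_compact (A : Finset (F × V)) : IsCompact (geo A) := by
  have h1 : geo A = stdSimplex ℝ (F × V) ∩ {y | ∀ x, x ∉ A → y x = 0} := by
    ext y
    simp [geo, stdSimplex, and_assoc]
  rw [h1]
  refine (isCompact_stdSimplex ℝ (F × V)).inter_right ?_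
  simp only [Set.ofPred_forall]
  exact isClosed_iInter fun x => isClosed_iInter fun _ =>
    isClosed_eq (continuous_apply x) continuous_const

lemma geo_act {A : Finset (F × V)} {y : F × V → ℝ} (hy : y ∈ geo A) (g : F) :
    actE g y ∈ geo (A.image (sh g)) := by
  refine ⟨fun ⟨i, v⟩ => ?_, ?_, fun ⟨i, v⟩ hx => ?_⟩
  · rw [actE_apply]; exact hy.1 _
  · rw [← hy.2.1]
    refine Fintype.sum_equiv ((Equiv.subRight g).prodCongr (Equiv.refl V)) _ _ fun ⟨i, v⟩ => ?_
    rw [actE_apply]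
    rfl
  · rw [actE_apply]
    rw [mem_image_sh] at hx
    exact hy.2.2 _ hx

variable (p) in
include hp in
/-- An equivariant family of real functions on a sufficiently acyclic free complex has a point
where every function of the family agrees with its translates. Otherwise, on a fine subdivision,
labelling each point by a coordinate and a row in which this coordinate is maximal would give an
equivariant map to the complex of sets without full fibres, contrary to `obstruction`. -/
theorem coincidence [Nonempty Y] (ρ : ℕ) (hρ : 1 ≤ ρ)
    (hcard : Fintype.card F * Fintype.card Y < ρ + Fintype.card Y)
    {X : Finset (F × V) → Prop}
    (hX : ∀ (g : F) A, X A → X (A.image (sh g))) (h0 : X ∅)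
    (hcol : ∀ A, X A → ∀ i j v, (i, v) ∈ A → (j, v) ∈ A → i = j) (hA : Acy F ρ X)
    (ψ : (F × V → ℝ) → F × Y → ℝ) (hψ : Continuous ψ)
    (hψe : ∀ y g i l, ψ (actE g y) (i, l) = ψ y (i - g, l)) :
    ∃ A y, X A ∧ y ∈ geo A ∧ ∀ l i j, ψ y (i, l) = ψ y (j, l) := by
  by_contra! hcon
  let P : Set (F × V → ℝ) := ⋃ A ∈ {A | X A}, geo A
  have hPmem : ∀ y, y ∈ P ↔ ∃ A, X A ∧ y ∈ geo A := fun y => by simp [P]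
  have hPc : IsCompact P := (Set.toFinite _).isCompact_biUnion fun A _ => geo_compact A
  have hPact : ∀ (g : F) y, y ∈ P → actE g y ∈ P := fun g y hy => by
    obtain ⟨A, hXA, hyA⟩ := (hPmem y).1 hy
    exact (hPmem _).2 ⟨_, hX g A hXA, geo_act hyA g⟩
  -- the spread of some coordinate is bounded below on the compact space
  obtain ⟨ε, hε, hspread⟩ : ∃ ε > 0, ∀ y ∈ P, ∃ l i j, ψ y (j, l) + ε < ψ y (i, l) := by
    let U : ℕ → Set (F × V → ℝ) := fun n =>
      ⋃ l, ⋃ i, ⋃ j, {y | ψ y (j, l) + 1 / ((n : ℝ) + 1) < ψ y (i, l)}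
    have hUmem : ∀ n y, y ∈ U n ↔ ∃ l i j, ψ y (j, l) + 1 / ((n : ℝ) + 1) < ψ y (i, l) :=
      fun n y => by simp [U]
    have hUo : ∀ n, IsOpen (U n) := fun n =>
      isOpen_iUnion fun l => isOpen_iUnion fun i => isOpen_iUnion fun j =>
        isOpen_lt (((continuous_apply _).comp hψ).add continuous_const)
          ((continuous_apply _).comp hψ)
    have hUcov : P ⊆ ⋃ n, U n := by
      intro y hy
      obtain ⟨A, hXA, hyA⟩ := (hPmem y).1 hy
      obtain ⟨l, i, j, hij⟩ := hcon A y hXA hyA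
      rw [Set.mem_iUnion]
      rcases lt_or_gt_of_ne hij with h | h
      · obtain ⟨n, hn⟩ := exists_nat_one_div_lt (sub_pos.2 h)
        exact ⟨n, (hUmem n y).2 ⟨l, j, i, by linarith⟩⟩
      · obtain ⟨n, hn⟩ := exists_nat_one_div_lt (sub_pos.2 h)
        exact ⟨n, (hUmem n y).2 ⟨l, i, j, by linarith⟩⟩
    have hUdir : Directed (· ⊆ ·) U := by
      refine directed_of_isDirected_le fun a b hab y hy => ?_
      obtain ⟨l, i, j, h⟩ := (hUmem a y).1 hy
      refine (hUmem b y).2 ⟨l, i, j, lt_of_le_of_lt ?_ h⟩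
      have := Nat.one_div_le_one_div (α := ℝ) hab
      linarith
    obtain ⟨n, hn⟩ := hPc.elim_directed_cover U hUo hUcov hUdir
    exact ⟨1 / ((n : ℝ) + 1), by positivity, fun y hy => (hUmem n y).1 (hn hy)⟩
  obtain ⟨δ, hδ, hunif⟩ := Metric.uniformContinuousOn_iff.1
    (hPc.uniformContinuousOn_of_continuous hψ.continuousOn) (ε / 2) (by positivity)
  -- label a point by a row whose value of some coordinate is maximal, with definite spread
  let R : (F × V → ℝ) → F × Y → Prop := fun y x =>
    (∀ i, ψ y (i, x.2) ≤ ψ y x) ∧ ∃ i, ψ y (i, x.2) + ε < ψ y x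
  have hR : ∀ g y x, R y x → R (actE g y) (sh g x) := by
    rintro g y ⟨a, l⟩ ⟨h1, i, h2⟩
    refine ⟨fun j => ?_, i + g, ?_⟩
    · simpa [sh, hψe] using h1 (j - g)
    · simpa [sh, hψe] using h2
  have hRex : ∀ y ∈ P, ∃ x, R y x := by
    intro y hy
    obtain ⟨l, i, j, h⟩ := hspread y hy
    obtain ⟨a, -, ha⟩ := Finset.exists_max_image Finset.univ (fun a => ψ y (a, l))
      ⟨i, Finset.mem_univ i⟩
    exact ⟨(a, l), fun b => ha b (Finset.mem_univ b), j, h.trans_le (ha i (Finset.mem_univ i))⟩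
  have hfree : ∀ (g : F), ∀ y ∈ P, actE g y = y → g = 0 := by
    intro g y hy hgy
    obtain ⟨A, hXA, hyA⟩ := (hPmem y).1 hy
    obtain ⟨⟨i, v⟩, hx⟩ : ∃ x, y x ≠ 0 := by
      by_contra! hall
      have := hyA.2.1
      simp [hall] at this
    have h1 : (i, v) ∈ A := by_contra fun h => hx (hyA.2.2 _ h)
    have h2 : (i + g, v) ∈ A := by
      by_contra h
      have h3 := hyA.2.2 _ h
      rw [← hgy, actE_apply, add_sub_cancel_right] at h3
      exact hx h3
    simpa using hcol A hXA _ _ v h2 h1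
  have hz : ∀ y : F × V → ℝ, actE 0 y = y := fun y => by
    funext ⟨i, v⟩; simp [actE_apply]
  have hadd : ∀ (a b : F) (y : F × V → ℝ), actE (a + b) y = actE a (actE b y) := fun a b y => by
    funext ⟨i, v⟩; simp [actE_apply, sub_sub]
  obtain ⟨lam, hlam⟩ := exists_label (fun g y => actE g y) hz hadd P hPact hfree R hR hRex
  -- subdivide a ladder of chains finely and push it forward along the labelling
  obtain ⟨n₀, w, g, hw, hω⟩ := exists_weights p F
  obtain ⟨c, hc, hc0, hcb⟩ := exists_ladder p ρ hX h0 hA w g hw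
  obtain ⟨J, hJ⟩ := exists_pow_lt_of_lt_one hδ
    (show (ρ : ℝ) / (ρ + 1) < 1 by rw [div_lt_one (by positivity)]; linarith)
  let pt : F × V → (F × V → ℝ) := fun x => Pi.single x 1
  let W : ℕ → Set (List (F × V → ℝ)) := fun n =>
    {l | l.length = n ∧ (∀ y ∈ l, y ∈ P) ∧ ∀ y ∈ l, ∀ y' ∈ l, dist y y' < δ}
  have hW : ∀ n ≤ ρ, ∀ z ∈ Sp F (lists X n), (Sd n ^ J) (mp pt z) ∈ Sp F (W n) := by
    intro n hn z hz
    refine sp_map ((Sd n ^ J) ∘ₗ mp pt) (fun l hl => ?_) hz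
    obtain ⟨hl1, hl2⟩ := hl
    rw [LinearMap.comp_apply, mp_single]
    have h1 : (single (l.map pt) 1 : Ch F (F × V → ℝ)) ∈ Sp F (fine n (geo l.toFinset) 1) := by
      refine single_mem_sp (show _ ∈ fine n (geo l.toFinset) 1 from ⟨?_, ?_, ?_⟩) _
      · simpa using hl2
      · intro y hy
        obtain ⟨x, hx, rfl⟩ := List.mem_map.1 hy
        refine ⟨fun x' => ?_, by simp [pt], fun x' hx' => ?_⟩
        · simp only [pt, Pi.single_apply]
          split_ifs <;> norm_num
        · simp only [pt]
          rw [Pi.single_eq_of_ne]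
          rintro rfl
          exact hx' (List.mem_toFinset.2 hx)
      · intro y hy y' hy'
        obtain ⟨x, hx, rfl⟩ := List.mem_map.1 hy
        obtain ⟨x', hx', rfl⟩ := List.mem_map.1 hy'
        rw [dist_pi_le_iff zero_le_one]
        intro b
        simp only [pt, Pi.single_apply, Real.dist_eq]
        split_ifs <;> norm_num
    refine Finsupp.supported_mono (fun l' hl' => ?_)
      (Sd_pow_mem zero_le_one n (hn.trans (Nat.le_succ ρ)) J (geo_convex _) h1)
    obtain ⟨h2, h3, h4⟩ := hl'
    refine ⟨h2, fun y hy => (hPmem y).2 ⟨_, hl1, h3 y hy⟩, fun y hy y' hy' => ?_⟩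
    have := h4 y hy y' hy'
    linarith
  let Ψ : (n : ℕ) → Ch F (F × V) →ₗ[F] Ch F (F × Y) := fun n => mp lam ∘ₗ (Sd n ^ J) ∘ₗ mp pt
  have hΨsh : ∀ n ≤ ρ, ∀ z ∈ Sp F (lists X n), ∀ a : F,
      Ψ n (mp (sh a) z) = mp (sh a) (Ψ n z) := by
    intro n hn z hz a
    have h1 : mp pt (mp (sh a) z) = mp (actE a) (mp pt z) := by
      rw [mp_mp, mp_mp]
      congr 1
      congr 1
      funext x
      exact (actE_single a x).symm
    simp only [Ψ, LinearMap.comp_apply]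
    rw [h1, ← mp_Sd_pow, mp_mp, mp_mp]
    refine sp_eq _ _ (fun l hl => ?_) (hW n hn z hz)
    simp only [mp_single]
    congr 1
    refine List.map_congr_left fun y hy => ?_
    exact (hlam y (hl.2.1 y hy)).2 a
  have hinv : ∀ n, ∀ l ∈ lists X n, ∀ g : F, l.map (sh g) ∈ lists X n := fun n l hl g =>
    ⟨by rw [toFinset_map']; exact hX g _ hl.1, by rw [List.length_map]; exact hl.2⟩
  have hΨT : ∀ n ≤ ρ, ∀ j, ∀ z ∈ Sp F (lists X n),
      Ψ n ((tCh w g ^ j) z) = (tCh w g ^ j) (Ψ n z) := by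
    intro n hn j
    induction j with
    | zero => simp
    | succ j ih =>
      intro z hz
      rw [pow_succ', Module.End.mul_apply, pow_succ', Module.End.mul_apply, ← ih z hz]
      have h1 := tCh_pow_mem (hinv n) w g j hz
      generalize (tCh w g ^ j) z = z' at h1 ⊢
      simp only [tCh, LinearMap.sum_apply, LinearMap.smul_apply, map_sum, map_smul]
      refine Finset.sum_congr rfl fun i _ => ?_
      rw [hΨsh n hn _ h1]
  refine obstruction ρ hρ hcard w g hw hω (fun n => Ψ n (c n)) (fun n hn => ?_) ?_ fun n hn => ?_
  · refine mp_mem (fun l hl => ?_) (hW n hn _ (hc n hn))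
    obtain ⟨h1, h2, h3⟩ := hl
    refine ⟨fun y => ?_, by simpa using h1⟩
    -- a fully labelled fibre contradicts the choice of the mesh
    by_contra! hfull
    have hlab : ∀ i : F, ∃ q ∈ l, lam q = (i, y) := fun i => by
      simpa using hfull i
    obtain ⟨q₀, hq₀, hl₀⟩ := hlab 0
    have h4 := (hlam q₀ (h2 q₀ hq₀)).1
    rw [hl₀] at h4
    obtain ⟨-, i₁, h5⟩ := h4
    obtain ⟨q₁, hq₁, hl₁⟩ := hlab i₁
    have h6 := (hlam q₁ (h2 q₁ hq₁)).1
    rw [hl₁] at h6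
    have h7 := h6.1 0
    have h8 := hunif q₀ (h2 q₀ hq₀) q₁ (h2 q₁ hq₁) (h3 q₀ hq₀ q₁ hq₁)
    have h9 := (dist_le_pi_dist (ψ q₀) (ψ q₁) (0, y)).trans_lt h8
    have h10 := (dist_le_pi_dist (ψ q₀) (ψ q₁) (i₁, y)).trans_lt h8
    rw [Real.dist_eq, abs_lt] at h9 h10
    simp only at h5 h7
    linarith [h9.1, h9.2, h10.1, h10.2]
  · have : ∀ j, ((Sd 0 ^ j) (single [] 1) : Ch F (F × V → ℝ)) = single [] 1 := by
      intro j
      induction j with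
      | zero => rfl
      | succ j ih => rw [pow_succ', Module.End.mul_apply, ih]; rfl
    simp [Ψ, hc0, this]
  · rw [← hΨT n hn.le _ _ (hc n hn.le), ← hcb n hn]
    simp only [Ψ, LinearMap.comp_apply]
    rw [← mp_bd, bd_Sd_pow n J, mp_bd]
    refine mp_mem (fun l hl => ?_) (hc (n + 1) (by omega))
    simpa using hl.2

end coincidence

/-! ### The matroid bounding the number of full rows -/

section fullrows

variable {R J : Type*} [DecidableEq R] [DecidableEq J] [Fintype R] [Fintype J]

/-- The colors that occur in row `i`. -/
def row (I : Finset (R × J)) (i : R) : Finset J := Finset.univ.filter fun j => (i, j) ∈ I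

/-- The rows in which every color occurs. -/
def full (I : Finset (R × J)) : Finset R := Finset.univ.filter fun i => row I i = Finset.univ

lemma mem_row {I : Finset (R × J)} {i : R} {j : J} : j ∈ row I i ↔ (i, j) ∈ I := by simp [row]

lemma mem_full {I : Finset (R × J)} {i : R} : i ∈ full I ↔ row I i = Finset.univ := by simp [full]

lemma row_mono {I I' : Finset (R × J)} (h : I ⊆ I') (i : R) : row I i ⊆ row I' i :=
  fun _ hj => mem_row.2 (h (mem_row.1 hj))

lemma full_mono {I I' : Finset (R × J)} (h : I ⊆ I') : full I ⊆ full I' := fun i hi => by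
  rw [mem_full] at *
  exact Finset.univ_subset_iff.1 (hi ▸ row_mono h i)

lemma row_insert (e : R × J) (I : Finset (R × J)) (i : R) :
    row (insert e I) i = if i = e.1 then insert e.2 (row I i) else row I i := by
  obtain ⟨a, b⟩ := e
  ext j
  split_ifs with h <;> simp [mem_row, h]

lemma sum_row (I : Finset (R × J)) : ∑ i, (row I i).card = I.card := by
  rw [Finset.card_eq_sum_card_fiberwise (f := Prod.fst) (t := Finset.univ) (by simp)]
  refine Finset.sum_congr rfl fun i _ => ?_
  refine Finset.card_bij (fun j _ => (i, j)) ?_ (by simp) ?_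
  · simp [mem_row]
  · rintro ⟨a, b⟩ h
    simp only [Finset.mem_filter] at h
    obtain ⟨h1, rfl⟩ := h
    exact ⟨b, mem_row.2 h1, rfl⟩

/-- The sets with at most `s` full rows form a matroid: if an independent set with exactly `s` full
rows cannot be enlarged by elements of another one, then the latter is not larger, as one sees by
comparing row by row the number of elements, discounting one element of every full row. -/
lemma indep_full [Nonempty J] (s : ℕ) : Indep fun I : Finset (R × J) => (full I).card ≤ s where
  empty := by
    have : full (∅ : Finset (R × J)) = ∅ := by
      ext i
      obtain ⟨j⟩ := ‹Nonempty J›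
      simp only [mem_full, Finset.notMem_empty, iff_false]
      intro h
      have := Finset.mem_univ j
      rw [← h, mem_row] at this
      simp at this
    simp [this]
  mono A B h hB := (Finset.card_le_card (full_mono h)).trans hB
  exch I I' hI hI' hlt := by
    by_contra! hcon
    have hsub : ∀ e : R × J, full (insert e I) ⊆ insert e.1 (full I) := fun e i hi => by
      rw [mem_full, row_insert] at hi
      rw [Finset.mem_insert, mem_full]
      split_ifs at hi with h
      · exact Or.inl h
      · exact Or.inr hi
    have hs : s ≤ (full I).card := by
      obtain ⟨e, he, he'⟩ : ∃ e ∈ I', e ∉ I := by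
        by_contra! h
        exact absurd (Finset.card_le_card (s := I') (t := I) h) (by omega)
      have h1 := hcon e he he'
      have h2 := (Finset.card_le_card (hsub e)).trans (Finset.card_insert_le _ _)
      omega
    have hrow : ∀ i, (row I' i).card + (if i ∈ full I then 1 else 0) ≤
        (row I i).card + (if i ∈ full I' then 1 else 0) := fun i => by
      have hlt' : i ∉ full I' → (row I' i).card < Fintype.card J := fun h => by
        rw [mem_full] at h
        exact (Finset.card_lt_iff_ne_univ _).2 h
      have hle' : (row I' i).card ≤ Fintype.card J := Finset.card_le_univ _
      by_cases hi : i ∈ full I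
      · have h1 : (row I i).card = Fintype.card J := by rw [mem_full.1 hi, Finset.card_univ]
        by_cases hi' : i ∈ full I'
        · simp only [hi, hi', if_true]; omega
        · have := hlt' hi'
          simp only [hi, hi', if_true, if_false]; omega
      · by_cases hss : row I' i ⊆ row I i
        · have := Finset.card_le_card hss
          simp only [hi, if_false]; omega
        · obtain ⟨j, hj, hj'⟩ := Finset.not_subset.1 hss
          rw [mem_row] at hj hj'
          have h1 := hcon _ hj hj'
          have h2 : i ∈ full (insert (i, j) I) := by
            by_contra h
            have : full (insert (i, j) I) ⊆ full I := fun a ha => by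
              rcases Finset.mem_insert.1 (hsub _ ha) with rfl | h'
              · exact absurd ha h
              · exact h'
            have := Finset.card_le_card this
            omega
          rw [mem_full, row_insert, if_pos rfl] at h2
          have h3 : Fintype.card J ≤ (row I i).card + 1 := by
            rw [← Finset.card_univ, ← h2]
            exact Finset.card_insert_le _ _
          by_cases hi' : i ∈ full I'
          · simp only [hi, hi', if_true, if_false]; omega
          · have := hlt' hi'
            simp only [hi, hi', if_false]; omega
    have := Finset.sum_le_sum fun i (_ : i ∈ Finset.univ) => hrow i
    simp only [Finset.sum_add_distrib, sum_row, Finset.sum_boole, Finset.filter_mem_eq_inter,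
      Finset.univ_inter, Nat.cast_id] at this
    omega

/-- A set with exactly `s` full rows in which every other row misses exactly one element. -/
lemma full_rank {s k : ℕ} (hs : s ≤ Fintype.card R) (hk : Fintype.card J = k + 1) :
    ∃ I : Finset (R × J), (full I).card ≤ s ∧ I.card = Fintype.card R * k + s := by
  obtain ⟨S, -, hS⟩ := Finset.exists_subset_card_eq (s := (Finset.univ : Finset R)) (n := s)
    (by simpa using hs)
  have : Nonempty J := Fintype.card_pos_iff.1 (by omega)
  obtain ⟨j₀⟩ := ‹Nonempty J›
  let I : Finset (R × J) := Finset.univ.filter fun x => x.1 ∈ S ∨ x.2 ≠ j₀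
  have hrow : ∀ i, row I i = if i ∈ S then Finset.univ else Finset.univ.erase j₀ := fun i => by
    ext j
    split_ifs with h <;> simp [mem_row, I, h]
  refine ⟨I, ?_, ?_⟩
  · rw [← hS]
    refine Finset.card_le_card fun i hi => ?_
    rw [mem_full, hrow] at hi
    by_contra h
    rw [if_neg h] at hi
    exact absurd (hi ▸ Finset.mem_univ j₀) (Finset.notMem_erase _ _)
  · have h1 : ∀ i, (row I i).card = k + if i ∈ S then 1 else 0 := fun i => by
      rw [hrow]
      split_ifs <;> simp [hk]
    rw [← sum_row, Finset.sum_congr rfl fun i _ => h1 i]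
    simp [Finset.sum_add_distrib, hS]

end fullrows

/-! ### Rainbow chessboards and the conclusion -/

section conclusion

variable {F : Type*} [Field F] [DecidableEq F] [Fintype F]

/-- Placements on the rows `F` whose pattern of (row, color) pairs has at most `s` full rows. -/
abbrev RB {V J : Type*} [Fintype V] [DecidableEq J] [Fintype J] (c : V → J) (s : ℕ) :
    Finset (F × V) → Prop :=
  Brd c (fun I : Finset (F × J) => (full I).card ≤ s) fun x => x.2 ∈ (Finset.univ : Finset V)

lemma RB.shift {V J : Type*} [Fintype V] [DecidableEq V] [DecidableEq J] [Fintype J] {c : V → J}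
    {s : ℕ} (g : F) (A : Finset (F × V)) (h : RB c s A) : RB c s (A.image (sh g)) := by
  obtain ⟨-, h2, h3, h4⟩ := h
  have himg : (A.image (sh g)).image (fun x => (x.1, c x.2)) =
      (A.image fun x => (x.1, c x.2)).image (sh g) := by
    rw [Finset.image_image, Finset.image_image]
    rfl
  refine ⟨fun x _ => Finset.mem_univ _, ?_, ?_, ?_⟩
  · show (full _).card ≤ s
    rw [himg]
    refine le_trans (Finset.card_le_card_of_injOn (fun i => i - g) ?_ ?_) h2
    · intro i hi
      have hi' := mem_full.1 (Finset.mem_coe.1 hi)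
      refine Finset.mem_coe.2 (mem_full.2 ?_)
      rw [← hi']
      ext j
      rw [mem_row, mem_row, mem_image_sh]
    · exact (sub_left_injective).injOn
  · rintro ⟨i, v⟩ hx ⟨i', v'⟩ hy h h'
    rw [mem_image_sh] at hx hy
    simp only at h h'
    subst h
    have := h3 _ hx _ hy rfl h'
    simp_all
  · rintro ⟨i, v⟩ hx ⟨i', v'⟩ hy h
    rw [mem_image_sh] at hx hy
    simp only at h
    subst h
    have := h4 _ hx _ hy rfl
    simp_all

variable (F) in
/-- The theorem with the sets indexed by `F`, the bound on the sizes being that at most `s` of them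
have `k + 1` elements. The test map sends a point `y` with rows `yᵢ` to the numbers `∑ yᵢ` and
`f (r yᵢ)`, where `f` is extended continuously from the simplex; on a coincidence every row has the
sum `1 / r`, so `r yᵢ` lies in the simplex. -/
theorem tverberg_field (p : ℕ) [Fact p.Prime] [Algebra (ZMod p) F] (d k s m : ℕ)
    (hsr : s ≤ Fintype.card F)
    (hnum : Fintype.card F * k + s = (Fintype.card F - 1) * (d + 1) + 1)
    (c : Fin m → Fin (k + 1))
    (hc : ∀ j : Fin (k + 1), (Finset.univ.filter fun v => c v = j).card = 2 * Fintype.card F - 1)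
    (f : stdSimplex ℝ (Fin m) → EuclideanSpace ℝ (Fin d)) (hf : Continuous f) :
    ∃ Δ : F → Finset (Fin m),
      (∀ i j, i ≠ j → Disjoint (Δ i) (Δ j)) ∧
      (∀ i, IsRainbow c (Δ i)) ∧
      (Finset.univ.filter fun i => ¬ (Δ i).card ≤ k).card ≤ s ∧
      (⋂ i, f '' simplexFace (Δ i)).Nonempty := by
  classical
  have hr : 1 ≤ Fintype.card F := Fintype.card_pos
  have hD : Indep fun I : Finset (F × Fin (k + 1)) => (full I).card ≤ s := indep_full s
  have hA : Acy F (Fintype.card F * k + s) (RB (F := F) c s) := by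
    refine acy_brd _ _ Finset.univ _ hD (full_rank hsr (Fintype.card_fin _)) rfl fun j => ?_
    rw [hc]
    have : nl (fun I : Finset (F × Fin (k + 1)) => (full I).card ≤ s) j ≤ Fintype.card F := by
      rw [← Nat.card_eq_fintype_card]
      exact Set.ncard_le_card _
    omega
  -- a continuous extension of each coordinate of `f`
  have hext : ∀ l : Fin d, ∃ F' : C(Fin m → ℝ, ℝ), ∀ x : stdSimplex ℝ (Fin m), F' x = f x l := by
    intro l
    obtain ⟨F', hF'⟩ := ContinuousMap.exists_restrict_eq (Y := ℝ)
      (isClosed_stdSimplex ℝ (Fin m)) ⟨fun x => f x l, by fun_prop⟩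
    exact ⟨F', fun x => DFunLike.congr_fun hF' x⟩
  choose F' hF' using hext
  let r : ℝ := Fintype.card F
  let ψ : (F × Fin m → ℝ) → F × Option (Fin d) → ℝ := fun y x =>
    x.2.elim (∑ v, y (x.1, v)) fun l => F' l fun v => r * y (x.1, v)
  obtain ⟨A, y, hXA, ⟨hy0, hy1, hyA⟩, hco⟩ := coincidence p (Y := Option (Fin d))
    (Fintype.card F * k + s) (by omega)
    (by
      rw [hnum, Fintype.card_option, Fintype.card_fin]
      obtain ⟨n, hn⟩ := Nat.exists_eq_add_of_le' hr
      rw [hn, Nat.add_sub_cancel]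
      ring_nf
      omega)
    (X := RB (F := F) c s) RB.shift
    ⟨by simp, by simpa using hD.empty, by simp, by simp⟩
    (fun A h i j v hi hj => by simpa using h.2.2.2 _ hi _ hj rfl) hA ψ
    (by
      refine continuous_pi fun x => ?_
      obtain ⟨i, _ | l⟩ := x
      · show Continuous fun y : F × Fin m → ℝ => ∑ v, y (i, v)
        fun_prop
      · show Continuous fun y : F × Fin m → ℝ => F' l fun v => r * y (i, v)
        fun_prop)
    (fun y g i l => by cases l <;> simp [ψ, actE_apply])
  obtain ⟨-, hfull, hcolor, hcolumn⟩ := hXA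
  have hr0 : r ≠ 0 := by simp [r]
  have hsum : ∀ i, ∑ v, r * y (i, v) = 1 := fun i => by
    rw [← hy1, Fintype.sum_prod_type, ← Finset.mul_sum,
      Finset.sum_congr rfl fun j _ => show ∑ v, y (j, v) = ∑ v, y (i, v) from hco none j i]
    simp [r]
  let x : F → stdSimplex ℝ (Fin m) := fun i =>
    ⟨fun v => r * y (i, v), fun v => mul_nonneg (Nat.cast_nonneg _) (hy0 _), hsum i⟩
  let Δ : F → Finset (Fin m) := fun i => Finset.univ.filter fun v => (i, v) ∈ A
  have hΔ : ∀ i v, v ∈ Δ i ↔ (i, v) ∈ A := by simp [Δ]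
  have hrain : ∀ i, IsRainbow c (Δ i) := fun i v hv v' hv' h => by
    simpa using hcolor _ ((hΔ _ _).1 hv) _ ((hΔ _ _).1 hv') rfl h
  refine ⟨Δ, fun i j hij => ?_, hrain, ?_, ?_⟩
  · rw [Finset.disjoint_left]
    intro v hv hv'
    exact hij (by simpa using hcolumn _ ((hΔ _ _).1 hv) _ ((hΔ _ _).1 hv') rfl)
  · refine le_trans (Finset.card_le_card fun i hi => ?_) hfull
    rw [mem_full, ← Finset.card_eq_iff_eq_univ]
    have h1 : k < (Δ i).card := by simpa using hi
    have h2 : (Δ i).image c ⊆ row (A.image fun x => (x.1, c x.2)) i := fun j hj => by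
      obtain ⟨v, hv, rfl⟩ := Finset.mem_image.1 hj
      exact mem_row.2 (Finset.mem_image.2 ⟨(i, v), (hΔ _ _).1 hv, rfl⟩)
    have h3 := Finset.card_le_card h2
    rw [Finset.card_image_of_injOn (hrain i)] at h3
    refine le_antisymm (Finset.card_le_univ _) ?_
    rw [Fintype.card_fin]
    omega
  · refine ⟨f (x 0), Set.mem_iInter.2 fun i => ⟨x i, ?_, ?_⟩⟩
    · intro v hv
      by_contra h
      refine hv ?_
      show r * y (i, v) = 0
      rw [hyA _ fun h' => h (Finset.mem_coe.2 ((hΔ _ _).2 h')), mul_zero]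
    · ext l
      rw [← hF' l (x i), ← hF' l (x 0)]
      exact hco (some l) i 0

end conclusion

end

end BCT

/-- **Balanced colored Tverberg theorem.** -/
theorem balanced_colored_tverberg
    (p ν r d k s m : ℕ) (hp : p.Prime) (hν : 0 < ν) (hr : r = p ^ ν)
    (hd : 1 ≤ d) (hs : 0 < s) (hsr : s ≤ r)
    (hnum : (r : ℤ) * ((k : ℤ) - 1) + s = ((r : ℤ) - 1) * d)
    (hm : m = (2 * r - 1) * (k + 1))
    (c : Fin m → Fin (k + 1))
    (hc : ∀ j : Fin (k + 1), (Finset.univ.filter fun v => c v = j).card = 2 * r - 1)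
    (f : stdSimplex ℝ (Fin m) → EuclideanSpace ℝ (Fin d)) (hf : Continuous f) :
    ∃ Δ : Fin r → Finset (Fin m),
      (∀ i j, i ≠ j → Disjoint (Δ i) (Δ j)) ∧
      (∀ i, IsRainbow c (Δ i)) ∧
      (∀ i : Fin r, (i : ℕ) < s → (Δ i).card ≤ k + 1) ∧
      (∀ i : Fin r, s ≤ (i : ℕ) → (Δ i).card ≤ k) ∧
      (⋂ i, f '' simplexFace (Δ i)).Nonempty := by
  classical
  have : Fact p.Prime := ⟨hp⟩
  let _ : Fintype (GaloisField p ν) := Fintype.ofFinite _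
  have hF : Fintype.card (GaloisField p ν) = r := by
    rw [hr, ← Nat.card_eq_fintype_card, GaloisField.card p ν hν.ne']
  have hr1 : 1 ≤ r := hr ▸ Nat.pos_of_ne_zero (pow_ne_zero _ hp.ne_zero)
  obtain ⟨Δ, h1, h2, h3, h4⟩ := BCT.tverberg_field (GaloisField p ν) p d k s m (by omega)
    (by
      rw [hF]
      zify [hr1]
      linarith)
    c (by simpa only [hF] using hc) f hf
  -- number the elements of the field so that the sets with more than `k` elements come first
  obtain ⟨σ, hσ⟩ : ∃ σ : Fin r ≃ GaloisField p ν,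
      ∀ i : Fin r, s ≤ (i : ℕ) → (Δ (σ i)).card ≤ k := by
    obtain ⟨S, hS, -, hScard⟩ := Finset.exists_subsuperset_card_eq (Finset.subset_univ _) h3
      (by rw [Finset.card_univ]; omega)
    have hI : Fintype.card {i : Fin r // (i : ℕ) < s} = Fintype.card {a // a ∈ S} := by
      rw [Fintype.card_coe, hScard, Fintype.card_subtype]
      simp [Fin.card_filter_val_lt, hsr]
    let e := Fintype.equivOfCardEq hI
    let σ₀ : Fin r ≃ GaloisField p ν := Fintype.equivOfCardEq (by rw [hF, Fintype.card_fin])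
    have hcompl : Fintype.card {i : Fin r // ¬ (i : ℕ) < s} = Fintype.card {a // ¬ a ∈ S} := by
      rw [Fintype.card_subtype_compl, Fintype.card_subtype_compl, hI, Fintype.card_congr σ₀]
    let e' := Fintype.equivOfCardEq hcompl
    refine ⟨(Equiv.sumCompl _).symm.trans ((Equiv.sumCongr e e').trans (Equiv.sumCompl _)),
      fun i hi => ?_⟩
    by_contra h
    have hmem := hS (Finset.mem_filter.2 ⟨Finset.mem_univ _, h⟩)
    rw [Equiv.trans_apply, Equiv.sumCompl_symm_apply_of_neg (p := fun i : Fin r => (i : ℕ) < s)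
      (show ¬ (i : ℕ) < s by omega)] at hmem
    exact (e' _).2 hmem
  refine ⟨fun i => Δ (σ i), fun i j hij => h1 _ _ (σ.injective.ne hij), fun i => h2 _,
    fun i _ => ?_, hσ, ?_⟩
  · rw [← Finset.card_image_of_injOn (h2 (σ i))]
    simpa using Finset.card_le_univ ((Δ (σ i)).image c)
  · rw [σ.surjective.iInter_comp fun a => f '' simplexFace (Δ a)]
    exact h4
end

section
/- Topological Tverberg theorem for prime powers: Let r = p^ν be a prime power, d ≥ 1, N = (r−1)(d+1), and m = N + 1. Then for every continuous map f : stdSimplex ℝ (Fin m) → ℝ^d there exist r nonempty pairwise disjoint finsets Δ_1, …, Δ_r of Fin m such that ⋂_{i=1}^r f(Face(Δ_i)) ≠ ∅. -/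
/-! ### Cochains on lists, alternating cochains, and the Weyl relation -/

section Cochains

variable {S S' K : Type*} [Field K]

/-- The value of the coboundary at a given list, as a linear functional of the cochain. -/
def cobdAt : List S → ((List S → K) →ₗ[K] K)
  | [] => 0
  | u :: l => LinearMap.proj l - cobdAt l ∘ₗ LinearMap.funLeft K K (List.cons u)

/-- The coboundary. A cochain on the vertex set `S` is an arbitrary function on lists of vertices; a
list of length `n + 1` plays the role of an ordered, possibly degenerate, `n`-simplex, the empty
list that of the augmentation (but the coboundary is set to `0` there). Explicitly,
`cobd a [u₀, …, uₙ]` is the alternating sum of the `a [u₀, …, ûᵢ, …, uₙ]`. -/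
def cobd : (List S → K) →ₗ[K] (List S → K) := LinearMap.pi cobdAt

@[simp] lemma cobd_nil (a : List S → K) : cobd a [] = 0 := rfl

lemma cobd_cons (a : List S → K) (u : S) (l : List S) :
    cobd a (u :: l) = a l - cobd (fun l' => a (u :: l')) l := rfl

lemma cobd_cons_fun (a : List S → K) (u : S) :
    (fun l => cobd a (u :: l)) = a - cobd (fun l' => a (u :: l')) := rfl

lemma cobd_cobd (a : List S → K) : cobd (cobd a) = 0 := by
  funext l
  induction l generalizing a with
  | nil => rfl
  | cons u l ih =>
    rw [cobd_cons, cobd_cons_fun, map_sub, Pi.sub_apply, ih]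
    simp

lemma cobd_map (φ : S → S') (a : List S' → K) (l : List S) :
    cobd (fun l' => a (l'.map φ)) l = cobd a (l.map φ) := by
  induction l generalizing a with
  | nil => rfl
  | cons u l ih =>
    rw [cobd_cons, List.map_cons, cobd_cons, ← ih]
    rfl

/-- The coboundary at a list depends only on the values of the cochain at its facets. -/
lemma cobd_congr (a a' : List S → K) (l : List S)
    (h : ∀ l', l'.Sublist l → l'.length + 1 = l.length → a l' = a' l') :
    cobd a l = cobd a' l := by
  induction l generalizing a a' with
  | nil => rfl
  | cons u l ih =>
    rw [cobd_cons, cobd_cons, h l (List.sublist_cons_self u l) rfl]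
    congr 1
    exact ih _ _ fun l' hl' hlen => h _ (hl'.cons_cons u) (by simp [hlen])

/-- The value of the prism operator at a given list, as a linear functional of the cochain. -/
def prismAt (h₀ h₁ : S → S) : List S → ((List S → K) →ₗ[K] K)
  | [] => 0
  | u :: l => LinearMap.proj (h₀ u :: h₁ u :: l.map h₁)
      - prismAt h₀ h₁ l ∘ₗ LinearMap.funLeft K K (List.cons (h₀ u))

/-- The prism operator between two vertex maps: `prism h₀ h₁ a [u₀, …, uₙ]` is the alternating sum
over `i` of the values of `a` at `[h₀ u₀, …, h₀ uᵢ, h₁ uᵢ, …, h₁ uₙ]`. -/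
def prism (h₀ h₁ : S → S) : (List S → K) →ₗ[K] (List S → K) := LinearMap.pi (prismAt h₀ h₁)

lemma prism_cons (h₀ h₁ : S → S) (a : List S → K) (u : S) (l : List S) :
    prism h₀ h₁ a (u :: l) = a (h₀ u :: h₁ u :: l.map h₁)
      - prism h₀ h₁ (fun l' => a (h₀ u :: l')) l := rfl

lemma prism_cons_fun (h₀ h₁ : S → S) (a : List S → K) (u : S) :
    (fun l => prism h₀ h₁ a (u :: l)) = (fun l => a (h₀ u :: h₁ u :: l.map h₁))
      - prism h₀ h₁ (fun l' => a (h₀ u :: l')) := rfl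

/-- The prism operator is a cochain homotopy between the pullbacks along `h₀` and `h₁`. -/
lemma prism_cobd (h₀ h₁ : S → S) (a : List S → K) (l : List S) :
    prism h₀ h₁ (cobd a) l + cobd (prism h₀ h₁ a) l = a (l.map h₁) - a (l.map h₀) := by
  induction l generalizing a with
  | nil => simp [show prism h₀ h₁ (cobd a) [] = 0 from rfl]
  | cons u l ih =>
    have key := ih (fun l' => a (h₀ u :: l'))
    have e : cobd (fun l' => a (h₀ u :: h₁ u :: l'.map h₁)) l
        = cobd (fun l' => a (h₀ u :: h₁ u :: l')) (l.map h₁) :=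
      cobd_map h₁ (fun l' => a (h₀ u :: h₁ u :: l')) l
    rw [prism_cons, cobd_cons_fun, cobd_cons (prism h₀ h₁ a), prism_cons_fun, cobd_cons a,
      cobd_cons (fun l' => a (h₀ u :: l')), map_sub, map_sub, Pi.sub_apply, Pi.sub_apply, e]
    simp only [List.map_cons]
    linear_combination key

lemma prism_eq_zero (h₀ h₁ : S → S) (l : List S) (a : List S → K)
    (h : ∀ l' : List S, l'.length = l.length + 1 →
      (∀ w ∈ l', ∃ z ∈ l, w = h₀ z ∨ w = h₁ z) → a l' = 0) :
    prism h₀ h₁ a l = 0 := by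
  induction l generalizing a with
  | nil => rfl
  | cons u l ih =>
    rw [prism_cons, h, ih, sub_zero]
    · intro l' hl' hw
      apply h
      · simp [hl']
      · intro w hw'
        rcases List.mem_cons.1 hw' with rfl | hw'
        · exact ⟨u, by simp, Or.inl rfl⟩
        · obtain ⟨z, hz, hz'⟩ := hw w hw'
          exact ⟨z, by simp [hz], hz'⟩
    · simp
    · intro w hw
      simp only [List.mem_cons, List.mem_map] at hw
      rcases hw with rfl | rfl | ⟨z, hz, rfl⟩
      · exact ⟨u, by simp, Or.inl rfl⟩
      · exact ⟨u, by simp, Or.inr rfl⟩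
      · exact ⟨z, by simp [hz], Or.inr rfl⟩

/-- The dual of a subdivided cone over a simplex: the simplex is moved along the vertex maps
`h 0, …, h M` by prisms, and the final copy is coned off with the vertex `e`. When consecutive maps
`h t`, `h (t + 1)` are close and `h M` is constant with value `e`, only small simplices occur. -/
def fill (e : S) (M : ℕ) (h : ℕ → S → S) : (List S → K) →ₗ[K] (List S → K) :=
  LinearMap.funLeft K K (fun l => e :: l.map (h M))
    - ∑ t ∈ Finset.range M, prism (h t) (h (t + 1))

lemma fill_apply (e : S) (M : ℕ) (h : ℕ → S → S) (a : List S → K) (l : List S) :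
    fill e M h a l = a (e :: l.map (h M)) - ∑ t ∈ Finset.range M, prism (h t) (h (t + 1)) a l := by
  simp [fill, LinearMap.funLeft_apply]

/-- The dual form of `∂ (cone σ) = σ - cone (∂ σ)`. -/
lemma fill_cobd (e : S) (M : ℕ) (h : ℕ → S → S) (h0 : h 0 = id) (a : List S → K) :
    fill e M h (cobd a) = a - cobd (fill e M h a) := by
  funext l
  have e1 : cobd (fill e M h a) l = cobd (fun l' => a (e :: l')) (l.map (h M))
      - ∑ t ∈ Finset.range M, cobd (prism (h t) (h (t + 1)) a) l := by
    rw [← cobd_map (h M) (fun l' => a (e :: l')) l]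
    simp only [fill, LinearMap.sub_apply, map_sub, Pi.sub_apply, LinearMap.sum_apply, map_sum,
      Finset.sum_apply]
    rfl
  have e2 := Finset.sum_congr rfl fun t (_ : t ∈ Finset.range M) =>
    prism_cobd (h t) (h (t + 1)) a l
  rw [Finset.sum_add_distrib, Finset.sum_range_sub (fun t => a (l.map (h t)))] at e2
  rw [Pi.sub_apply, e1, fill_apply, cobd_cons]
  rw [h0, List.map_id] at e2
  linear_combination -e2

end Cochains

section Alternating

variable {S K : Type*} [Field K]

/-- Alternating cochains. Antisymmetry and vanishing on repeated vertices are only demanded for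
adjacent entries; the general case is `IsAlt.eq_zero_of_not_nodup`. -/
structure IsAlt (a : List S → K) : Prop where
  swap : ∀ l₁ u v l₂, a (l₁ ++ u :: v :: l₂) = -a (l₁ ++ v :: u :: l₂)
  rep : ∀ l₁ u l₂, a (l₁ ++ u :: u :: l₂) = 0

lemma IsAlt.tail {a : List S → K} (ha : IsAlt a) (w : S) : IsAlt fun l => a (w :: l) :=
  ⟨fun l₁ u v l₂ => ha.swap (w :: l₁) u v l₂, fun l₁ u l₂ => ha.rep (w :: l₁) u l₂⟩

lemma IsAlt.cobd {a : List S → K} (ha : IsAlt a) : IsAlt (cobd a) := by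
  constructor
  · intro l₁
    induction l₁ generalizing a with
    | nil =>
      intro u v l₂
      have : (fun l => a (u :: v :: l)) = -(fun l => a (v :: u :: l)) := by
        funext l; exact ha.swap [] u v l
      simp only [List.nil_append, cobd_cons, this, map_neg, Pi.neg_apply]
      ring
    | cons w l₁ ih =>
      intro u v l₂
      simp only [List.cons_append, cobd_cons]
      rw [ih (ha.tail w), ha.swap]
      ring
  · intro l₁
    induction l₁ generalizing a with
    | nil =>
      intro u l₂
      have : (fun l => a (u :: u :: l)) = 0 := by
        funext l; exact ha.rep [] u l
      simp only [List.nil_append, cobd_cons, this, map_zero, Pi.zero_apply]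
      ring
    | cons w l₁ ih =>
      intro u l₂
      simp only [List.cons_append, cobd_cons]
      rw [ih (ha.tail w), ha.rep]
      ring

lemma IsAlt.eq_zero_of_mem {a : List S → K} (ha : IsAlt a) (l₁ l₂ : List S) (u : S)
    (hu : u ∈ l₂) : a (l₁ ++ u :: l₂) = 0 := by
  induction l₂ generalizing l₁ with
  | nil => simp at hu
  | cons v l₂ ih =>
    by_cases h : u = v
    · subst h; exact ha.rep _ _ _
    · have := ih (l₁ ++ [v]) (by simpa [h] using hu)
      rw [ha.swap]
      simpa using this

lemma IsAlt.eq_zero_of_not_nodup {a : List S → K} (ha : IsAlt a) (l : List S)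
    (hl : ¬ l.Nodup) : a l = 0 := by
  induction l generalizing a with
  | nil => simp at hl
  | cons u l ih =>
    by_cases h : u ∈ l
    · exact ha.eq_zero_of_mem [] l u h
    · exact ih (ha.tail u) (by simpa [h] using hl)

end Alternating

section Weyl

/-- The Frobenius identity for a commuting family in a possibly noncommutative ring. -/
lemma sum_pow_of_commute {R ι : Type*} [Ring R] (p : ℕ) [hp : Fact p.Prime] (hR : (p : R) = 0)
    (A : ι → R) (s : Finset ι) (hA : ∀ i j, Commute (A i) (A j)) :
    (∑ i ∈ s, A i) ^ p = ∑ i ∈ s, A i ^ p := by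
  classical
  induction s using Finset.induction_on with
  | empty => simp [hp.out.ne_zero]
  | insert i s hi ih =>
    rw [Finset.sum_insert hi, Finset.sum_insert hi,
      (Commute.sum_right s A (A i) fun j _ => hA i j).add_pow_prime_eq hp.out, ih, hR]
    simp

variable {K V : Type*} [Field K] [AddCommGroup V] [Module K V]

lemma weyl_pow (x t : Module.End K V) (W : Submodule K V) (htW : ∀ a ∈ W, t a ∈ W)
    (hxt : ∀ a ∈ W, x (t a) = t (x a) + a) (a : V) (ha : a ∈ W) (hxa : x a = 0) (n : ℕ) :
    (t ^ n) a ∈ W ∧ x ((t ^ n) a) = (n : K) • (t ^ (n - 1)) a := by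
  induction n with
  | zero => simpa [hxa] using ha
  | succ n ih =>
    rw [pow_succ', Module.End.mul_apply]
    refine ⟨htW _ ih.1, ?_⟩
    rw [hxt _ ih.1, ih.2]
    rcases n with _ | n
    · simp
    · simp only [Nat.add_sub_cancel, map_smul, Nat.cast_add, Nat.cast_one]
      rw [← Module.End.mul_apply, ← pow_succ']
      module

/-- If `x t = t x + 1` and `x a = 0`, then `xⁿ tⁿ a = n! a`, as for `d/dT` and `T`. -/
lemma weyl_pow_pow (x t : Module.End K V) (W : Submodule K V) (htW : ∀ a ∈ W, t a ∈ W)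
    (hxt : ∀ a ∈ W, x (t a) = t (x a) + a) (a : V) (ha : a ∈ W) (hxa : x a = 0) (n : ℕ) :
    (x ^ n) ((t ^ n) a) = (n.factorial : K) • a := by
  induction n with
  | zero => simp
  | succ n ih =>
    rw [pow_succ, Module.End.mul_apply, (weyl_pow x t W htW hxt a ha hxa (n + 1)).2, map_smul,
      Nat.add_sub_cancel, ih, smul_smul, Nat.factorial_succ]
    push_cast
    rfl

lemma factorial_ne_zero' {p : ℕ} (hp : p.Prime) [CharP K p] {n : ℕ} (hn : n < p) :
    (n.factorial : K) ≠ 0 := by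
  rw [Ne, CharP.cast_eq_zero_iff K p, hp.dvd_factorial]
  omega

/-- If `x t = t x + 1` on an invariant subspace `W` in characteristic `p`, then the periodic complex
`W → W → W → ⋯` with maps alternately `x` and `x ^ (p - 1)` is exact: for `s + s' = p` with one of
the two equal to `1`, the kernel of `x ^ s` on `W` is contained in the image of `x ^ s'`. -/
lemma weyl_exact {p : ℕ} (hp : p.Prime) [CharP K p]
    (x t : Module.End K V) (W : Submodule K V) (hxW : ∀ a ∈ W, x a ∈ W)
    (htW : ∀ a ∈ W, t a ∈ W)
    (hxt : ∀ a ∈ W, x (t a) = t (x a) + a) (s s' : ℕ) (hs : s + s' = p)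
    (h1 : s = 1 ∨ s' = 1) (a : V) (ha : a ∈ W) (hxa : (x ^ s) a = 0) :
    ∃ b ∈ W, (x ^ s') b = a := by
  have powW : ∀ (y : Module.End K V), (∀ a ∈ W, y a ∈ W) → ∀ n, ∀ a ∈ W, (y ^ n) a ∈ W := by
    intro y hy n
    induction n with
    | zero => simp
    | succ n ih => intro a ha; rw [pow_succ', Module.End.mul_apply]; exact hy _ (ih a ha)
  rcases h1 with rfl | rfl
  · rw [pow_one] at hxa
    have hf := factorial_ne_zero' (K := K) hp (n := s') (by omega)
    refine ⟨(s'.factorial : K)⁻¹ • (t ^ s') a, W.smul_mem _ (powW t htW _ _ ha), ?_⟩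
    rw [map_smul, weyl_pow_pow x t W htW hxt a ha hxa, smul_smul, inv_mul_cancel₀ hf, one_smul]
  · rw [pow_one]
    have : s < p := by omega
    clear hs
    induction s generalizing a with
    | zero => exact ⟨0, W.zero_mem, by simpa using hxa.symm⟩
    | succ k ih =>
      have hf := factorial_ne_zero' (K := K) hp (n := k + 1) this
      set c := (x ^ k) a with hc
      have hcW : c ∈ W := powW x hxW _ _ ha
      have hxc : x c = 0 := by rw [hc, ← Module.End.mul_apply, ← pow_succ']; exact hxa
      set b := ((k + 1).factorial : K)⁻¹ • (t ^ (k + 1)) c with hb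
      have hbW : b ∈ W := W.smul_mem _ (powW t htW _ _ hcW)
      obtain ⟨b', hb', e⟩ := ih (a - x b) (W.sub_mem ha (hxW _ hbW)) (by
        rw [map_sub, ← Module.End.mul_apply, ← pow_succ, hb, map_smul,
          weyl_pow_pow x t W htW hxt c hcW hxc, smul_smul, inv_mul_cancel₀ hf, one_smul, sub_self])
        (by omega)
      exact ⟨b + b', W.add_mem hbW hb', by rw [map_add, e]; abel⟩

end Weyl

/-! ### Actions of the additive group of a field on cochains -/

section Action

/-- `act` is an action of the additive group of `K` on `S`. -/
structure IsAct {S K : Type*} [Field K] (act : K → S → S) : Prop where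
  zero : ∀ s, act 0 s = s
  add : ∀ g h s, act (g + h) s = act g (act h s)

variable {S K ι : Type*} [Field K]

lemma IsAct.comm {act : K → S → S} (h : IsAct act) (g g' : K) (s : S) :
    act g (act g' s) = act g' (act g s) := by
  rw [← h.add, ← h.add, add_comm]

lemma IsAct.neg {act : K → S → S} (h : IsAct act) (g : K) (s : S) :
    act (-g) (act g s) = s := by
  rw [← h.add, neg_add_cancel, h.zero]

lemma IsAct.image {act : K → S → S} (h : IsAct act) [DecidableEq S] :
    IsAct fun (g : K) (q : Finset S) => q.image (act g) := by
  constructor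
  · intro q
    have : act 0 = id := funext h.zero
    simp [this]
  · intro g g' q
    have : act (g + g') = act g ∘ act g' := funext (h.add g g')
    simp [Finset.image_image, this]

/-- The action on cochains, by pullback along `act g`. -/
def shift (act : K → S → S) (g : K) : Module.End K (List S → K) :=
  LinearMap.funLeft K K (List.map (act g))

lemma shift_apply (act : K → S → S) (g : K) (a : List S → K) (l : List S) :
    shift act g a l = a (l.map (act g)) := rfl

lemma shift_comm {act : K → S → S} (h : IsAct act) (g g' : K) :
    Commute (shift act g) (shift act g') := by
  ext a l
  simp only [Module.End.mul_apply, shift_apply, List.map_map]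
  congr 2
  funext s
  exact h.comm _ _ _

lemma shift_pow {act : K → S → S} (h : IsAct act) (g : K) (n : ℕ) :
    shift act g ^ n = shift act (n * g) := by
  induction n with
  | zero =>
    ext a l
    have : act 0 = id := funext h.zero
    simp [shift_apply, this]
  | succ n ih =>
    rw [pow_succ, ih]
    ext a l
    simp only [Module.End.mul_apply, shift_apply, List.map_map]
    congr 2
    funext s
    simp only [Function.comp_apply]
    rw [← h.add]
    congr 1
    push_cast
    ring

lemma shift_zero {act : K → S → S} (h : IsAct act) : shift act (0 : K) = 1 := by
  rw [← zero_mul (0 : K), ← Nat.cast_zero, ← shift_pow h, pow_zero]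

variable [Fintype ι]

/-- The element `x = ∑ bᵢ ([bᵢ] - 1)` of the group algebra of `(K, +)` over `K`, acting on cochains.
It is used with `b` a basis of `K` over `𝔽_p`; the linear independence of the coefficients `bᵢ` over
`𝔽_p` makes it act nontrivially on every orbit with more than one point, see `exists_potential`. -/
def xop (act : K → S → S) (b : ι → K) : Module.End K (List S → K) :=
  ∑ i, b i • (shift act (b i) - 1)

lemma xop_apply (act : K → S → S) (b : ι → K) (a : List S → K) (l : List S) :
    xop act b a l = ∑ i, b i * (a (l.map (act (b i))) - a l) := by
  simp [xop, shift_apply]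

lemma xop_nil (act : K → S → S) (b : ι → K) (a : List S → K) : xop act b a [] = 0 := by
  simp [xop_apply]

lemma end_cast_eq_zero (p : ℕ) [CharP K p] {V : Type*} [AddCommGroup V] [Module K V] :
    (p : Module.End K V) = 0 := by
  ext v
  rw [Module.End.natCast_apply, ← Nat.cast_smul_eq_nsmul K, CharP.cast_eq_zero, zero_smul]
  rfl

/-- `x ^ p = 0`, by the Frobenius identity. -/
lemma xop_pow_char (p : ℕ) [Fact p.Prime] [CharP K p] {act : K → S → S} (h : IsAct act)
    (b : ι → K) : xop act b ^ p = 0 := by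
  have hp : (p : Module.End K (List S → K)) = 0 := end_cast_eq_zero p
  rw [xop, sum_pow_of_commute p hp]
  · refine Finset.sum_eq_zero fun i _ => ?_
    have h1 : (shift act (b i) - 1 : Module.End K (List S → K)) ^ p = 0 := by
      have h2 : (1 + (shift act (b i) - 1) : Module.End K (List S → K)) ^ p
          = 1 ^ p + (shift act (b i) - 1) ^ p := by
        rw [(Commute.one_left _).add_pow_prime_eq Fact.out, hp]
        simp
      rw [add_sub_cancel, one_pow, shift_pow h, CharP.cast_eq_zero, zero_mul, shift_zero h] at h2
      simpa using h2.symm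
    rw [smul_pow, h1, smul_zero]
  · intro i j
    refine Commute.smul_left (Commute.smul_right ?_ _) _
    exact ((shift_comm h _ _).sub_left (Commute.one_left _)).sub_right (Commute.one_right _)

lemma xop_cobd (act : K → S → S) (b : ι → K) (a : List S → K) :
    xop act b (cobd a) = cobd (xop act b a) := by
  simp only [xop, LinearMap.sum_apply, map_sum, LinearMap.smul_apply, map_smul,
    LinearMap.sub_apply, map_sub, Module.End.one_apply]
  refine Finset.sum_congr rfl fun i _ => ?_
  congr 2
  funext l
  exact (cobd_map (act (b i)) a l).symm

lemma xop_pow_cobd (act : K → S → S) (b : ι → K) (n : ℕ) (a : List S → K) :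
    (xop act b ^ n) (cobd a) = cobd ((xop act b ^ n) a) := by
  induction n with
  | zero => rfl
  | succ n ih => rw [pow_succ', Module.End.mul_apply, Module.End.mul_apply, ih, xop_cobd]

/-- Powers of the operator are local with respect to any invariant set of lists. -/
lemma xop_pow_eq_zero (act : K → S → S) (b : ι → K) (P : List S → Prop)
    (hP : ∀ g l, P l → P (l.map (act g))) (a : List S → K) (ha : ∀ l, P l → a l = 0) (n : ℕ)
    (l : List S) (hl : P l) : (xop act b ^ n) a l = 0 := by
  induction n generalizing l with
  | zero => exact ha l hl
  | succ n ih =>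
    rw [pow_succ', Module.End.mul_apply, xop_apply, ih l hl]
    exact Finset.sum_eq_zero fun i _ => by rw [ih _ (hP _ _ hl)]; simp

/-- Powers of `x` commute with pullback along a map that is equivariant on an invariant set. -/
lemma xop_pow_map {S' : Type*} (act : K → S → S) (act' : K → S' → S') (b : ι → K) (φ : S → S')
    (X : Set S) (hX : ∀ g, ∀ z ∈ X, act g z ∈ X) (hφ : ∀ g, ∀ z ∈ X, φ (act g z) = act' g (φ z))
    (a : List S' → K) (n : ℕ) (l : List S) (hl : ∀ z ∈ l, z ∈ X) :
    (xop act b ^ n) (fun l => a (l.map φ)) l = (xop act' b ^ n) a (l.map φ) := by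
  induction n generalizing l with
  | zero => rfl
  | succ n ih =>
    rw [pow_succ', pow_succ', Module.End.mul_apply, Module.End.mul_apply, xop_apply, xop_apply,
      ih l hl]
    refine Finset.sum_congr rfl fun i _ => ?_
    rw [ih]
    · simp only [List.map_map]
      congr 3
      refine congrArg _ ?_
      exact List.map_congr_left fun z hz => hφ _ _ (hl z hz)
    · intro z hz
      obtain ⟨y, hy, rfl⟩ := List.mem_map.1 hz
      exact hX _ _ (hl y hy)

/-- A choice of an orbit representative `rep q` for each `q`, and of a group element `γ q` carrying the
representative to `q`. -/
lemma IsAct.exists_rep {Q : Type*} {act : K → Q → Q} (h : IsAct act) :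
    ∃ (rep : Q → Q) (γ : Q → K), (∀ q, act (γ q) (rep q) = q) ∧
      ∀ g q, rep (act g q) = rep q := by
  let R : Setoid Q :=
    { r := fun q q' => ∃ g, act g q = q'
      iseqv := ⟨fun q => ⟨0, h.zero q⟩, fun {q q'} ⟨g, hg⟩ => ⟨-g, by rw [← hg, h.neg]⟩,
        fun {q q' q''} ⟨g, hg⟩ ⟨g', hg'⟩ => ⟨g' + g, by rw [h.add, hg, hg']⟩⟩ }
  have hrep : ∀ q, ∃ g, act g (Quotient.mk R q).out = q := fun q =>
    Quotient.exact (s := R) (Quotient.out_eq (Quotient.mk R q))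
  choose γ hγ using hrep
  refine ⟨fun q => (Quotient.mk R q).out, γ, hγ, fun g q => ?_⟩
  have : Quotient.mk R (act g q) = Quotient.mk R q := Quotient.sound ⟨-g, h.neg g q⟩
  exact congrArg Quotient.out this

/-- A function `H` whose increments along the basis translations are invariant functions `C i`, such
that `∑ bᵢ Cᵢ` is nonzero at every point that is not fixed. On each orbit, `H` is a linear functional
of the group element, chosen to kill the stabilizer and to be nonzero unless the point is fixed. -/
lemma exists_potential (p : ℕ) [Fact p.Prime] [Algebra (ZMod p) K] {Q : Type*}
    {act : K → Q → Q} (h : IsAct act) (b : Module.Basis ι (ZMod p) K) :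
    ∃ (H : Q → K) (C : ι → Q → K), (∀ i q, H (act (b i) q) = H q + C i q) ∧
      (∀ i g q, C i (act g q) = C i q) ∧
      ∀ q, (∃ g, act g q ≠ q) → ∑ i, b i * C i q ≠ 0 := by
  obtain ⟨rep, γ, hγ, hrep'⟩ := h.exists_rep
  have hχ : ∀ q : Q, ∃ χ : K →ₗ[ZMod p] ZMod p, (∀ g, act g q = q → χ g = 0) ∧
      ((∃ g, act g q ≠ q) → χ ≠ 0) := by
    intro q
    let st : AddSubgroup K :=
      { carrier := {g | act g q = q}
        zero_mem' := h.zero q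
        add_mem' := fun {g g'} hg hg' => by
          simp only [Set.mem_ofPred_eq] at *; rw [h.add, hg', hg]
        neg_mem' := fun {g} hg => by
          simp only [Set.mem_ofPred_eq] at *
          conv_lhs => rw [← hg]
          exact h.neg g q }
    by_cases hne : ∃ g, act g q ≠ q
    · obtain ⟨g, hg⟩ := hne
      -- a functional vanishing on the proper subgroup `st`, an `𝔽_p`-subspace
      obtain ⟨χ, h1, h2⟩ := Submodule.exists_le_ker_of_lt_top (AddSubgroup.toZModSubmodule p st)
        (lt_top_iff_ne_top.2 fun e => hg (by
          have : g ∈ AddSubgroup.toZModSubmodule p st := by rw [e]; trivial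
          exact this))
      exact ⟨χ, fun g hg => h2 (show g ∈ AddSubgroup.toZModSubmodule p st from hg), fun _ => h1⟩
    · exact ⟨0, fun _ _ => rfl, fun hh => absurd hh hne⟩
  choose χ hχ0 hχ1 using hχ
  refine ⟨fun q => algebraMap (ZMod p) K (χ (rep q) (γ q)),
    fun i q => algebraMap (ZMod p) K (χ (rep q) (b i)), ?_, ?_, ?_⟩
  · intro i q
    beta_reduce
    rw [hrep', ← map_add]
    congr 1
    have : act (γ (act (b i) q) - γ q - b i) (rep q) = rep q := by
      have e1 := hγ (act (b i) q)
      rw [hrep'] at e1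
      rw [show γ (act (b i) q) - γ q - b i = -γ q + (-b i + γ (act (b i) q)) by ring, h.add,
        h.add, e1, h.neg]
      have e2 := h.neg (γ q) (rep q)
      rwa [hγ] at e2
    have := hχ0 _ _ this
    rw [map_sub, map_sub] at this
    linear_combination this
  · intro i g q
    simp only [hrep']
  · rintro q ⟨g, hg⟩ hsum
    have hne : ∃ g, act g (rep q) ≠ rep q := by
      refine ⟨g, fun e => hg ?_⟩
      rw [← hγ q, h.comm, e]
    apply hχ1 _ hne
    have hli := Fintype.linearIndependent_iff.1 b.linearIndependent (fun i => χ (rep q) (b i)) (by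
      rw [← hsum]
      exact Finset.sum_congr rfl fun i _ => by rw [Algebra.smul_def, mul_comm])
    exact b.ext fun i => by simpa using hli i

/-- The alternating cochains supported on the set of lists `good`. -/
def altOn (K : Type*) [Field K] {S : Type*} (good : Set (List S)) : Submodule K (List S → K) where
  carrier := {a | IsAlt a ∧ ∀ l, l ∉ good → a l = 0}
  add_mem' := fun {a a'} ha ha' =>
    ⟨⟨fun l₁ u v l₂ => by
        simp only [Pi.add_apply]; rw [ha.1.swap, ha'.1.swap, neg_add],
      fun l₁ u l₂ => by simp only [Pi.add_apply]; rw [ha.1.rep, ha'.1.rep, add_zero]⟩,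
      fun l hl => by simp only [Pi.add_apply]; rw [ha.2 l hl, ha'.2 l hl, add_zero]⟩
  zero_mem' := ⟨⟨by simp, by simp⟩, by simp⟩
  smul_mem' := fun c a ha =>
    ⟨⟨fun l₁ u v l₂ => by simp only [Pi.smul_apply]; rw [ha.1.swap, smul_neg],
      fun l₁ u l₂ => by simp only [Pi.smul_apply]; rw [ha.1.rep, smul_zero]⟩,
      fun l hl => by simp only [Pi.smul_apply]; rw [ha.2 l hl, smul_zero]⟩

lemma IsAlt.mul [DecidableEq S] {a : List S → K} (ha : IsAlt a) (c : Finset S → K) :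
    IsAlt fun l => c l.toFinset * a l := by
  refine ⟨fun l₁ u v l₂ => ?_, fun l₁ u l₂ => ?_⟩
  · have : (l₁ ++ u :: v :: l₂).toFinset = (l₁ ++ v :: u :: l₂).toFinset := by
      ext w; simp only [List.mem_toFinset, List.mem_append, List.mem_cons]; tauto
    rw [this, ha.swap, mul_neg]
  · rw [ha.rep, mul_zero]

lemma mul_mem_altOn [DecidableEq S] {good : Set (List S)} {a : List S → K}
    (ha : a ∈ altOn K good) (c : Finset S → K) :
    (fun l => c l.toFinset * a l) ∈ altOn K good :=
  ⟨ha.1.mul c, fun l hl => by simp only [ha.2 l hl, mul_zero]⟩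

lemma shift_mem_altOn {act : K → S → S} (h : IsAct act) {good : Set (List S)}
    (hgood : ∀ g, ∀ l ∈ good, l.map (act g) ∈ good) {a : List S → K}
    (ha : a ∈ altOn K good) (g : K) : shift act g a ∈ altOn K good := by
  refine ⟨⟨fun l₁ u v l₂ => ?_, fun l₁ u l₂ => ?_⟩, fun l hl => ?_⟩
  · simp only [shift_apply, List.map_append, List.map_cons]
    exact ha.1.swap _ _ _ _
  · simp only [shift_apply, List.map_append, List.map_cons]
    exact ha.1.rep _ _ _
  · refine ha.2 _ fun hl' => hl ?_
    have e := hgood (-g) _ hl'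
    rw [List.map_map] at e
    have : act (-g) ∘ act g = id := funext (h.neg g)
    rwa [this, List.map_id] at e

lemma xop_mem_altOn {act : K → S → S} (h : IsAct act) {good : Set (List S)}
    (hgood : ∀ g, ∀ l ∈ good, l.map (act g) ∈ good) (b : ι → K) {a : List S → K}
    (ha : a ∈ altOn K good) : xop act b a ∈ altOn K good := by
  rw [xop, LinearMap.sum_apply]
  exact Submodule.sum_mem _ fun i _ => Submodule.smul_mem _ _
    (Submodule.sub_mem _ (shift_mem_altOn h hgood ha _) ha)

/-- On alternating cochains supported on simplices none of which is invariant under the whole group,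
the kernel of `x ^ s` is the image of `x ^ (p - s)` for `s = 1` and `s = p - 1`. This replaces the
freeness of the action, which fails when `K` is not a prime field. -/
theorem xop_exact (p : ℕ) [hp : Fact p.Prime] [Algebra (ZMod p) K] [CharP K p] [DecidableEq S]
    {act : K → S → S} (h : IsAct act) (b : Module.Basis ι (ZMod p) K) {good : Set (List S)}
    (hgood : ∀ g, ∀ l ∈ good, l.map (act g) ∈ good)
    (hfix : ∀ l ∈ good, ∃ g, l.toFinset.image (act g) ≠ l.toFinset)
    (s s' : ℕ) (hs : s + s' = p) (h1 : s = 1 ∨ s' = 1) (a : List S → K) (ha : a ∈ altOn K good)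
    (hxa : (xop act b ^ s) a = 0) : ∃ a' ∈ altOn K good, (xop act b ^ s') a' = a := by
  -- With `H` a potential on vertex sets, `[x, H] = U` commutes with `x`, and `U ^ p = w` is the
  -- multiplication by an invariant function that is nonzero on good lists. So `t = H U ^ (p - 1) w⁻¹`
  -- satisfies `[x, t] = 1` on the cochains supported there.
  obtain ⟨H, C, hH, hC, hne⟩ := exists_potential p h.image b
  have himg : ∀ (g : K) (l : List S), (l.map (act g)).toFinset = l.toFinset.image (act g) := by
    intro g l; ext w; simp
  let m : (Finset S → K) → Module.End K (List S → K) := fun c =>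
    LinearMap.mulLeft K (fun l => c l.toFinset)
  have m_apply : ∀ c a l, m c a l = c l.toFinset * a l := fun c a l => rfl
  have m_mul : ∀ c c', m c * m c' = m (c * c') := by
    intro c c'; ext a l; simp [m_apply, Module.End.mul_apply, mul_assoc]
  have m_comm : ∀ c c', Commute (m c) (m c') := by
    intro c c'; rw [Commute, SemiconjBy, m_mul, m_mul, mul_comm]
  have m_pow : ∀ c n, m c ^ n = m (c ^ n) := by
    intro c n
    induction n with
    | zero => ext a l; simp [m_apply]
    | succ n ih => rw [pow_succ, pow_succ, ih, m_mul]
  have m_shift : ∀ c : Finset S → K, (∀ g q, c (q.image (act g)) = c q) →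
      ∀ g, Commute (m c) (shift act g) := by
    intro c hc g
    ext a l
    simp [m_apply, Module.End.mul_apply, shift_apply, himg, hc]
  let c : ι → Finset S → K := fun i q => b i * C i q
  have hc : ∀ i g q, c i (q.image (act g)) = c i q := fun i g q => by simp only [c, hC]
  let A : ι → Module.End K (List S → K) := fun i => m (c i) * shift act (b i)
  let U : Module.End K (List S → K) := ∑ i, A i
  have A_shift : ∀ i g, Commute (A i) (shift act g) := fun i g =>
    (m_shift _ (hc i) g).mul_left (shift_comm h _ _)
  have A_m : ∀ i c', (∀ g q, c' (q.image (act g)) = c' q) → Commute (A i) (m c') :=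
    fun i c' hc' => (m_comm _ _).mul_left (m_shift c' hc' _).symm
  have A_A : ∀ i j, Commute (A i) (A j) := fun i j =>
    (A_m i _ (hc j)).mul_right (A_shift i _)
  let w : Finset S → K := fun q => (∑ i, b i * C i q) ^ p
  have hw : ∀ g q, w (q.image (act g)) = w q := fun g q => by simp only [w, hC]
  have hU : U ^ p = m w := by
    have : ∀ i, A i ^ p = m (c i ^ p) := by
      intro i
      rw [(m_shift _ (hc i) _).mul_pow, m_pow, shift_pow h, CharP.cast_eq_zero, zero_mul,
        shift_zero h, mul_one]
    rw [sum_pow_of_commute p (end_cast_eq_zero (K := K) p) A _ A_A]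
    ext a l
    simp only [this, LinearMap.sum_apply, Finset.sum_apply, m_apply, w, ← Finset.sum_mul]
    congr 1
    rw [sum_pow_of_commute p (CharP.cast_eq_zero K p) _ _ fun _ _ => Commute.all _ _]
    rfl
  let x := xop act b
  have x_comm : ∀ y, (∀ g, Commute (shift act g) y) → Commute x y := by
    intro y hy
    exact Commute.sum_left _ _ _ fun i _ =>
      Commute.smul_left ((hy _).sub_left (Commute.one_left _)) _
  have hwinv : ∀ g q, w⁻¹ (q.image (act g)) = w⁻¹ q := fun g q => by
    simp only [Pi.inv_apply, hw]
  have x_w : Commute x (m w⁻¹) := x_comm _ fun g => (m_shift _ hwinv g).symm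
  have x_U : Commute x U := x_comm _ fun g => Commute.sum_right _ _ _ fun i _ => (A_shift i g).symm
  have x_H : x * m H = m H * x + U := by
    ext a l
    simp only [Module.End.mul_apply, LinearMap.add_apply, Pi.add_apply, x, xop_apply, m_apply, U, A,
      LinearMap.sum_apply, Finset.sum_apply, shift_apply, himg, hH, Finset.mul_sum,
      ← Finset.sum_add_distrib, c]
    exact Finset.sum_congr rfl fun i _ => by ring
  let t := m H * (U ^ (p - 1) * m w⁻¹)
  have hxt : x * t = t * x + m (w * w⁻¹) := by
    have e1 : Commute x (U ^ (p - 1) * m w⁻¹) := (x_U.pow_right _).mul_right x_w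
    calc x * t = (x * m H) * (U ^ (p - 1) * m w⁻¹) := by simp only [t, mul_assoc]
      _ = m H * (x * (U ^ (p - 1) * m w⁻¹)) + U * U ^ (p - 1) * m w⁻¹ := by
        rw [x_H]; noncomm_ring
      _ = t * x + m (w * w⁻¹) := by
        rw [e1.eq, ← pow_succ', Nat.sub_add_cancel hp.out.one_le, hU, m_mul]
        simp only [t, mul_assoc]
  have mW : ∀ c, ∀ a ∈ altOn K good, m c a ∈ altOn K good := fun c a ha => mul_mem_altOn ha c
  have UW : ∀ a ∈ altOn K good, U a ∈ altOn K good := fun a ha => by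
    simp only [U, A, LinearMap.sum_apply]
    exact Submodule.sum_mem _ fun i _ => mW _ _ (shift_mem_altOn h hgood ha _)
  have UnW : ∀ n, ∀ a ∈ altOn K good, (U ^ n) a ∈ altOn K good := by
    intro n
    induction n with
    | zero => exact fun a ha => ha
    | succ n ih =>
      intro a ha
      rw [pow_succ', Module.End.mul_apply]
      exact UW _ (ih a ha)
  refine weyl_exact hp.out x t (altOn K good) (fun a ha => xop_mem_altOn h hgood _ ha)
    (fun a ha => mW _ _ (UnW _ _ (mW _ _ ha))) (fun a ha => ?_) s s' hs h1 a ha hxa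
  have e2 := LinearMap.congr_fun hxt a
  refine e2.trans ?_
  rw [LinearMap.add_apply, Module.End.mul_apply]
  congr 1
  funext l
  rw [m_apply]
  by_cases hl : l ∈ good
  · have : w l.toFinset ≠ 0 := pow_ne_zero _ (hne _ (hfix l hl))
    rw [Pi.mul_apply, Pi.inv_apply, mul_inv_cancel₀ this, one_mul]
  · rw [ha.2 l hl, mul_zero]

end Action

/-! ### The join and its small simplices -/

section Join

set_option linter.unusedSectionVars false

variable {m : ℕ} {K : Type*} [Field K]

/-- Translation by `g` of the colours, on the ambient space of the `m`-fold join of `K`. -/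
def rot (g : K) (z : Fin m × K → ℝ) : Fin m × K → ℝ := fun q => z (q.1, q.2 - g)

lemma rot_isAct : IsAct (rot (m := m) (K := K)) :=
  ⟨fun z => by funext q; simp [rot], fun g h z => by
    funext q
    simp only [rot]
    rw [show q.2 - (g + h) = q.2 - g - h by ring]⟩

open Classical in
/-- The vertex of colour `0` in the `i`-th copy of `K`. -/
noncomputable def apex (i : ℕ) : Fin m × K → ℝ := fun q => if (q.1 : ℕ) = i ∧ q.2 = 0 then 1 else 0

variable [Fintype K]

/-- `z` lies in the simplex spanned by the vertices `(0, c 0), …, (i, c i)` of the join of copies of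
`K`. The points satisfying this for some `c` and `i` form the deleted join: each index `j` carries at
most one colour. -/
structure IsCell (c : Fin m → K) (i : ℕ) (z : Fin m × K → ℝ) : Prop where
  nonneg : ∀ q, 0 ≤ z q
  sum : ∑ q, z q = 1
  supp : ∀ q, z q ≠ 0 → q.2 = c q.1 ∧ (q.1 : ℕ) ≤ i

lemma IsCell.le_one {c : Fin m → K} {i : ℕ} {z : Fin m × K → ℝ} (h : IsCell c i z) (q) :
    z q ≤ 1 := by
  rw [← h.sum]
  exact Finset.single_le_sum (fun q _ => h.nonneg q) (Finset.mem_univ q)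

lemma IsCell.rot {c : Fin m → K} {i : ℕ} {z : Fin m × K → ℝ} (h : IsCell c i z) (g : K) :
    IsCell (fun j => c j + g) i (rot g z) := by
  refine ⟨fun q => h.nonneg _, ?_, fun q hq => ?_⟩
  · rw [← h.sum]
    exact Fintype.sum_equiv ((Equiv.refl (Fin m)).prodCongr (Equiv.subRight g)) _ _ fun q => rfl
  · have := h.supp _ hq
    exact ⟨by rw [← this.1]; ring, this.2⟩

lemma IsCell.dist_le {c c' : Fin m → K} {i i' : ℕ} {z z' : Fin m × K → ℝ} (h : IsCell c i z)
    (h' : IsCell c' i' z') : dist z z' ≤ 1 := by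
  rw [dist_pi_le_iff zero_le_one]
  intro q
  rw [Real.dist_eq, abs_le]
  constructor <;> linarith [h.nonneg q, h'.nonneg q, h.le_one q, h'.le_one q]

lemma IsCell.lineMap {c : Fin m → K} {i : ℕ} {z z' : Fin m × K → ℝ} (h : IsCell c i z)
    (h' : IsCell c i z') {t : ℝ} (h0 : 0 ≤ t) (h1 : t ≤ 1) :
    IsCell c i (AffineMap.lineMap z z' t) := by
  have e : ∀ q, AffineMap.lineMap z z' t q = (1 - t) * z q + t * z' q := by
    intro q
    simp [AffineMap.lineMap_apply_module]
  refine ⟨fun q => ?_, ?_, fun q hq => ?_⟩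
  · rw [e]
    exact add_nonneg (mul_nonneg (by linarith) (h.nonneg q)) (mul_nonneg h0 (h'.nonneg q))
  · simp only [e, Finset.sum_add_distrib, ← Finset.mul_sum, h.sum, h'.sum]
    ring
  · by_cases hz : z q = 0
    · by_cases hz' : z' q = 0
      · simp [e, hz, hz'] at hq
      · exact h'.supp q hz'
    · exact h.supp q hz

lemma IsCell.update [DecidableEq (Fin m)] {c : Fin m → K} {i : ℕ} {z : Fin m × K → ℝ}
    (h : IsCell c i z) (hi : i + 1 < m) :
    IsCell (Function.update c ⟨i + 1, hi⟩ 0) (i + 1) z := by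
  refine ⟨h.nonneg, h.sum, fun q hq => ?_⟩
  obtain ⟨h1, h2⟩ := h.supp q hq
  refine ⟨?_, by omega⟩
  rw [Function.update_of_ne, h1]
  intro e
  rw [e] at h2
  simp at h2

lemma isCell_apex {c : Fin m → K} {i : ℕ} (hi : i < m) (hc : c ⟨i, hi⟩ = 0) :
    IsCell c i (apex i) := by
  classical
  refine ⟨fun q => ?_, ?_, fun q hq => ?_⟩
  · unfold apex; split_ifs <;> norm_num
  · rw [Finset.sum_eq_single ((⟨i, hi⟩, 0) : Fin m × K)]
    · simp [apex]
    · intro q _ hq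
      have : ¬ ((q.1 : ℕ) = i ∧ q.2 = 0) := by
        rintro ⟨h1, h2⟩
        exact hq (Prod.ext (Fin.ext h1) h2)
      simp [apex, this]
    · simp
  · have : (q.1 : ℕ) = i ∧ q.2 = 0 := by
      by_contra hne
      exact hq (by simp [apex, hne])
    refine ⟨?_, this.1.le⟩
    rw [this.2, ← hc]
    congr 1
    exact Fin.ext this.1.symm

/-- An ordered `i`-simplex lying in one cell of the join of the first `i + 1` copies of `K`, of
diameter at most `i / M`. -/
structure IsSmall (M i : ℕ) (l : List (Fin m × K → ℝ)) : Prop where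
  length : l.length = i + 1
  cell : ∃ c, ∀ z ∈ l, IsCell c i z
  dist : ∀ z ∈ l, ∀ z' ∈ l, dist z z' ≤ (i : ℝ) / M

lemma IsSmall.rot {M i : ℕ} {l : List (Fin m × K → ℝ)} (h : IsSmall M i l) (g : K) :
    IsSmall M i (l.map (rot g)) := by
  obtain ⟨c, hc⟩ := h.cell
  refine ⟨by simp [h.length], ⟨fun j => c j + g, fun z hz => ?_⟩, fun z hz z' hz' => ?_⟩
  · obtain ⟨y, hy, rfl⟩ := List.mem_map.1 hz
    exact (hc y hy).rot g
  · obtain ⟨y, hy, rfl⟩ := List.mem_map.1 hz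
    obtain ⟨y', hy', rfl⟩ := List.mem_map.1 hz'
    refine le_trans ?_ (h.dist y hy y' hy')
    rw [dist_pi_le_iff dist_nonneg]
    exact fun q => dist_le_pi_dist y y' (q.1, q.2 - g)

/-- The straight-line homotopy to the point `e`, at time `t / M`. -/
noncomputable def homo (e : Fin m × K → ℝ) (M t : ℕ) (z : Fin m × K → ℝ) : Fin m × K → ℝ :=
  AffineMap.lineMap z e ((t : ℝ) / M)

lemma homo_zero (e : Fin m × K → ℝ) (M : ℕ) : homo e M 0 = id := by
  funext z; simp [homo]

lemma homo_last (e : Fin m × K → ℝ) {M : ℕ} (hM : 0 < M) (z) : homo e M M z = e := by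
  have : (M : ℝ) ≠ 0 := by positivity
  simp [homo, this]

lemma dist_homo_le (e z z' : Fin m × K → ℝ) {M t t' : ℕ} (hM : 0 < M) (ht : t ≤ M)
    (htt : t ≤ t' + 1) (htt' : t' ≤ t + 1) (he : dist z' e ≤ 1) :
    dist (homo e M t z) (homo e M t' z') ≤ dist z z' + 1 / M := by
  have hM' : (0 : ℝ) < M := by positivity
  refine (dist_triangle _ (homo e M t z') _).trans (add_le_add ?_ ?_)
  · have : homo e M t z - homo e M t z' = (1 - (t : ℝ) / M) • (z - z') := by
      simp only [homo, AffineMap.lineMap_apply_module]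
      module
    have h1 : (t : ℝ) / M ≤ 1 := by
      rw [div_le_one hM']; exact_mod_cast ht
    have h0 : (0 : ℝ) ≤ (t : ℝ) / M := by positivity
    rw [dist_eq_norm, this, norm_smul, dist_eq_norm, Real.norm_of_nonneg (by linarith)]
    exact mul_le_of_le_one_left (norm_nonneg _) (by linarith)
  · rw [homo, homo, dist_lineMap_lineMap, Real.dist_eq, ← sub_div, abs_div, abs_of_pos hM']
    have : |(t : ℝ) - t'| ≤ 1 := by
      have h1 : (t : ℝ) ≤ t' + 1 := by exact_mod_cast htt
      have h2 : (t' : ℝ) ≤ t + 1 := by exact_mod_cast htt'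
      rw [abs_le]; constructor <;> linarith
    calc |(t : ℝ) - t'| / M * dist z' e ≤ 1 / M * 1 := by gcongr
      _ = 1 / M := mul_one _

/-- Coning a small simplex off with the next apex produces small simplices only: if a cochain vanishes
on small `(i + 1)`-simplices, then its `fill` vanishes on small `i`-simplices. -/
lemma fill_eq_zero {M i : ℕ} (hM : 0 < M) (hi : i + 1 < m) (a : List (Fin m × K → ℝ) → K)
    (ha : ∀ l, IsSmall M (i + 1) l → a l = 0) (l : List (Fin m × K → ℝ)) (hl : IsSmall M i l) :
    fill (apex (i + 1)) M (homo (apex (i + 1)) M) a l = 0 := by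
  classical
  obtain ⟨c, hc⟩ := hl.cell
  set e : Fin m × K → ℝ := apex (i + 1) with he
  set c' := Function.update c ⟨i + 1, hi⟩ 0 with hc'
  have hec : IsCell c' (i + 1) e := isCell_apex hi (by simp [hc'])
  have hM' : (0 : ℝ) < M := by positivity
  have hzc : ∀ z ∈ l, IsCell c' (i + 1) z := fun z hz => (hc z hz).update hi
  have hcell : ∀ z ∈ l, ∀ t ≤ M, IsCell c' (i + 1) (homo e M t z) := by
    intro z hz t ht
    refine (hzc z hz).lineMap hec (by positivity) ?_
    rw [div_le_one hM']; exact_mod_cast ht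
  have hd : ∀ z ∈ l, ∀ z' ∈ l, ∀ t t' : ℕ, t ≤ M → t ≤ t' + 1 → t' ≤ t + 1 →
      dist (homo e M t z) (homo e M t' z') ≤ ((i + 1 : ℕ) : ℝ) / M := by
    intro z hz z' hz' t t' ht h1 h2
    refine (dist_homo_le e z z' hM ht h1 h2 ((hzc z' hz').dist_le hec)).trans ?_
    have := hl.dist z hz z' hz'
    push_cast
    rw [add_div]
    linarith
  rw [fill_apply, ha, Finset.sum_eq_zero, sub_zero]
  · intro t ht
    rw [Finset.mem_range] at ht
    refine prism_eq_zero _ _ _ _ fun l' hlen hl' => ha _ ⟨?_, ⟨c', fun w hw => ?_⟩, ?_⟩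
    · rw [hlen, hl.length]
    · obtain ⟨z, hz, rfl | rfl⟩ := hl' w hw
      · exact hcell z hz _ ht.le
      · exact hcell z hz _ ht
    · intro w hw w' hw'
      obtain ⟨z, hz, rfl | rfl⟩ := hl' w hw <;> obtain ⟨z', hz', rfl | rfl⟩ := hl' w' hw' <;>
        exact hd _ hz _ hz' _ _ (by omega) (by omega) (by omega)
  · have hall : ∀ w ∈ e :: l.map (homo e M M), w = e := by
      intro w hw
      rcases List.mem_cons.1 hw with rfl | hw
      · rfl
      · obtain ⟨z, -, rfl⟩ := List.mem_map.1 hw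
        exact homo_last e hM z
    refine ⟨by simp [hl.length], ⟨c', fun w hw => by rw [hall w hw]; exact hec⟩, ?_⟩
    intro w hw w' hw'
    rw [hall w hw, hall w' hw', dist_self]
    positivity

/-- The alternating exponents `p - 1, 1, p - 1, 1, …`. -/
def expo (p i : ℕ) : ℕ := if Even i then p - 1 else 1

lemma expo_add {p : ℕ} (hp : 0 < p) (i : ℕ) : expo p (i + 1) + expo p i = p := by
  unfold expo
  by_cases h : Even i
  · rw [if_neg (by simpa [Nat.even_add_one] using h), if_pos h]; omega
  · rw [if_pos (by simpa [Nat.even_add_one] using h), if_neg h]; omega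

lemma expo_or (p i : ℕ) : expo p (i + 1) = 1 ∨ expo p i = 1 := by
  unfold expo
  by_cases h : Even i
  · left; rw [if_neg (by simpa [Nat.even_add_one] using h)]
  · right; rw [if_neg h]

lemma expo_add_two (p i : ℕ) : expo p (i + 2) = expo p i := by
  simp [expo, Nat.even_add]

variable {ι : Type*} [Fintype ι]

/-- Chains `c i` of small simplices in the join of the first `i + 1` copies of `K`, viewed as functionals
on cochains: `c 0` is a vertex and `c (i + 1)` is the cone over `x ^ expo p i • c i`. -/
noncomputable def cyc (b : ι → K) (p M : ℕ) : ℕ → ((List (Fin m × K → ℝ) → K) →ₗ[K] K)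
  | 0 => LinearMap.proj [apex 0]
  | i + 1 => cyc b p M i ∘ₗ (xop rot b ^ expo p i) ∘ₗ fill (apex (i + 1)) M (homo (apex (i + 1)) M)

lemma cyc_succ (b : ι → K) (p M i : ℕ) (a : List (Fin m × K → ℝ) → K) :
    cyc b p M (i + 1) a = cyc b p M i ((xop rot b ^ expo p i)
      (fill (apex (i + 1)) M (homo (apex (i + 1)) M) a)) := rfl

/-- The chain `cyc b p M i` is supported on small simplices. -/
lemma cyc_eq_zero (b : ι → K) (p : ℕ) {M : ℕ} (hM : 0 < M) (i : ℕ) (hi : i < m)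
    (a : List (Fin m × K → ℝ) → K) (ha : ∀ l, IsSmall M i l → a l = 0) :
    cyc b p M i a = 0 := by
  induction i generalizing a with
  | zero =>
    refine ha _ ⟨rfl, ⟨fun _ => 0, fun z hz => ?_⟩, fun z hz z' hz' => ?_⟩
    · rw [List.mem_singleton.1 hz]; exact isCell_apex hi rfl
    · rw [List.mem_singleton.1 hz, List.mem_singleton.1 hz', dist_self]; positivity
  | succ i ih =>
    rw [cyc_succ]
    refine ih (by omega) _ fun l hl => ?_
    exact xop_pow_eq_zero rot b (IsSmall M i) (fun g l hl => hl.rot g) _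
      (fun l hl => fill_eq_zero hM hi a ha l hl) _ l hl

/-- `∂ c (i + 1) = x ^ expo p i • c i` for the chains `c i` defined by `cyc`; the remaining
term vanishes since two consecutive exponents add up to `p` and `x ^ p = 0`. -/
lemma cyc_cobd {p : ℕ} [hp : Fact p.Prime] [CharP K p] (b : ι → K) (M i : ℕ)
    (a : List (Fin m × K → ℝ) → K) :
    cyc b p M (i + 1) (cobd a) = cyc b p M i ((xop rot b ^ expo p i) a) := by
  rw [cyc_succ, fill_cobd _ _ _ (homo_zero _ _), map_sub, map_sub, xop_pow_cobd, sub_eq_self]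
  cases i with
  | zero =>
    have : 1 ≤ p - 1 := by have := hp.out.two_le; omega
    change cobd _ [apex 0] = 0
    rw [cobd_cons, cobd_nil, sub_zero, expo, if_pos Even.zero,
      show p - 1 = (p - 1 - 1) + 1 by omega, pow_succ', Module.End.mul_apply, xop_nil]
  | succ i =>
    rw [cyc_cobd, ← Module.End.mul_apply, ← pow_add, add_comm, expo_add hp.out.pos,
      xop_pow_char p rot_isAct, LinearMap.zero_apply, map_zero]

/-- A combinatorial Borsuk-Ulam theorem for the `m`-fold join of `K`. Let `(K, +)` act on a set of
labels, and let `good` be an invariant family of label lists, closed under nonempty sublists, none of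
whose members has an invariant vertex set, and none of which consists of `m` distinct labels. Then no
equivariant labelling of the deleted join gives every small simplex a good list of labels. Membership in
`good` depends only on the underlying set of labels, through `G`.

The pullbacks of alternating cochains `aₙ` pair to `1` with the chains `cₙ`: one starts with the
constant `0`-cochain `1`, and writes `aₙ = x ^ expo p n a'` by `xop_exact` to put `aₙ₊₁ = δ a'`. In degree
`m - 1` the alternating cochain is zero, a contradiction. -/
theorem no_small_labelling (p : ℕ) [hp : Fact p.Prime] [Algebra (ZMod p) K] [CharP K p]
    (b : Module.Basis ι (ZMod p) K) {T : Type*} [DecidableEq T] {act : K → T → T}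
    (hact : IsAct act) (good : Set (List T)) (G : Set (Finset T))
    (hG : ∀ l, l ∈ good ↔ l.toFinset ∈ G)
    (hgood : ∀ g, ∀ l ∈ good, l.map (act g) ∈ good)
    (hfix : ∀ l ∈ good, ∃ g, l.toFinset.image (act g) ≠ l.toFinset)
    (hsub : ∀ l ∈ good, ∀ l', l'.Sublist l → l' ≠ [] → l' ∈ good)
    (hlen : ∀ l ∈ good, l.length = m → ¬ l.Nodup) (hm : 0 < m)
    (lab : (Fin m × K → ℝ) → T)
    (hlab : ∀ g z, (∃ c i, IsCell c i z) → lab (rot g z) = act g (lab z))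
    {M : ℕ} (hM : 0 < M)
    (hsmall : ∀ i < m, ∀ l, IsSmall M i l → l.map lab ∈ good) : False := by
  classical
  have hgood' : ∀ g l, l.map (act g) ∈ good ↔ l ∈ good := by
    refine fun g l => ⟨fun h => ?_, hgood g l⟩
    have e := hgood (-g) _ h
    rw [List.map_map] at e
    have : act (-g) ∘ act g = id := funext (hact.neg g)
    rwa [this, List.map_id] at e
  have key : ∀ n < m, ∃ a ∈ altOn K good, (∀ l ∈ good, cobd a l = 0) ∧
      (xop act b ^ expo p (n + 1)) a = 0 ∧ cyc b p M n (fun l => a (l.map lab)) = 1 := by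
    intro n hn
    induction n with
    | zero =>
      have hlen1 : ∀ (l₁ l₂ : List T) u v, (l₁ ++ u :: v :: l₂).length ≠ 1 := by
        intros; simp; omega
      refine ⟨fun l => if l.length = 1 ∧ l ∈ good then 1 else 0,
        ⟨⟨fun l₁ u v l₂ => ?_, fun l₁ u l₂ => ?_⟩, fun l hl => ?_⟩, fun l hl => ?_, ?_, ?_⟩
      · simp only [hlen1, false_and, if_false, neg_zero]
      · simp only [hlen1, false_and, if_false]
      · simp only [hl, and_false, if_false]
      -- on good lists the initial cochain is the coboundary of the indicator of the empty list
      · let ind : List T → K := fun l => if l = [] then 1 else 0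
        refine Eq.trans (cobd_congr _ (cobd ind) _ fun l' hl' _ => ?_) (congrFun (cobd_cobd ind) l)
        cases l' with
        | nil => simp
        | cons u l' =>
          have h1 : u :: l' ∈ good := hsub l hl _ hl' (by simp)
          have h2 : (fun l => ind (u :: l)) = 0 := by funext l; simp [ind]
          rw [cobd_cons, h2, map_zero, Pi.zero_apply, sub_zero]
          simp [ind, h1]
      · rw [show expo p (0 + 1) = 1 from by simp [expo], pow_one]
        funext l
        rw [xop_apply]
        exact Finset.sum_eq_zero fun i _ => by simp [hgood']
      · have : [apex (m := m) (K := K) 0].map lab ∈ good := by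
          refine hsmall 0 hm _ ⟨rfl, ⟨fun _ => 0, fun z hz => ?_⟩, fun z hz z' hz' => ?_⟩
          · rw [List.mem_singleton.1 hz]; exact isCell_apex hm rfl
          · rw [List.mem_singleton.1 hz, List.mem_singleton.1 hz', dist_self]; positivity
        change (if _ then (1 : K) else 0) = 1
        rw [if_pos ⟨rfl, this⟩]
    | succ n ih =>
      obtain ⟨a, haW, hda, hxa, hca⟩ := ih (by omega)
      obtain ⟨a', haW', ha'⟩ := xop_exact p hact b hgood hfix _ _ (expo_add hp.out.pos n)
        (expo_or p n) a haW hxa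
      -- `δ a'` need not vanish off `good`; since `good` is determined by vertex sets, restricting
      -- it to `good` keeps it alternating
      let msk : Finset T → K := fun q => if q ∈ G then 1 else 0
      let a'' : List T → K := fun l => msk l.toFinset * cobd a' l
      have hmem : ∀ l ∈ good, a'' l = cobd a' l := by
        intro l hl
        simp only [a'', msk, if_pos ((hG l).1 hl), one_mul]
      have haW'' : a'' ∈ altOn K good := by
        refine ⟨haW'.1.cobd.mul msk, fun l hl => ?_⟩
        simp only [a'', msk, if_neg (fun h => hl ((hG l).2 h)), zero_mul]
      have hpowW : ∀ k, (xop act b ^ k) a'' ∈ altOn K good := by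
        intro k
        induction k with
        | zero => exact haW''
        | succ k ih => rw [pow_succ', Module.End.mul_apply]; exact xop_mem_altOn hact hgood _ ih
      refine ⟨a'', haW'', fun l hl => ?_, ?_, ?_⟩
      · refine Eq.trans (cobd_congr _ (cobd a') _ fun l' hl' _ => ?_) (congrFun (cobd_cobd a') l)
        by_cases hne : l' = []
        · subst hne; simp [a'']
        · exact hmem _ (hsub l hl _ hl' hne)
      · funext l
        by_cases hl : l ∈ good
        · have h1 := xop_pow_eq_zero act b (· ∈ good) hgood (a'' - cobd a')
            (fun l hl => by rw [Pi.sub_apply, hmem l hl, sub_self]) (expo p (n + 1 + 1)) l hl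
          rw [map_sub, Pi.sub_apply, sub_eq_zero] at h1
          rw [h1, expo_add_two, xop_pow_cobd, ha']
          exact hda l hl
        · exact (hpowW _).2 l hl
      · have h1 := cyc_eq_zero b p hM (n + 1) hn
          ((fun l => a'' (l.map lab)) - cobd (fun l => a' (l.map lab))) (fun l hl => by
            rw [Pi.sub_apply, cobd_map, hmem _ (hsmall _ hn l hl), sub_self])
        rw [map_sub, sub_eq_zero] at h1
        rw [h1, cyc_cobd]
        have h2 := cyc_eq_zero b p hM n (by omega)
          ((xop rot b ^ expo p n) (fun l => a' (l.map lab)) - fun l => a (l.map lab)) (fun l hl => by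
            obtain ⟨c, hc⟩ := hl.cell
            rw [Pi.sub_apply, xop_pow_map rot act b lab {z | ∃ c i, IsCell c i z}
              (fun g z ⟨c, i, hz⟩ => ⟨_, i, hz.rot g⟩) hlab a' _ l (fun z hz => ⟨c, n, hc z hz⟩),
              ha', sub_self])
        rw [map_sub, sub_eq_zero] at h2
        rw [h2, hca]
  obtain ⟨a, haW, -, -, hca⟩ := key (m - 1) (by omega)
  rw [cyc_eq_zero b p hM (m - 1) (by omega)] at hca
  · exact zero_ne_one hca
  · intro l hl
    have hg := hsmall _ (by omega) l hl
    refine haW.1.eq_zero_of_not_nodup _ (hlen _ hg ?_)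
    rw [List.length_map, hl.length]
    omega

end Join

/-! ### The test map -/

section TestMap

set_option linter.unusedSectionVars false

variable {m d : ℕ}

/-- The positive part of `y`, with its `j₀`-th coordinate increased so that the total is at least
`ε`. -/
noncomputable def retrNum (ε : ℝ) (j₀ : Fin m) (y : Fin m → ℝ) (j : Fin m) : ℝ :=
  max (y j) 0 + max (ε - ∑ k, max (y k) 0) 0 * (if j = j₀ then 1 else 0)

lemma sum_retrNum (ε : ℝ) (j₀ : Fin m) (y : Fin m → ℝ) :
    ∑ j, retrNum ε j₀ y j = max (∑ k, max (y k) 0) ε := by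
  simp only [retrNum, Finset.sum_add_distrib, ← Finset.mul_sum, Finset.sum_ite_eq',
    Finset.mem_univ, if_true, mul_one]
  rcases le_total ε (∑ k, max (y k) 0) with h | h
  · rw [max_eq_left h, max_eq_right (by linarith), add_zero]
  · rw [max_eq_right h, max_eq_left (by linarith)]; ring

/-- A continuous map from all of `ℝᵐ` to the standard simplex, sending a nonnegative vector `y` of
total `ε` to `y / ε`. Correcting the `j₀`-th coordinate keeps the denominator away from `0`. -/
noncomputable def retr {ε : ℝ} (hε : 0 < ε) (j₀ : Fin m) (y : Fin m → ℝ) :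
    stdSimplex ℝ (Fin m) :=
  ⟨fun j => retrNum ε j₀ y j / max (∑ k, max (y k) 0) ε, fun j => by
      refine div_nonneg (add_nonneg (le_max_right _ _) (mul_nonneg (le_max_right _ _) ?_))
        (hε.le.trans (le_max_right _ _))
      split_ifs <;> norm_num, by
      rw [← Finset.sum_div, sum_retrNum]
      exact div_self (hε.trans_le (le_max_right _ _)).ne'⟩

lemma continuous_retr {ε : ℝ} (hε : 0 < ε) (j₀ : Fin m) : Continuous (retr hε j₀) := by
  refine Continuous.subtype_mk (continuous_pi fun j => ?_) _
  refine Continuous.div ?_ ?_ fun y => (hε.trans_le (le_max_right _ _)).ne'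
  · unfold retrNum; fun_prop
  · fun_prop

/-- On nonnegative vectors of total `ε` the retraction does not enlarge the support. -/
lemma support_retr {ε : ℝ} (hε : 0 < ε) (j₀ : Fin m) (y : Fin m → ℝ) (h0 : ∀ j, 0 ≤ y j)
    (hy : ∑ j, y j = ε) (j : Fin m) (hj : (retr hε j₀ y : Fin m → ℝ) j ≠ 0) : y j ≠ 0 := by
  rintro hz
  apply hj
  have : ∑ k, max (y k) 0 = ε := by
    rw [← hy]; exact Finset.sum_congr rfl fun k _ => max_eq_left (h0 k)
  change retrNum ε j₀ y j / _ = 0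
  simp [retrNum, hz, this]

variable {K : Type*} [Field K] [Fintype K]

/-- The test map. The blocks are the `d + 1` coordinates `Option (Fin d)`: at colour `g`, the block
`none` records the total weight of the `g`-coloured part of `z`, and the blocks `some i` the
coordinates of `f` at that part, rescaled to the standard simplex. -/
noncomputable def testMap {ε : ℝ} (hε : 0 < ε) (j₀ : Fin m)
    (f : stdSimplex ℝ (Fin m) → EuclideanSpace ℝ (Fin d)) (z : Fin m × K → ℝ) :
    Option (Fin d) × K → ℝ := fun x =>
  match x.1 with
  | none => ∑ j, z (j, x.2)
  | some i => f (retr hε j₀ fun j => z (j, x.2)) i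

lemma testMap_rot {ε : ℝ} (hε : 0 < ε) (j₀ : Fin m)
    (f : stdSimplex ℝ (Fin m) → EuclideanSpace ℝ (Fin d)) (z : Fin m × K → ℝ) (g : K)
    (x : Option (Fin d) × K) :
    testMap hε j₀ f (rot g z) x = testMap hε j₀ f z (x.1, x.2 - g) := rfl

lemma continuous_testMap {ε : ℝ} (hε : 0 < ε) (j₀ : Fin m)
    (f : stdSimplex ℝ (Fin m) → EuclideanSpace ℝ (Fin d)) (hf : Continuous f) :
    Continuous (testMap (K := K) hε j₀ f) := by
  refine continuous_pi fun x => ?_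
  obtain ⟨k, g⟩ := x
  cases k with
  | none => simp only [testMap]; fun_prop
  | some i =>
    have h1 : Continuous fun z : Fin m × K → ℝ => fun j : Fin m => z (j, g) :=
      continuous_pi fun j => continuous_apply _
    have h2 : Continuous fun z : Fin m × K → ℝ => f (retr hε j₀ fun j => z (j, g)) :=
      hf.comp ((continuous_retr hε j₀).comp h1)
    exact (EuclideanSpace.proj (𝕜 := ℝ) (ι := Fin d) i).continuous.comp h2

/-- The `m`-fold join of the discrete space `K`, the `|K|`-fold deleted join of the simplex. -/
def joinSet (m : ℕ) (K : Type*) [Field K] [Fintype K] : Set (Fin m × K → ℝ) :=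
  {z | ∃ c i, IsCell c i z}

lemma joinSet_rot {z : Fin m × K → ℝ} (hz : z ∈ joinSet m K) (g : K) : rot g z ∈ joinSet m K := by
  obtain ⟨c, i, h⟩ := hz
  exact ⟨_, i, h.rot g⟩

lemma joinSet_free {z : Fin m × K → ℝ} (hz : z ∈ joinSet m K) (g : K) (h : rot g z = z) :
    g = 0 := by
  obtain ⟨c, i, hc⟩ := hz
  obtain ⟨q, -, hq⟩ := Finset.exists_ne_zero_of_sum_ne_zero (hc.sum.trans_ne one_ne_zero)
  have h1 := (hc.supp q hq).1
  rw [← h] at hq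
  have h2 := (hc.supp _ hq).1
  simp only [h1] at h2
  linear_combination -h2

lemma isCompact_joinSet : IsCompact (joinSet m K) := by
  have : joinSet m K = ⋃ c : Fin m → K, (Set.Icc 0 1 ∩
      ({z | ∑ q, z q = 1} ∩ ⋂ q, {z | q.2 ≠ c q.1 → z q = 0})) := by
    ext z
    simp only [joinSet, Set.mem_ofPred_eq, Set.mem_iUnion, Set.mem_inter_iff, Set.mem_iInter]
    refine exists_congr fun c => ⟨?_, ?_⟩
    · rintro ⟨i, h⟩
      exact ⟨⟨h.nonneg, h.le_one⟩, h.sum, fun q hq => by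
        by_contra hne; exact hq (h.supp q hne).1⟩
    · rintro ⟨⟨h0, -⟩, h1, h2⟩
      exact ⟨m, h0, h1, fun q hq => ⟨by by_contra hne; exact hq (h2 q hne), q.1.2.le⟩⟩
  rw [this]
  refine isCompact_iUnion fun c => isCompact_Icc.inter_right (IsClosed.inter ?_ ?_)
  · exact isClosed_eq (by fun_prop) continuous_const
  · refine isClosed_iInter fun q => ?_
    by_cases h : q.2 = c q.1
    · simp [h]
    · simp only [h, ne_eq, not_false_eq_true, forall_true_left]
      exact isClosed_eq (by fun_prop) continuous_const

/-- A set of labels omitting an element of every block has at most `|κ| (|K| - 1)` elements. -/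
lemma card_lt_of_forall_exists_notMem {κ : Type*} [Fintype κ] (q : Finset (κ × K))
    (hq : ∀ k, ∃ g, (k, g) ∉ q) : q.card + Fintype.card κ ≤ Fintype.card κ * Fintype.card K := by
  classical
  choose g hg using hq
  have hd : Disjoint q (Finset.univ.image fun k => (k, g k)) := by
    rw [Finset.disjoint_left]
    intro x hx hx'
    obtain ⟨k, -, rfl⟩ := Finset.mem_image.1 hx'
    exact hg k hx
  have hc : (Finset.univ.image fun k => (k, g k)).card = Fintype.card κ :=
    Finset.card_image_of_injective _ fun k k' h => (Prod.ext_iff.1 h).1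
  rw [← hc, ← Finset.card_union_of_disjoint hd, hc, ← Fintype.card_prod]
  exact Finset.card_le_univ _

/-- An equivariant continuous map from the join of `(|K| - 1) |κ| + 1` copies of `K` to `κ` copies of
the regular representation has a value that is constant on each block.

Otherwise some block oscillates by at least `η > 0` at every point of the join, by compactness. Label
each point equivariantly by a block `k` with large oscillation and a colour at which `Φ z (k, ·)` is
maximal. On a small simplex no block can have all its colours as labels, so the labels omit an element
of every block; this contradicts `no_small_labelling`. -/
theorem exists_block_const (p : ℕ) [hp : Fact p.Prime] [Algebra (ZMod p) K] [CharP K p]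
    {κ : Type*} [Fintype κ] (hm : m = (Fintype.card K - 1) * Fintype.card κ + 1)
    (Φ : (Fin m × K → ℝ) → κ × K → ℝ) (hΦ : Continuous Φ)
    (hrot : ∀ z g x, Φ (rot g z) x = Φ z (x.1, x.2 - g)) :
    ∃ z ∈ joinSet m K, ∀ k g g', Φ z (k, g) = Φ z (k, g') := by
  classical
  by_contra! hcon
  have hm0 : 0 < m := by omega
  have hne : (joinSet m K).Nonempty := ⟨apex 0, fun _ => 0, 0, isCell_apex hm0 rfl⟩
  -- a uniform lower bound for the oscillation of some block
  obtain ⟨η, hη, hosc⟩ : ∃ η > 0, ∀ z ∈ joinSet m K, ∃ k g g', Φ z (k, g') + η ≤ Φ z (k, g) := by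
    let w : (Fin m × K → ℝ) → ℝ := fun z =>
      ∑ x : κ × K × K, |Φ z (x.1, x.2.1) - Φ z (x.1, x.2.2)|
    have hw : Continuous w := by fun_prop
    obtain ⟨z₀, hz₀, hmin⟩ := (isCompact_joinSet (m := m) (K := K)).exists_isMinOn hne
      hw.continuousOn
    have hpos : 0 < w z₀ := by
      obtain ⟨k, g, g', h⟩ := hcon z₀ hz₀
      refine lt_of_lt_of_le (abs_pos.2 (sub_ne_zero.2 h)) ?_
      exact Finset.single_le_sum (f := fun x : κ × K × K =>
        |Φ z₀ (x.1, x.2.1) - Φ z₀ (x.1, x.2.2)|) (fun x _ => abs_nonneg _)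
        (Finset.mem_univ (k, g, g'))
    set n : ℝ := (Fintype.card (κ × K × K) : ℝ) with hn
    have hn0 : 0 ≤ n := by positivity
    refine ⟨w z₀ / (n + 1), by positivity, fun z hz => ?_⟩
    by_contra! hlt
    have h1 : w z ≤ n * (w z₀ / (n + 1)) := by
      rw [hn, ← nsmul_eq_mul]
      refine Finset.sum_le_card_nsmul _ _ _ fun x _ => ?_
      rw [abs_le]
      have h2 := hlt x.1 x.2.1 x.2.2
      have h3 := hlt x.1 x.2.2 x.2.1
      constructor <;> linarith
    have h2 : w z₀ ≤ w z := hmin hz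
    have h3 : n * (w z₀ / (n + 1)) < w z₀ := by
      rw [mul_div_assoc', div_lt_iff₀ (by positivity)]
      nlinarith
    linarith
  let P : (Fin m × K → ℝ) → κ × K → Prop := fun z x =>
    (∀ g', Φ z (x.1, g') ≤ Φ z x) ∧ ∃ g', Φ z (x.1, g') + η ≤ Φ z x
  have hP : ∀ z ∈ joinSet m K, ∃ x, P z x := by
    intro z hz
    obtain ⟨k, g, g', h⟩ := hosc z hz
    obtain ⟨g₁, -, h1⟩ := Finset.exists_max_image Finset.univ (fun g => Φ z (k, g))
      ⟨g, Finset.mem_univ _⟩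
    exact ⟨(k, g₁), fun g' => h1 g' (Finset.mem_univ _), g', h.trans (h1 g (Finset.mem_univ _))⟩
  let act : K → κ × K → κ × K := fun g x => (x.1, x.2 + g)
  have hact : IsAct act := ⟨fun x => by simp [act], fun g h x => by
    simp only [act]; rw [show x.2 + (g + h) = x.2 + h + g by ring]⟩
  have hPact : ∀ z x g, P z x → P (rot g z) (act g x) := by
    rintro z x g ⟨h1, g', h2⟩
    refine ⟨fun g'' => ?_, g' + g, ?_⟩
    · rw [hrot, hrot]
      simpa [act] using h1 (g'' - g)
    · rw [hrot, hrot]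
      simpa [act] using h2
  -- equivariant choice of labels: choose at orbit representatives, and transport; this is
  -- consistent because the action on the join is free
  obtain ⟨rep, γ, hγ, hrep⟩ := (rot_isAct (m := m) (K := K)).exists_rep
  have hrepX : ∀ z ∈ joinSet m K, rep z ∈ joinSet m K := by
    intro z hz
    have h1 := rot_isAct.neg (γ z) (rep z)
    rw [hγ] at h1
    rw [← h1]
    exact joinSet_rot hz _
  have hγrot : ∀ z ∈ joinSet m K, ∀ g, γ (rot g z) = g + γ z := by
    intro z hz g
    have h1 := hγ (rot g z)
    rw [hrep] at h1
    refine sub_eq_zero.1 (joinSet_free (hrepX z hz) _ ?_)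
    have h2 : rot (g + γ z) (rep z) = rot g z := by rw [rot_isAct.add, hγ]
    rw [show γ (rot g z) - (g + γ z) = -(g + γ z) + γ (rot g z) by ring, rot_isAct.add, h1, ← h2,
      rot_isAct.neg]
  have : ∀ z, ∃ x, z ∈ joinSet m K → P z x := by
    intro z
    by_cases hz : z ∈ joinSet m K
    · obtain ⟨x, hx⟩ := hP z hz
      exact ⟨x, fun _ => hx⟩
    · obtain ⟨x, -⟩ := hP _ hne.some_mem
      exact ⟨x, fun h => absurd h hz⟩
  choose ℓ hℓ using this
  let lab : (Fin m × K → ℝ) → κ × K := fun z => act (γ z) (ℓ (rep z))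
  have hlabP : ∀ z ∈ joinSet m K, P z (lab z) := by
    intro z hz
    have h1 := hPact _ _ (γ z) (hℓ (rep z) (hrepX z hz))
    rwa [hγ] at h1
  have hlab : ∀ g, ∀ z ∈ joinSet m K, lab (rot g z) = act g (lab z) := by
    intro g z hz
    simp only [lab]
    rw [hrep, hγrot z hz, hact.add]
  -- mesh of the subdivision
  obtain ⟨δ, hδ, huc⟩ := Metric.uniformContinuousOn_iff.1
    ((isCompact_joinSet (m := m) (K := K)).uniformContinuousOn_of_continuous hΦ.continuousOn)
    (η / 3) (by positivity)
  obtain ⟨M, hM⟩ := exists_nat_gt ((m : ℝ) / δ)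
  have hM0 : (0 : ℝ) < M := lt_of_le_of_lt (by positivity) hM
  let G : Set (Finset (κ × K)) := {q | q.Nonempty ∧ ∀ k, ∃ g, (k, g) ∉ q}
  refine no_small_labelling p (Module.finBasis (ZMod p) K) hact {l | l.toFinset ∈ G} G
    (fun l => Iff.rfl) ?_ ?_ ?_ ?_ hm0 lab (fun g z hz => hlab g z hz) (M := M)
    (by exact_mod_cast hM0) ?_
  · rintro g l ⟨h1, h2⟩
    refine ⟨?_, fun k => ?_⟩
    · obtain ⟨x, hx⟩ := h1
      exact ⟨act g x, by simpa using ⟨x.1, x.2, by simpa using hx, rfl⟩⟩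
    · obtain ⟨g', hg'⟩ := h2 k
      refine ⟨g' + g, fun hmem => hg' ?_⟩
      obtain ⟨x, hx, hxe⟩ := List.mem_map.1 (List.mem_toFinset.1 hmem)
      have e1 : x.1 = k := congrArg Prod.fst hxe
      have e2 : x.2 + g = g' + g := congrArg Prod.snd hxe
      rw [List.mem_toFinset, ← e1, ← add_right_cancel e2]
      exact hx
  · rintro l ⟨⟨x, hx⟩, h2⟩
    obtain ⟨g, hg⟩ := h2 x.1
    refine ⟨g - x.2, fun e => hg ?_⟩
    rw [← e]
    exact Finset.mem_image.2 ⟨x, hx, by simp [act]⟩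
  · rintro l ⟨-, h2⟩ l' hl' hne'
    refine ⟨by simpa using hne', fun k => ?_⟩
    obtain ⟨g, hg⟩ := h2 k
    exact ⟨g, fun h => hg (List.mem_toFinset.2 (hl'.subset (List.mem_toFinset.1 h)))⟩
  · rintro l ⟨-, h2⟩ hl hnd
    have h1 := card_lt_of_forall_exists_notMem _ h2
    rw [List.toFinset_card_of_nodup hnd, hl, hm] at h1
    have h3 : 0 < Fintype.card K := Fintype.card_pos
    obtain ⟨r', hr'⟩ := Nat.exists_eq_succ_of_ne_zero h3.ne'
    rw [hr', Nat.succ_sub_one, Nat.succ_eq_add_one, mul_add, mul_comm] at h1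
    omega
  · rintro i hi l hl
    obtain ⟨c, hc⟩ := hl.cell
    have hX : ∀ z ∈ l, z ∈ joinSet m K := fun z hz => ⟨c, i, hc z hz⟩
    have hclose : ∀ z ∈ l, ∀ z' ∈ l, ∀ x, |Φ z x - Φ z' x| < η / 3 := by
      intro z hz z' hz' x
      rw [← Real.dist_eq]
      refine (dist_le_pi_dist (Φ z) (Φ z') x).trans_lt (huc z (hX z hz) z' (hX z' hz') ?_)
      refine (hl.dist z hz z' hz').trans_lt ?_
      rw [div_lt_iff₀ hM0]
      rw [div_lt_iff₀ hδ] at hM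
      have : (i : ℝ) < m := by exact_mod_cast hi
      linarith
    refine ⟨?_, fun k => ?_⟩
    · have : 0 < l.length := by rw [hl.length]; omega
      simpa using List.length_pos_iff.1 this
    · by_contra! hall
      have hall' : ∀ g, ∃ z ∈ l, P z (k, g) := by
        intro g
        obtain ⟨z, hz, hzg⟩ := List.mem_map.1 (List.mem_toFinset.1 (hall g))
        exact ⟨z, hz, hzg ▸ hlabP z (hX z hz)⟩
      -- one label says `Φ` drops by `η` from `0` to `g'`, another that `g'` is a maximum nearby
      obtain ⟨z, hz, -, g', h1⟩ := hall' 0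
      obtain ⟨z', hz', h2, -⟩ := hall' g'
      have h3 := abs_lt.1 (hclose z hz z' hz' (k, 0))
      have h4 := abs_lt.1 (hclose z hz z' hz' (k, g'))
      have h5 := h2 0
      simp only at h1 h5
      linarith [h3.1, h3.2, h4.1, h4.2]

end TestMap

/-- **Topological Tverberg theorem for prime powers.** -/
theorem topological_tverberg_prime_power
    (p ν r d N m : ℕ) (hp : p.Prime) (hν : 0 < ν) (hr : r = p ^ ν)
    (hd : 1 ≤ d) (hN : N = (r - 1) * (d + 1)) (hm : m = N + 1)
    (f : stdSimplex ℝ (Fin m) → EuclideanSpace ℝ (Fin d)) (hf : Continuous f) :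
    ∃ Δ : Fin r → Finset (Fin m),
      (∀ i, (Δ i).Nonempty) ∧
      (∀ i j, i ≠ j → Disjoint (Δ i) (Δ j)) ∧
      (⋂ i, f '' simplexFace (Δ i)).Nonempty := by
  classical
  have : Fact p.Prime := ⟨hp⟩
  let K := GaloisField p ν
  let _ : Fintype K := Fintype.ofFinite K
  have hcard : Fintype.card K = r := by
    rw [← Nat.card_eq_fintype_card, GaloisField.card p ν hν.ne', hr]
  have hr0 : 0 < r := by rw [hr]; exact pow_pos hp.pos _
  have hε : (0 : ℝ) < 1 / r := by positivity
  obtain ⟨z, ⟨c, n, hz⟩, hconst⟩ := exists_block_const (K := K) (κ := Option (Fin d)) p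
    (by rw [hm, hN, hcard, Fintype.card_option, Fintype.card_fin])
    (testMap hε (⟨0, by omega⟩ : Fin m) f) (continuous_testMap hε _ f hf)
    (fun z g x => testMap_rot hε _ f z g x)
  -- constancy of the block `none`: all colours have the same total weight
  have hsum : ∀ g : K, ∑ j, z (j, g) = 1 / r := by
    intro g
    have h1 : ∀ g' : K, ∑ j, z (j, g') = ∑ j, z (j, g) := fun g' => hconst none g' g
    have h2 := hz.sum
    rw [Fintype.sum_prod_type_right, Finset.sum_congr rfl fun g' _ => h1 g', Finset.sum_const,
      Finset.card_univ, hcard, nsmul_eq_mul] at h2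
    field_simp
    linarith
  let e : Fin r ≃ K := (Fintype.equivFinOfCardEq hcard).symm
  refine ⟨fun i => Finset.univ.filter fun j => z (j, e i) ≠ 0, fun i => ?_, fun i i' hii => ?_, ?_⟩
  · obtain ⟨j, -, hj⟩ := Finset.exists_ne_zero_of_sum_ne_zero ((hsum (e i)).trans_ne hε.ne')
    exact ⟨j, by simpa using hj⟩
  · rw [Finset.disjoint_left]
    intro j hj hj'
    simp only [Finset.mem_filter, Finset.mem_univ, true_and] at hj hj'
    exact hii (e.injective ((hz.supp _ hj).1.trans (hz.supp _ hj').1.symm))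
  · refine ⟨f (retr hε ⟨0, by omega⟩ fun j => z (j, 0)), Set.mem_iInter.2 fun i => ?_⟩
    refine ⟨retr hε ⟨0, by omega⟩ fun j => z (j, e i), fun j hj => ?_, ?_⟩
    · have := support_retr hε _ _ (fun j => hz.nonneg _) (hsum (e i)) j hj
      simpa using this
    · ext k
      exact hconst (some k) (e i) 0
end
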